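/- Let $K$ be an algebraically closed field and let $\Gamma$ be a finite tree with a fixed cyclic ordering of the edges around each vertex (a Brauer tree of multiplicity one). Let $Q$ be the quiver whose vertices are the edges of $\Gamma$ and which has, for each edge $i$ and each end point $c$ of $i$, an arrow from $i$ to the edge that follows $i$ in the cyclic ordering around $c$ (a loop if $c$ is a leaf); thus $Q$ is a union of oriented cycles, one for each vertex of $\Gamma$, and each vertex of $Q$ lies on exactly two of them. Let $A=KQ/I$ be the basic Brauer tree algebra, where $I$ is generated by the products of two consecutive arrows belonging to different cycles and, for each vertex $i$ of $Q$, by the difference of the two paths that start at $i$ and run once around one of the two cycles through $i$. Here $ab$ denotes the path $a$ followed by $b$, modules are left modules, and $Ae_i$ is the indecomposable projective module of the vertex $i$. An $A$-cycle is a maximal ordered set of nonrepeating arrows of $Q$ such that the product in $A$ of any two neighbouring arrows is nonzero (the loops at the leaves are included); a vertex of $Q$ belongs to an $A$-cycle if it is the starting vertex of one of its arrows. A bounded complex $T$ of finitely generated projective $A$-modules is partial tilting if $\operatorname{Hom}_{D^b(A)}(T,T[k])=0$ for all $k\neq 0$. Let $T_i=(P_0\xrightarrow{f}P_1)$, in degrees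 $0$ and $1$, be the minimal projective presentation of an indecomposable nonprojective $A$-module, with $P_0=\bigoplus_{p\in I}Ae_p$ and $P_1=\bigoplus_{q\in J}Ae_q$. Its diagram on $Q$ consists of the vertices in $I$ (the sources), the vertices in $J$ (the sinks), and, for all $p\in I$, $q\in J$ such that the component $Ae_p\to Ae_q$ of $f$ is nonzero, the vertices on the directed path from $p$ to $q$ along their common $A$-cycle; these are the vertices of $T_i$. A degree-one source of $T_i$ is a source $p$ for which exactly one component $Ae_p\to Ae_q$ of $f$ is nonzero, i.e. a source that is an end point of the diagram. Let $P=Ae_j$ be the stalk complex, concentrated in degree $0$, of the indecomposable projective module of the vertex $j$, and suppose that $T_i\oplus P$ is a partial tilting complex. Then $\operatorname{Hom}_{K^b(A)}(T_i,P)\neq 0$, where $K^b(A)$ is the bounded homotopy category of finitely generated projective $A$-modules, if and only if there are an $A$-cycle $\Upsilon$ and a degree-one source $s$ of $T_i$ such that $s$ and $j$ both belong to $\Upsilon$ and $s$ is the only vertex of $T_i$ belonging to $\Upsilon$ (the case $j=s$ is included). -/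

import Mathlib

open CategoryTheory CategoryTheory.Limits

universe w v u

/-- A Brauer tree (of multiplicity one) on the finite vertex set `V`: a tree together with a cyclic
ordering of the edges around each vertex. A dart `d` is an edge `d.edge` together with one of its
end points `d.fst`; `next d` is the edge that follows `d` in the cyclic ordering around `d.fst`, and
`next_cyclic` says that the darts at a vertex form a single cycle of `next`. -/
structure BrauerTree (V : Type v) [Finite V] where
  graph : SimpleGraph V
  isTree : graph.IsTree
  next : Equiv.Perm graph.Dart
  next_fst : ∀ d, (next d).fst = d.fst
  next_cyclic : ∀ d d' : graph.Dart, d.fst = d'.fst → next.SameCycle d d'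

namespace BrauerTree

variable {V : Type v} [Finite V] (Γ : BrauerTree V)

/-- The edges of the Brauer tree, which are the vertices of its quiver. -/
def Edge : Type v := Γ.graph.edgeSet

instance : Finite Γ.Edge := inferInstanceAs (Finite Γ.graph.edgeSet)

noncomputable instance : Fintype Γ.Edge := Fintype.ofFinite _

/-- The arrows of the quiver: one arrow for each dart `d`, going from the edge of `d` to the edge of
`next d`. An edge that ends in a leaf of the tree carries a loop there, so that every vertex of
the quiver lies on exactly two of the oriented cycles. -/
abbrev Arrow : Type v := Γ.graph.Dart

/-- The edge underlying a dart; it is the starting vertex of the corresponding arrow. -/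
def edge (d : Γ.Arrow) : Γ.Edge := ⟨d.edge, d.edge_mem⟩

/-- Generators of the path algebra of the quiver: trivial paths and arrows. -/
inductive Gen : Type v
  | vertex (i : Γ.Edge) : Gen
  | arrow (d : Γ.Arrow) : Gen

variable (K : Type u) [Field K]

/-- The trivial path at `i` in the free algebra on the generators. -/
def preVertex (i : Γ.Edge) : FreeAlgebra K Γ.Gen := FreeAlgebra.ι K (Gen.vertex i)

/-- The arrow `d` in the free algebra on the generators. -/
def preArrow (d : Γ.Arrow) : FreeAlgebra K Γ.Gen := FreeAlgebra.ι K (Gen.arrow d)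

/-- The product of the arrows once around the oriented cycle through `d`, starting with `d`. -/
noncomputable def preCycle (d : Γ.Arrow) : FreeAlgebra K Γ.Gen :=
  ((List.range (Function.minimalPeriod Γ.next d)).map fun k => Γ.preArrow K (Γ.next^[k] d)).prod

/-- The defining relations of the Brauer tree algebra. The first five present the path algebra of
the quiver (the product `a * b` is the path `a` followed by `b`); `zero` says that the product of
two consecutive arrows from different cycles vanishes; `cycle` says that the two full cycles through
a vertex of the quiver coincide. -/
inductive Rel : FreeAlgebra K Γ.Gen → FreeAlgebra K Γ.Gen → Prop
  | idem (i : Γ.Edge) : Rel (Γ.preVertex K i * Γ.preVertex K i) (Γ.preVertex K i)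
  | orth (i j : Γ.Edge) (h : i ≠ j) : Rel (Γ.preVertex K i * Γ.preVertex K j) 0
  | one : Rel (∑ i : Γ.Edge, Γ.preVertex K i) 1
  | source (d : Γ.Arrow) : Rel (Γ.preVertex K (Γ.edge d) * Γ.preArrow K d) (Γ.preArrow K d)
  | target (d : Γ.Arrow) :
      Rel (Γ.preArrow K d * Γ.preVertex K (Γ.edge (Γ.next d))) (Γ.preArrow K d)
  | zero (d d' : Γ.Arrow) (h : Γ.edge d' = Γ.edge (Γ.next d)) (h' : d' ≠ Γ.next d) :
      Rel (Γ.preArrow K d * Γ.preArrow K d') 0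
  | cycle (d : Γ.Arrow) : Rel (Γ.preCycle K d) (Γ.preCycle K d.symm)

/-- The basic Brauer tree algebra `A` of `Γ` (with multiplicity one) over `K`. -/
def Alg : Type (max u v) := RingQuot (Γ.Rel K)

noncomputable instance : Ring (Γ.Alg K) := inferInstanceAs (Ring (RingQuot (Γ.Rel K)))

noncomputable instance : Algebra K (Γ.Alg K) := inferInstanceAs (Algebra K (RingQuot (Γ.Rel K)))

/-- The quotient map onto the Brauer tree algebra. -/
noncomputable def toAlg : FreeAlgebra K Γ.Gen →ₐ[K] Γ.Alg K := RingQuot.mkAlgHom K (Γ.Rel K)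

/-- The primitive idempotent `e_i` of `A`. -/
noncomputable def e (i : Γ.Edge) : Γ.Alg K := Γ.toAlg K (Γ.preVertex K i)

/-- The arrow `d` as an element of `A`. -/
noncomputable def a (d : Γ.Arrow) : Γ.Alg K := Γ.toAlg K (Γ.preArrow K d)

/-- The indecomposable projective left module `A e_i`. -/
noncomputable def Ae (i : Γ.Edge) : Submodule (Γ.Alg K) (Γ.Alg K) :=
  Submodule.span (Γ.Alg K) {Γ.e K i}

/-- An ordered set of nonrepeating arrows such that the product (in `A`) of any two neighboring
arrows is nonzero. -/
def IsNonzeroSeq (C : List Γ.Arrow) : Prop :=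
  C ≠ [] ∧ C.Nodup ∧ C.IsChain fun d d' => Γ.a K d * Γ.a K d' ≠ 0

/-- An `A`-cycle: a maximal ordered set of nonrepeating arrows such that the product of any two
neighboring arrows is nonzero. Since the arrows include the loops at the leaves of the tree, these
loops count as `A`-cycles, and every vertex of the quiver belongs to two `A`-cycles. -/
def IsACycle (C : List Γ.Arrow) : Prop :=
  Γ.IsNonzeroSeq K C ∧ ∀ C', Γ.IsNonzeroSeq K C' → C <:+: C' → C' = C

variable {Γ} in
/-- The vertex `i` of the quiver belongs to the cycle `C`. -/
def MemCycle (i : Γ.Edge) (C : List Γ.Arrow) : Prop := ∃ d ∈ C, Γ.edge d = i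

/-- `x` lies on the directed path from `i` to `j`: for `i ≠ j` with a common end point there is
exactly one dart `d` at `i` from which `j` is reached by `next`, and the path of the quiver from `i`
to `j` that is nonzero in `A` is `d, next d, …`, stopped as soon as `j` is reached. -/
def OnPath (i j x : Γ.Edge) : Prop :=
  ∃ (d : Γ.Arrow) (k : ℕ), Γ.edge d = i ∧ Γ.edge (Γ.next^[k] d) = j ∧
    (∀ m < k, Γ.edge (Γ.next^[m] d) ≠ j) ∧ ∃ l ≤ k, Γ.edge (Γ.next^[l] d) = x

/-- Left modules over `A`. -/
abbrev Mod : Type (max (u + 1) (v + 1)) := ModuleCat.{max u v} (Γ.Alg K)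

end BrauerTree

section Complexes

variable {R : Type u} [Ring R]

/-- A submodule `N` of `M` is superfluous if `N + L = M` implies `L = M`. -/
def IsSuperfluous {M : Type w} [AddCommGroup M] [Module R M] (N : Submodule R M) : Prop :=
  ∀ L : Submodule R M, N ⊔ L = ⊤ → L = ⊤

/-- A perfect complex: a bounded complex of finitely generated projective modules. -/
def IsPerfect (T : CochainComplex (ModuleCat.{u} R) ℤ) : Prop :=
  (∃ m n : ℤ, ∀ k, (k < m ∨ n < k) → IsZero (T.X k)) ∧
    ∀ k, Module.Finite R (T.X k) ∧ Module.Projective R (T.X k)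

/-- A perfect complex `T` is partial tilting if `Hom(T, T[i]) = 0` in the derived category for all
`i ≠ 0`. -/
def IsPartialTilting [HasDerivedCategory.{w} (ModuleCat.{u} R)]
    (T : CochainComplex (ModuleCat.{u} R) ℤ) : Prop :=
  IsPerfect T ∧ ∀ i : ℤ, i ≠ 0 →
    ∀ f : DerivedCategory.Q.obj T ⟶ (DerivedCategory.Q.obj T)⟦i⟧, f = 0

/-- The complex `T` (in degrees `0` and `1`) is a minimal projective presentation
`T⁰ → T¹ → M → 0` of `M`: `T¹ → M` and `T⁰ → ker (T¹ → M)` are projective covers. -/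
def IsMinimalPresentation (T : CochainComplex (ModuleCat.{u} R) ℤ) (M : ModuleCat.{u} R) : Prop :=
  IsPerfect T ∧ (∀ k : ℤ, k ≠ 0 → k ≠ 1 → IsZero (T.X k)) ∧
    ∃ π : T.X 1 ⟶ M, Function.Surjective π.hom ∧
      LinearMap.range (T.d 0 1).hom = LinearMap.ker π.hom ∧
      IsSuperfluous (LinearMap.ker π.hom) ∧ IsSuperfluous (LinearMap.ker (T.d 0 1).hom)

/-- `Hom(S, T) ≠ 0` in the homotopy category of complexes of modules. The bounded homotopy category
of finitely generated projective modules is a full subcategory of it. -/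
def HomotopyHomNonzero (S T : CochainComplex (ModuleCat.{u} R) ℤ) : Prop :=
  ∃ f : (HomotopyCategory.quotient (ModuleCat.{u} R) (ComplexShape.up ℤ)).obj S ⟶
    (HomotopyCategory.quotient (ModuleCat.{u} R) (ComplexShape.up ℤ)).obj T, f ≠ 0

end Complexes

namespace BrauerTree

variable {V : Type v} [Finite V] (Γ : BrauerTree V) (K : Type u) [Field K]

/-- `P` is (isomorphic to) the stalk complex concentrated in degree `0` of the indecomposable
projective module `A e_j` corresponding to the vertex `j`. -/
def IsStalkZero (P : CochainComplex (Γ.Mod K) ℤ) (j : Γ.Edge) : Prop :=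
  Nonempty (P ≅ (CochainComplex.singleFunctor (Γ.Mod K) 0).obj (ModuleCat.of _ (Γ.Ae K j)))

/-- Decompositions `T⁰ = ⨁ A e_i` and `T¹ = ⨁ A e_j` of the terms of a two-term complex. -/
structure Decomposition (T : CochainComplex (Γ.Mod K) ℤ) where
  m₀ : ℕ
  m₁ : ℕ
  src : Fin m₀ → Γ.Edge
  snk : Fin m₁ → Γ.Edge
  iso₀ : T.X 0 ≃ₗ[Γ.Alg K] (∀ p, Γ.Ae K (src p))
  iso₁ : T.X 1 ≃ₗ[Γ.Alg K] (∀ q, Γ.Ae K (snk q))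

namespace Decomposition

variable {Γ K} {T : CochainComplex (Γ.Mod K) ℤ} (D : Γ.Decomposition K T)

/-- The component of the differential `T⁰ → T¹` between two summands. -/
noncomputable def component (p : Fin D.m₀) (q : Fin D.m₁) :
    Γ.Ae K (D.src p) →ₗ[Γ.Alg K] Γ.Ae K (D.snk q) :=
  LinearMap.proj q ∘ₗ D.iso₁.toLinearMap ∘ₗ (T.d 0 1).hom ∘ₗ D.iso₀.symm.toLinearMap ∘ₗ
    LinearMap.single (Γ.Alg K) (fun p => Γ.Ae K (D.src p)) p

/-- `x` is a vertex of the diagram of `T`: it is a source or a sink (a marked vertex), or it lies on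
the path from a source to a sink between which the differential has a nonzero component. -/
def OnDiagram (x : Γ.Edge) : Prop :=
  (∃ p, D.src p = x) ∨ (∃ q, D.snk q = x) ∨
    ∃ p q, D.component p q ≠ 0 ∧ Γ.OnPath (D.src p) (D.snk q) x

/-- `x` is a degree-one source: a source that is an end point of the diagram, that is, exactly one
of the paths of the diagram starts there. -/
def IsDegreeOneSource (x : Γ.Edge) : Prop :=
  ∃ p, D.src p = x ∧ ∃! q, D.component p q ≠ 0

end Decomposition

end BrauerTree

/-!
The algebra `A` is the reduction modulo `X` of its Green order `Λ` over `K⟦X⟧`, which becomes a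
product of matrix rings, one for each vertex of the tree, after inverting `X`. The differential of
`T` lifts to a matrix `f` over `Λ`, and by Nakayama's lemma `Hom(T, T[1]) = 0` makes the
differential from degree `0` to degree `1` of the endomorphism complex of `f` surjective.

Let the excess of a vertex `c` of the tree be the number of sources minus the number of sinks at
`c`. The homology of `f` at `c` over `K((X))` has dimension at least the absolute value of the
excess. The symmetrizing form of `Λ` turns the surjectivity into a duality that identifies the
endomorphisms of `f` up to homotopy with their own dual. As this endomorphism ring is local, a
functional that picks eigenvalues can be represented at any vertex of nonzero excess. Comparing the
representatives at two such vertices shows that there are at most two of them, with excess `±1`.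

The vanishing of `Hom(P, T[-1])` and of `Hom(T, P[-1])` leaves `Hom(T, P)` as the cokernel of the
injective map `Hom(T¹, P) → Hom(T⁰, P)`. Counting common end points of edges, it is nonzero if and
only if the excesses at the two ends of `j` have positive sum. By an alternating count on the two
sides of an edge, a vertex of excess `1` lies on a single source and on no sink.
-/

/-! ### Positions in the cyclic orderings -/

namespace BrauerTree

variable {V : Type v} [Finite V] (Γ : BrauerTree V)

/-- The vertex `c` of the tree is an end point of the edge `p`. -/
def Inc (p : Γ.Edge) (c : V) : Prop := c ∈ (Subtype.val p : Sym2 V)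

variable {Γ}

theorem inc_edge_iff {d : Γ.Arrow} {c : V} : Γ.Inc (Γ.edge d) c ↔ c = d.fst ∨ c = d.snd := by
  rcases d with ⟨⟨x, y⟩, h⟩
  exact Sym2.mem_iff

theorem inc_edge_fst (d : Γ.Arrow) : Γ.Inc (Γ.edge d) d.fst := inc_edge_iff.2 (Or.inl rfl)

theorem inc_edge_snd (d : Γ.Arrow) : Γ.Inc (Γ.edge d) d.snd := inc_edge_iff.2 (Or.inr rfl)

theorem edge_symm (d : Γ.Arrow) : Γ.edge d.symm = Γ.edge d :=
  Subtype.ext d.edge_symm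

theorem exists_dart_edge (p : Γ.Edge) : ∃ d : Γ.Arrow, Γ.edge d = p := by
  obtain ⟨p, hp⟩ := p
  induction p using Sym2.ind with
  | _ x y => exact ⟨⟨(x, y), hp⟩, rfl⟩

theorem Inc.exists_dart {p : Γ.Edge} {c : V} (h : Γ.Inc p c) :
    ∃ d : Γ.Arrow, d.fst = c ∧ Γ.edge d = p := by
  obtain ⟨d, rfl⟩ := exists_dart_edge p
  rcases inc_edge_iff.1 h with h | h
  · exact ⟨d, h.symm, rfl⟩
  · exact ⟨d.symm, h.symm, edge_symm d⟩

theorem edge_eq_iff {d d' : Γ.Arrow} : Γ.edge d = Γ.edge d' ↔ d = d' ∨ d = d'.symm := by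
  rw [← SimpleGraph.dart_edge_eq_iff]
  exact Subtype.ext_iff

theorem dart_eq_of_fst_eq {d d' : Γ.Arrow} (h : d.fst = d'.fst) (he : Γ.edge d = Γ.edge d') :
    d = d' := by
  rcases edge_eq_iff.1 he with h' | h'
  · exact h'
  · subst h'
    exact absurd h d'.snd_ne_fst

variable (Γ) in
/-- A sign on the vertices of the tree which alternates along edges. -/
noncomputable def sgn (c : V) : ℤ := if Γ.isTree.isBipartite.some c = 0 then 1 else -1

theorem sgn_mul_self (c : V) : Γ.sgn c * Γ.sgn c = 1 := by
  unfold sgn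
  split_ifs <;> rfl

theorem sgn_mul_self_cast (R : Type*) [Ring R] (c : V) : (Γ.sgn c : R) * Γ.sgn c = 1 := by
  rw [← Int.cast_mul, sgn_mul_self, Int.cast_one]

theorem sgn_fst (d : Γ.Arrow) : Γ.sgn d.fst = - Γ.sgn d.snd := by
  have alternate : ∀ a b : Fin 2, a ≠ b →
      (if a = 0 then (1 : ℤ) else -1) = -(if b = 0 then 1 else -1) := by
    decide
  exact alternate _ _ (Γ.isTree.isBipartite.some.valid d.adj)

theorem sgn_eq_neg {p : Γ.Edge} {c c' : V} (hcc : c ≠ c') (hc : Γ.Inc p c) (hc' : Γ.Inc p c') :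
    Γ.sgn c = - Γ.sgn c' := by
  obtain ⟨d, rfl, rfl⟩ := hc.exists_dart
  rcases inc_edge_iff.1 hc' with h | h
  · exact absurd h.symm hcc
  · rw [h, sgn_fst]

variable (Γ) in
/-- The number of edges around the first vertex of a dart. -/
noncomputable def len (d : Γ.Arrow) : ℕ := Function.minimalPeriod Γ.next d

instance : Finite Γ.Arrow := Finite.of_injective _ SimpleGraph.Dart.toProd_injective

theorem mem_periodicPts (d : Γ.Arrow) : d ∈ Function.periodicPts Γ.next :=
  Γ.next.injective.mem_periodicPts d

theorem len_pos (d : Γ.Arrow) : 0 < Γ.len d :=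
  Function.minimalPeriod_pos_of_mem_periodicPts (mem_periodicPts d)

theorem iterate_len (d : Γ.Arrow) : Γ.next^[Γ.len d] d = d :=
  Function.iterate_minimalPeriod

theorem iterate_fst (d : Γ.Arrow) (k : ℕ) : (Γ.next^[k] d).fst = d.fst := by
  induction k with
  | zero => rfl
  | succ k ih => rw [Function.iterate_succ_apply', Γ.next_fst, ih]

theorem inc_edge_iterate_fst (d : Γ.Arrow) (k : ℕ) : Γ.Inc (Γ.edge (Γ.next^[k] d)) d.fst := by
  rw [← iterate_fst d k]
  exact inc_edge_fst _

theorem inc_edge_next_fst (d : Γ.Arrow) : Γ.Inc (Γ.edge (Γ.next d)) d.fst :=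
  inc_edge_iterate_fst d 1

theorem exists_iterate_eq {d d' : Γ.Arrow} (h : d.fst = d'.fst) :
    ∃ k < Γ.len d, Γ.next^[k] d = d' := by
  obtain ⟨i, -, hi⟩ := (Γ.next_cyclic d d' h).exists_pow_eq'
  refine ⟨i % Γ.len d, Nat.mod_lt _ (len_pos d), ?_⟩
  rw [len, Function.iterate_mod_minimalPeriod_eq, Equiv.Perm.iterate_eq_pow, hi]

theorem len_iterate (d : Γ.Arrow) (k : ℕ) : Γ.len (Γ.next^[k] d) = Γ.len d :=
  Function.minimalPeriod_apply_iterate (mem_periodicPts d) k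

theorem len_eq {d d' : Γ.Arrow} (h : d.fst = d'.fst) : Γ.len d = Γ.len d' := by
  obtain ⟨k, -, rfl⟩ := exists_iterate_eq h
  rw [len_iterate]

theorem iterate_inj {d : Γ.Arrow} {k l : ℕ} (hk : k < Γ.len d) (hl : l < Γ.len d)
    (h : Γ.next^[k] d = Γ.next^[l] d) : k = l :=
  (Function.iterate_injOn_Iio_minimalPeriod) hk hl h

variable (Γ) in
/-- A chosen dart at the first vertex of `d`. -/
noncomputable def root (d : Γ.Arrow) : Γ.Arrow :=
  (⟨d, rfl⟩ : ∃ d' : Γ.Arrow, d'.fst = d.fst).choose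

theorem root_fst (d : Γ.Arrow) : (Γ.root d).fst = d.fst :=
  (⟨d, rfl⟩ : ∃ d' : Γ.Arrow, d'.fst = d.fst).choose_spec

theorem root_eq {d d' : Γ.Arrow} (h : d.fst = d'.fst) : Γ.root d = Γ.root d' := by
  unfold root
  congr 1
  rw [h]

variable (Γ) in
/-- The position of a dart in the cyclic ordering, counted from the chosen dart. -/
noncomputable def pos (d : Γ.Arrow) : ℕ := (exists_iterate_eq (root_fst d)).choose

theorem pos_lt (d : Γ.Arrow) : Γ.pos d < Γ.len d :=
  (exists_iterate_eq (root_fst d)).choose_spec.1.trans_eq (len_eq (root_fst d))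

theorem iterate_pos (d : Γ.Arrow) : Γ.next^[Γ.pos d] (Γ.root d) = d :=
  (exists_iterate_eq (root_fst d)).choose_spec.2

theorem pos_iterate_root (d : Γ.Arrow) {k : ℕ} (hk : k < Γ.len d) :
    Γ.pos (Γ.next^[k] (Γ.root d)) = k := by
  have hf : (Γ.next^[k] (Γ.root d)).fst = d.fst := by rw [iterate_fst, root_fst]
  have hiter := iterate_pos (Γ.next^[k] (Γ.root d))
  rw [root_eq hf] at hiter
  refine iterate_inj ?_ ?_ hiter
  · exact (pos_lt _).trans_eq (len_eq (hf.trans (root_fst d).symm))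
  · exact hk.trans_eq (len_eq (root_fst d).symm)

theorem pos_inj {d d' : Γ.Arrow} (h : d.fst = d'.fst) (hp : Γ.pos d = Γ.pos d') : d = d' := by
  rw [← iterate_pos d, ← iterate_pos d', root_eq h, hp]

theorem pos_next (d : Γ.Arrow) (h : Γ.pos d + 1 < Γ.len d) : Γ.pos (Γ.next d) = Γ.pos d + 1 := by
  conv_lhs => rw [← iterate_pos d, ← Function.iterate_succ_apply' Γ.next]
  exact pos_iterate_root d h

theorem pos_next_last (d : Γ.Arrow) (h : Γ.pos d + 1 = Γ.len d) : Γ.pos (Γ.next d) = 0 := by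
  conv_lhs => rw [← iterate_pos d, ← Function.iterate_succ_apply' Γ.next]
  rw [Nat.succ_eq_add_one, h, ← len_eq (root_fst d), iterate_len]
  exact pos_iterate_root (k := 0) d (len_pos d)

variable (Γ) in
open Classical in
/-- The position of an edge in the ordering around one of its end points. -/
noncomputable def rk (c : V) (p : Γ.Edge) : ℕ :=
  if h : ∃ d : Γ.Arrow, d.fst = c ∧ Γ.edge d = p then Γ.pos h.choose else 0

theorem rk_edge (d : Γ.Arrow) : Γ.rk d.fst (Γ.edge d) = Γ.pos d := by
  have h : ∃ d' : Γ.Arrow, d'.fst = d.fst ∧ Γ.edge d' = Γ.edge d := ⟨d, rfl, rfl⟩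
  rw [rk, dif_pos h, dart_eq_of_fst_eq h.choose_spec.1 h.choose_spec.2]

theorem rk_inj {c : V} {p q : Γ.Edge} (hp : Γ.Inc p c) (hq : Γ.Inc q c)
    (h : Γ.rk c p = Γ.rk c q) : p = q := by
  obtain ⟨d, rfl, rfl⟩ := hp.exists_dart
  obtain ⟨d', h', rfl⟩ := hq.exists_dart
  rw [rk_edge, ← h', rk_edge] at h
  rw [pos_inj h'.symm h]

end BrauerTree

/-! ### The Green order -/

namespace BrauerTree

open PowerSeries

variable {V : Type v} [Finite V] {Γ : BrauerTree V} {K : Type u} [Field K]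

noncomputable instance : DecidableEq Γ.Edge := Classical.decEq _

variable (Γ K) in
/-- The morphisms from `p` to `q` in the Green order of the Brauer tree, whose reduction modulo `X`
is the Brauer tree algebra. They are encoded as families of power series indexed by the vertices of
the tree and supported at the common end points of `p` and `q`; composition is the pointwise
product. -/
def Lam (p q : Γ.Edge) : Submodule K⟦X⟧ (V → K⟦X⟧) where
  carrier := {x | (∀ c, ¬ (Γ.Inc p c ∧ Γ.Inc q c) → x c = 0) ∧
    (∀ c, Γ.rk c q < Γ.rk c p → X ∣ x c) ∧
    (p = q → ∀ c c', Γ.Inc p c → Γ.Inc p c' → X ∣ x c - x c')}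
  add_mem' := by
    rintro x y ⟨hsupp, hdvd, hsum⟩ ⟨ksupp, kdvd, ksum⟩
    refine ⟨fun c h => ?_, fun c h => dvd_add (hdvd c h) (kdvd c h), fun h c c' hc hc' => ?_⟩
    · rw [Pi.add_apply, hsupp c h, ksupp c h, add_zero]
    · simpa only [Pi.add_apply, add_sub_add_comm]
        using dvd_add (hsum h c c' hc hc') (ksum h c c' hc hc')
  zero_mem' := by simp
  smul_mem' := by
    rintro r x ⟨hsupp, hdvd, hsum⟩
    refine ⟨fun c h => ?_, fun c h => (hdvd c h).mul_left _, fun h c c' hc hc' => ?_⟩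
    · rw [Pi.smul_apply, hsupp c h, smul_zero]
    · rw [Pi.smul_apply, Pi.smul_apply, ← smul_sub]
      exact (hsum h c c' hc hc').mul_left _

section Lam

variable {p q r : Γ.Edge} {x y : V → K⟦X⟧}

theorem X_dvd_mul_of_ne (hpq : p ≠ q) (hx : x ∈ Γ.Lam K p q) (hy : y ∈ Γ.Lam K q p) (c : V) :
    X ∣ x c * y c := by
  by_cases h : Γ.Inc p c ∧ Γ.Inc q c
  · rcases lt_or_gt_of_ne (fun h' => hpq (rk_inj h.1 h.2 h')) with h' | h'
    · exact (hy.2.1 c h').mul_left _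
    · exact (hx.2.1 c h').mul_right _
  · rw [hx.1 c h, zero_mul]
    exact dvd_zero _

theorem mul_mem_Lam (hx : x ∈ Γ.Lam K p q) (hy : y ∈ Γ.Lam K q r) : x * y ∈ Γ.Lam K p r := by
  refine ⟨fun c h => ?_, fun c h => ?_, ?_⟩
  · rw [Pi.mul_apply]
    by_cases hp : Γ.Inc p c
    · rw [hy.1 c (fun h' => h ⟨hp, h'.2⟩), mul_zero]
    · rw [hx.1 c (fun h' => hp h'.1), zero_mul]
  · rcases lt_or_ge (Γ.rk c q) (Γ.rk c p) with h' | h'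
    · exact (hx.2.1 c h').mul_right _
    · exact (hy.2.1 c (h.trans_le h')).mul_left _
  · rintro rfl c c' hc hc'
    by_cases hpq : p = q
    · subst hpq
      have split_sub : (x * y) c - (x * y) c' = (x c - x c') * y c + x c' * (y c - y c') := by
        simp only [Pi.mul_apply]
        ring
      rw [split_sub]
      exact dvd_add ((hx.2.2 rfl c c' hc hc').mul_right _) ((hy.2.2 rfl c c' hc hc').mul_left _)
    · exact dvd_sub (X_dvd_mul_of_ne hpq hx hy c) (X_dvd_mul_of_ne hpq hx hy c')

theorem Lam.eq_zero_of_forall_not_inc (h : ∀ c, ¬ (Γ.Inc p c ∧ Γ.Inc q c))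
    (hx : x ∈ Γ.Lam K p q) : x = 0 :=
  funext fun c => hx.1 c (h c)

variable (Γ K) in
/-- The identity morphism of `p` in the order. -/
noncomputable def oneAt (p : Γ.Edge) : V → K⟦X⟧ := Set.indicator {c | Γ.Inc p c} 1

theorem oneAt_apply {c : V} (h : Γ.Inc p c) : Γ.oneAt K p c = 1 :=
  Set.indicator_of_mem (s := {c | Γ.Inc p c}) h 1

theorem oneAt_apply_of_not_inc {c : V} (h : ¬ Γ.Inc p c) : Γ.oneAt K p c = 0 :=
  Set.indicator_of_notMem (s := {c | Γ.Inc p c}) h 1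

theorem oneAt_mem (p : Γ.Edge) : Γ.oneAt K p ∈ Γ.Lam K p p := by
  refine ⟨fun c h => oneAt_apply_of_not_inc fun h' => h ⟨h', h'⟩,
    fun c h => absurd h (lt_irrefl _), fun _ c c' hc hc' => ?_⟩
  rw [oneAt_apply hc, oneAt_apply hc', sub_self]
  exact dvd_zero _

theorem oneAt_mul (hx : x ∈ Γ.Lam K p q) : Γ.oneAt K p * x = x := by
  funext c
  rw [Pi.mul_apply]
  by_cases h : Γ.Inc p c
  · rw [oneAt_apply h, one_mul]
  · rw [hx.1 c fun h' => h h'.1, mul_zero]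

theorem mul_oneAt (hx : x ∈ Γ.Lam K p q) : x * Γ.oneAt K q = x := by
  funext c
  rw [Pi.mul_apply]
  by_cases h : Γ.Inc q c
  · rw [oneAt_apply h, mul_one]
  · rw [hx.1 c fun h' => h h'.2, zero_mul]

end Lam

theorem eq_of_inc {p q : Γ.Edge} (hpq : p ≠ q) {c c' : V} (hp : Γ.Inc p c) (hq : Γ.Inc q c)
    (hp' : Γ.Inc p c') (hq' : Γ.Inc q c') : c' = c := by
  by_contra h
  exact hpq (Subtype.ext (Sym2.eq_of_ne_mem (Ne.symm h) hp hp' hq hq'))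

section Arc

variable [DecidableEq V]

variable (Γ K) in
/-- The morphism of the order that lifts the path from `p` to `q` around the vertex `c`; for
`p = q` the path runs once around `c`. The sign makes the two full cycles at an edge agree
modulo `X`. -/
noncomputable def arc (c : V) (p q : Γ.Edge) : V → K⟦X⟧ :=
  Pi.single c (if Γ.rk c q ≤ Γ.rk c p then (Γ.sgn c : K⟦X⟧) * X else 1)

theorem arc_apply_of_ne {c c' : V} (h : c' ≠ c) (p q : Γ.Edge) : Γ.arc K c p q c' = 0 :=
  Pi.single_eq_of_ne h _

theorem X_dvd_arc {c : V} {p q : Γ.Edge} (h : Γ.rk c q ≤ Γ.rk c p) (c' : V) :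
    X ∣ Γ.arc K c p q c' := by
  by_cases hc : c' = c
  · rw [arc, if_pos h, hc, Pi.single_eq_same]
    exact dvd_mul_left _ _
  · rw [arc_apply_of_ne hc]
    exact dvd_zero _

theorem arc_mem {c : V} {p q : Γ.Edge} (hp : Γ.Inc p c) (hq : Γ.Inc q c) :
    Γ.arc K c p q ∈ Γ.Lam K p q := by
  refine ⟨fun c' h => arc_apply_of_ne (by rintro rfl; exact h ⟨hp, hq⟩) p q, fun c' h => ?_, ?_⟩
  · by_cases hc : c' = c
    · exact X_dvd_arc (hc ▸ h.le) c'
    · rw [arc_apply_of_ne hc]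
      exact dvd_zero _
  · rintro rfl c₁ c₂ - -
    exact dvd_sub (X_dvd_arc le_rfl c₁) (X_dvd_arc le_rfl c₂)

theorem arc_mul_arc_of_ne {c c' : V} (h : c ≠ c') (p q r s : Γ.Edge) :
    Γ.arc K c p q * Γ.arc K c' r s = 0 := by
  funext x
  rw [Pi.mul_apply, Pi.zero_apply]
  by_cases hx : x = c
  · rw [arc_apply_of_ne (hx.trans_ne h), mul_zero]
  · rw [arc_apply_of_ne hx, zero_mul]

theorem arc_mul_arc_next {d : Γ.Arrow} {p : Γ.Edge} (hp : Γ.Inc p d.fst) (hpd : p ≠ Γ.edge d) :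
    Γ.arc K d.fst p (Γ.edge d) * Γ.arc K d.fst (Γ.edge d) (Γ.edge (Γ.next d)) =
      Γ.arc K d.fst p (Γ.edge (Γ.next d)) := by
  obtain ⟨d', hf, rfl⟩ := hp.exists_dart
  have hne : Γ.pos d' ≠ Γ.pos d := fun h => hpd (by rw [pos_inj hf h])
  have hlt : Γ.pos d' < Γ.len d := (pos_lt d').trans_eq (len_eq hf)
  have hpos' : Γ.rk d.fst (Γ.edge d') = Γ.pos d' := by rw [← hf, rk_edge]
  have hpos'' : Γ.rk d.fst (Γ.edge (Γ.next d)) = Γ.pos (Γ.next d) := by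
    rw [← Γ.next_fst d, rk_edge]
  rw [arc, arc, arc, ← Pi.single_mul, rk_edge, hpos', hpos'']
  congr 1
  rcases (Nat.succ_le_of_lt (pos_lt d)).lt_or_eq with h | h
  · rw [pos_next d h, if_neg (c := Γ.pos d + 1 ≤ _) (by lia), mul_one]
    exact if_congr (by lia) rfl rfl
  · rw [pos_next_last d h, if_neg (by lia), if_pos (by lia), if_pos (by lia), one_mul]

theorem arc_fst_sub_arc_snd (d : Γ.Arrow) : Γ.arc K d.fst (Γ.edge d) (Γ.edge d) -
      Γ.arc K d.snd (Γ.edge d) (Γ.edge d) =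
    (X : K⟦X⟧) • ((Γ.sgn d.fst : K⟦X⟧) • Γ.oneAt K (Γ.edge d)) := by
  have hne := d.fst_ne_snd
  funext c
  simp only [arc, le_refl, if_true, sgn_fst d, Pi.sub_apply, Pi.smul_apply, smul_eq_mul,
    Int.cast_neg]
  by_cases hfst : c = d.fst
  · rw [hfst, Pi.single_eq_same, Pi.single_eq_of_ne hne, oneAt_apply (inc_edge_fst d)]
    ring
  by_cases hsnd : c = d.snd
  · rw [hsnd, Pi.single_eq_same, Pi.single_eq_of_ne hne.symm, oneAt_apply (inc_edge_snd d)]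
    ring
  · rw [Pi.single_eq_of_ne hfst, Pi.single_eq_of_ne hsnd, oneAt_apply_of_not_inc
      fun h => (inc_edge_iff.1 h).elim hfst hsnd]
    ring

theorem exists_eq_smul_arc {p q : Γ.Edge} (hpq : p ≠ q) {c : V} (hp : Γ.Inc p c)
    (hq : Γ.Inc q c) {x : V → K⟦X⟧} (hx : x ∈ Γ.Lam K p q) : ∃ r : K⟦X⟧, x = r • Γ.arc K c p q := by
  obtain ⟨r, hr⟩ : ∃ r : K⟦X⟧, x c = r * Γ.arc K c p q c := by
    rw [arc, Pi.single_eq_same]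
    split_ifs with h
    · obtain ⟨u, hu⟩ := hx.2.1 c (h.lt_of_ne fun h' => hpq (rk_inj hp hq h'.symm))
      refine ⟨Γ.sgn c * u, hu.trans ?_⟩
      linear_combination -X * u * sgn_mul_self_cast (Γ := Γ) K⟦X⟧ c
    · exact ⟨x c, (mul_one _).symm⟩
  refine ⟨r, funext fun c' => ?_⟩
  by_cases hc : c' = c
  · rw [hc, hr, Pi.smul_apply, smul_eq_mul]
  · rw [hx.1 c' fun h => hc (eq_of_inc hpq hp hq h.1 h.2), Pi.smul_apply, arc_apply_of_ne hc,
      smul_zero]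

theorem exists_eq_smul_oneAt_add_smul_arc (d : Γ.Arrow) {x : V → K⟦X⟧}
    (hx : x ∈ Γ.Lam K (Γ.edge d) (Γ.edge d)) : ∃ r s : K⟦X⟧,
      x = r • Γ.oneAt K (Γ.edge d) + s • Γ.arc K d.fst (Γ.edge d) (Γ.edge d) := by
  obtain ⟨u, hu⟩ := hx.2.2 rfl d.fst d.snd (inc_edge_fst d) (inc_edge_snd d)
  refine ⟨x d.snd, Γ.sgn d.fst * u, funext fun c => ?_⟩
  rw [Pi.add_apply, Pi.smul_apply, Pi.smul_apply, smul_eq_mul, smul_eq_mul]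
  by_cases hfst : c = d.fst
  · rw [hfst, oneAt_apply (inc_edge_fst d), arc, if_pos le_rfl, Pi.single_eq_same]
    linear_combination hu - X * u * sgn_mul_self_cast (Γ := Γ) K⟦X⟧ d.fst
  rw [arc_apply_of_ne hfst, mul_zero, add_zero]
  by_cases hsnd : c = d.snd
  · rw [hsnd, oneAt_apply (inc_edge_snd d), mul_one]
  · have hc : ¬ Γ.Inc (Γ.edge d) c := fun h => (inc_edge_iff.1 h).elim hfst hsnd
    rw [oneAt_apply_of_not_inc hc, mul_zero, hx.1 c fun h => hc h.1]

theorem arc_apply_ne_zero (c : V) (p q : Γ.Edge) : Γ.arc K c p q c ≠ 0 := by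
  rw [arc, Pi.single_eq_same]
  split_ifs
  · exact mul_ne_zero (left_ne_zero_of_mul_eq_one (sgn_mul_self_cast _ c)) X_ne_zero
  · exact one_ne_zero

theorem eq_zero_of_smul_arc_eq_zero {r : K⟦X⟧} {c : V} {p q : Γ.Edge}
    (h : r • Γ.arc K c p q = 0) : r = 0 :=
  (mul_eq_zero.1 (congrFun h c)).resolve_right (arc_apply_ne_zero c p q)

theorem eq_zero_of_smul_oneAt_add_smul_arc_eq_zero {r s : K⟦X⟧} {d : Γ.Arrow}
    (h : r • Γ.oneAt K (Γ.edge d) + s • Γ.arc K d.fst (Γ.edge d) (Γ.edge d) = 0) :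
    r = 0 ∧ s = 0 := by
  have hr : r = 0 := by
    simpa [arc_apply_of_ne d.snd_ne_fst, oneAt_apply (inc_edge_snd d)] using congrFun h d.snd
  rw [hr, zero_smul, zero_add] at h
  exact ⟨hr, eq_zero_of_smul_arc_eq_zero h⟩

theorem arc_mul_arc_swap {c : V} {p q : Γ.Edge} (hpq : p ≠ q) (hp : Γ.Inc p c) (hq : Γ.Inc q c) :
    Γ.arc K c p q * Γ.arc K c q p = Γ.arc K c p p := by
  rw [arc, arc, arc, ← Pi.single_mul, if_pos le_rfl]
  rcases lt_or_gt_of_ne (fun h => hpq (rk_inj hp hq h)) with h | h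
  · rw [if_neg h.not_ge, if_pos h.le, one_mul]
  · rw [if_pos h.le, if_neg h.not_ge, mul_one]

theorem arc_mul_arc_self (c : V) (p : Γ.Edge) :
    Γ.arc K c p p * Γ.arc K c p p = (X * (Γ.sgn c : K⟦X⟧)) • Γ.arc K c p p := by
  simp only [arc, le_refl, if_true, ← Pi.single_mul, ← Pi.single_smul, smul_eq_mul]
  congr 1
  ring

end Arc

section MatLam

variable (K) in
/-- The morphisms of the order from `⨁ src` to `⨁ snk`, as matrices. -/
def matLam {ι κ : Type*} (src : ι → Γ.Edge) (snk : κ → Γ.Edge) :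
    Submodule K⟦X⟧ (Matrix ι κ (V → K⟦X⟧)) where
  carrier := {A | ∀ p q, A p q ∈ Γ.Lam K (src p) (snk q)}
  add_mem' hA hB p q := add_mem (hA p q) (hB p q)
  zero_mem' _ _ := zero_mem _
  smul_mem' r _ hA p q := Submodule.smul_mem _ r (hA p q)

variable {ι κ μ : Type*} {src : ι → Γ.Edge} {mid : κ → Γ.Edge} {snk : μ → Γ.Edge}

theorem mul_mem_matLam [Fintype κ] {A : Matrix ι κ (V → K⟦X⟧)} {B : Matrix κ μ (V → K⟦X⟧)}
    (hA : A ∈ matLam K src mid) (hB : B ∈ matLam K mid snk) : A * B ∈ matLam K src snk :=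
  fun p r => sum_mem fun q _ => mul_mem_Lam (hA p q) (hB q r)

theorem single_mem_matLam [DecidableEq ι] [DecidableEq κ] {p : ι} {q : κ} {x : V → K⟦X⟧}
    (hx : x ∈ Γ.Lam K (src p) (mid q)) : Matrix.single p q x ∈ matLam K src mid := by
  intro p' q'
  rw [Matrix.single_apply]
  split_ifs with h
  · rwa [← h.1, ← h.2]
  · exact zero_mem _

end MatLam

section Order

variable {ι : Type*} [Fintype ι]

variable (K) in
/-- The endomorphism ring of `⨁ src` in the order. -/
def Order (src : ι → Γ.Edge) : NonUnitalSubalgebra K⟦X⟧ (Matrix ι ι (V → K⟦X⟧)) where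
  __ := matLam K src src
  mul_mem' := mul_mem_matLam

variable {src : ι → Γ.Edge} [DecidableEq ι]

noncomputable instance : One (Order K src) where
  one := ⟨Matrix.diagonal fun p => Γ.oneAt K (src p), by
    intro p q
    rw [Matrix.diagonal_apply]
    split_ifs with h
    · exact h ▸ oneAt_mem _
    · exact zero_mem _⟩

theorem Order.coe_one :
    ((1 : Order K src) : Matrix ι ι (V → K⟦X⟧)) = Matrix.diagonal fun p => Γ.oneAt K (src p) := rfl

theorem one_mul_of_mem_matLam {κ : Type*} {snk : κ → Γ.Edge} {A : Matrix ι κ (V → K⟦X⟧)}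
    (hA : A ∈ matLam K src snk) : ((1 : Order K src) : Matrix ι ι (V → K⟦X⟧)) * A = A := by
  ext1 p q
  rw [Order.coe_one, Matrix.diagonal_mul, oneAt_mul (hA p q)]

theorem mul_one_of_mem_matLam {κ : Type*} {snk : κ → Γ.Edge} {A : Matrix κ ι (V → K⟦X⟧)}
    (hA : A ∈ matLam K snk src) : A * ((1 : Order K src) : Matrix ι ι (V → K⟦X⟧)) = A := by
  ext1 p q
  rw [Order.coe_one, Matrix.mul_diagonal, mul_oneAt (hA p q)]

noncomputable instance : Ring (Order K src) where
  __ : NonUnitalRing (Order K src) := inferInstance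
  one_mul A := Subtype.ext (one_mul_of_mem_matLam A.2)
  mul_one A := Subtype.ext (mul_one_of_mem_matLam A.2)

noncomputable instance : Algebra K⟦X⟧ (Order K src) :=
  Algebra.ofModule smul_mul_assoc mul_smul_comm

noncomputable instance : Algebra K (Order K src) :=
  Algebra.ofModule smul_mul_assoc mul_smul_comm

instance : IsScalarTower K K⟦X⟧ (Order K src) :=
  inferInstance

end Order

end BrauerTree

/-! ### Paths in the Brauer tree algebra -/

namespace BrauerTree

variable {V : Type v} [Finite V] {Γ : BrauerTree V}

theorem iterate_inj_of_pos {d : Γ.Arrow} {k l : ℕ} (hk : 0 < k) (hk' : k ≤ Γ.len d) (hl : 0 < l)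
    (hl' : l ≤ Γ.len d) (h : Γ.next^[k] d = Γ.next^[l] d) : k = l := by
  obtain ⟨k, rfl⟩ := Nat.exists_eq_succ_of_ne_zero hk.ne'
  obtain ⟨l, rfl⟩ := Nat.exists_eq_succ_of_ne_zero hl.ne'
  rw [Function.iterate_succ_apply', Function.iterate_succ_apply'] at h
  rw [iterate_inj hk' hl' (Γ.next.injective h)]

theorem exists_iterate_eq_of_pos {d d' : Γ.Arrow} (h : d.fst = d'.fst) :
    ∃ k, 0 < k ∧ k ≤ Γ.len d ∧ Γ.next^[k] d = d' := by
  obtain ⟨k, hk, rfl⟩ := exists_iterate_eq h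
  rcases k.eq_zero_or_pos with rfl | hpos
  · exact ⟨_, len_pos d, le_rfl, iterate_len d⟩
  · exact ⟨k, hpos, hk.le, rfl⟩

theorem edge_iterate_inj {d d' : Γ.Arrow} {k k' : ℕ} (hf : d.fst = d'.fst)
    (hk : 0 < k) (hk' : k ≤ Γ.len d) (hl : 0 < k') (hl' : k' ≤ Γ.len d')
    (h : Γ.edge d = Γ.edge d') (h' : Γ.edge (Γ.next^[k] d) = Γ.edge (Γ.next^[k'] d')) :
    d = d' ∧ k = k' := by
  obtain rfl := dart_eq_of_fst_eq hf h
  exact ⟨rfl, iterate_inj_of_pos hk hk' hl hl'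
    (dart_eq_of_fst_eq (by rw [iterate_fst, iterate_fst]) h')⟩

section Presentation

variable {K : Type u} [Field K]

theorem toAlg_surjective : Function.Surjective (Γ.toAlg K) :=
  RingQuot.mkAlgHom_surjective K (Γ.Rel K)

theorem toAlg_rel {x y : FreeAlgebra K Γ.Gen} (h : Γ.Rel K x y) : Γ.toAlg K x = Γ.toAlg K y :=
  RingQuot.mkAlgHom_rel K h

theorem e_mul_self (i : Γ.Edge) : Γ.e K i * Γ.e K i = Γ.e K i := by
  rw [e, ← map_mul, toAlg_rel (Rel.idem i)]

theorem e_mul_ne {i j : Γ.Edge} (h : i ≠ j) : Γ.e K i * Γ.e K j = 0 := by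
  rw [e, e, ← map_mul, toAlg_rel (Rel.orth i j h), map_zero]

theorem sum_e : ∑ i : Γ.Edge, Γ.e K i = 1 := by
  simp only [e]
  rw [← map_sum, toAlg_rel Rel.one, map_one]

theorem sum_sum_e_mul_mul_e (z : Γ.Alg K) : ∑ p, ∑ q, Γ.e K p * z * Γ.e K q = z := by
  simp_rw [← Finset.mul_sum, sum_e, mul_one, ← Finset.sum_mul, sum_e, one_mul]

theorem e_mul_a (d : Γ.Arrow) : Γ.e K (Γ.edge d) * Γ.a K d = Γ.a K d := by
  rw [e, a, ← map_mul, toAlg_rel (Rel.source d)]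

theorem a_mul_e (d : Γ.Arrow) : Γ.a K d * Γ.e K (Γ.edge (Γ.next d)) = Γ.a K d := by
  rw [e, a, ← map_mul, toAlg_rel (Rel.target d)]

theorem a_mul_a_eq_zero {d d' : Γ.Arrow} (h : d' ≠ Γ.next d) : Γ.a K d * Γ.a K d' = 0 := by
  by_cases he : Γ.edge d' = Γ.edge (Γ.next d)
  · rw [a, a, ← map_mul, toAlg_rel (Rel.zero d d' he h), map_zero]
  · rw [← a_mul_e d, ← e_mul_a d', mul_assoc, ← mul_assoc (Γ.e K _) (Γ.e K _),
      e_mul_ne (Ne.symm he), zero_mul, mul_zero]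

variable (K) in
/-- The path of length `k` that starts with `d`, as an element of `A`; it is `1` for `k = 0`. -/
noncomputable def path (d : Γ.Arrow) (k : ℕ) : Γ.Alg K :=
  ((List.range k).map fun l => Γ.a K (Γ.next^[l] d)).prod

theorem path_succ (d : Γ.Arrow) (k : ℕ) : path K d (k + 1) = path K d k * Γ.a K (Γ.next^[k] d) := by
  rw [path, List.range_succ, List.map_append, List.prod_append, List.map_singleton,
    List.prod_singleton, path]

theorem path_one (d : Γ.Arrow) : path K d 1 = Γ.a K d := by simp [path]

theorem path_len (d : Γ.Arrow) : path K d (Γ.len d) = path K d.symm (Γ.len d.symm) := by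
  have path_eq (d : Γ.Arrow) : path K d (Γ.len d) = Γ.toAlg K (Γ.preCycle K d) := by
    rw [preCycle, map_list_prod, List.map_map, path]
    rfl
  rw [path_eq, path_eq, toAlg_rel (Rel.cycle d)]

theorem e_mul_path {d : Γ.Arrow} {k : ℕ} (hk : 0 < k) :
    Γ.e K (Γ.edge d) * path K d k = path K d k := by
  obtain ⟨k, rfl⟩ := Nat.exists_eq_succ_of_ne_zero hk.ne'
  induction k with
  | zero => rw [path_one, e_mul_a]
  | succ k ih => rw [path_succ, ← mul_assoc, ih k.succ_pos]

theorem path_mul_e {d : Γ.Arrow} {k : ℕ} (hk : 0 < k) :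
    path K d k * Γ.e K (Γ.edge (Γ.next^[k] d)) = path K d k := by
  obtain ⟨k, rfl⟩ := Nat.exists_eq_succ_of_ne_zero hk.ne'
  rw [path_succ, mul_assoc, Function.iterate_succ_apply', a_mul_e]

theorem path_mul_a {d d' : Γ.Arrow} {k : ℕ} (hk : 0 < k) (h : d' ≠ Γ.next^[k] d) :
    path K d k * Γ.a K d' = 0 := by
  obtain ⟨k, rfl⟩ := Nat.exists_eq_succ_of_ne_zero hk.ne'
  rw [Function.iterate_succ_apply'] at h
  rw [path_succ, mul_assoc, a_mul_a_eq_zero h, mul_zero]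

theorem path_len_mul_a (d : Γ.Arrow) : path K d (Γ.len d) * Γ.a K d = 0 := by
  rw [path_len]
  refine path_mul_a (len_pos _) ?_
  rw [iterate_len]
  exact d.symm_ne.symm

variable (Γ K) in
/-- The span of the trivial paths and of the paths that run at most once around a cycle. -/
noncomputable def pathSpan : Submodule K (Γ.Alg K) :=
  Submodule.span K (Set.range (Γ.e K) ∪ {z | ∃ d k, 0 < k ∧ k ≤ Γ.len d ∧ path K d k = z})

theorem e_mem_pathSpan (i : Γ.Edge) : Γ.e K i ∈ Γ.pathSpan K :=
  Submodule.subset_span (Or.inl ⟨i, rfl⟩)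

theorem path_mem_pathSpan {d : Γ.Arrow} {k : ℕ} (hk : 0 < k) (hk' : k ≤ Γ.len d) :
    path K d k ∈ Γ.pathSpan K :=
  Submodule.subset_span (Or.inr ⟨d, k, hk, hk', rfl⟩)

theorem mul_e_mem_pathSpan {z : Γ.Alg K} (hz : z ∈ Γ.pathSpan K) (j : Γ.Edge) :
    z * Γ.e K j ∈ Γ.pathSpan K := by
  suffices h : Γ.pathSpan K ≤ (Γ.pathSpan K).comap (LinearMap.mulRight K (Γ.e K j)) from h hz
  refine Submodule.span_le.2 ?_
  rintro _ (⟨i, rfl⟩ | ⟨d, k, hk, hk', rfl⟩)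
  · change Γ.e K i * Γ.e K j ∈ Γ.pathSpan K
    by_cases h : i = j
    · rw [h, e_mul_self]
      exact e_mem_pathSpan j
    · rw [e_mul_ne h]
      exact zero_mem _
  · change path K d k * Γ.e K j ∈ Γ.pathSpan K
    by_cases h : Γ.edge (Γ.next^[k] d) = j
    · rw [← h, path_mul_e hk]
      exact path_mem_pathSpan hk hk'
    · rw [← path_mul_e hk, mul_assoc, e_mul_ne h, mul_zero]
      exact zero_mem _

theorem mul_a_mem_pathSpan {z : Γ.Alg K} (hz : z ∈ Γ.pathSpan K) (d' : Γ.Arrow) :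
    z * Γ.a K d' ∈ Γ.pathSpan K := by
  suffices h : Γ.pathSpan K ≤ (Γ.pathSpan K).comap (LinearMap.mulRight K (Γ.a K d')) from h hz
  refine Submodule.span_le.2 ?_
  rintro _ (⟨i, rfl⟩ | ⟨d, k, hk, hk', rfl⟩)
  · change Γ.e K i * Γ.a K d' ∈ Γ.pathSpan K
    by_cases h : i = Γ.edge d'
    · rw [h, e_mul_a, ← path_one]
      exact path_mem_pathSpan one_pos (len_pos d')
    · rw [← e_mul_a, ← mul_assoc, e_mul_ne h, zero_mul]
      exact zero_mem _
  · change path K d k * Γ.a K d' ∈ Γ.pathSpan K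
    by_cases h : d' = Γ.next^[k] d
    · rcases hk'.lt_or_eq with h' | h'
      · rw [h, ← path_succ]
        exact path_mem_pathSpan k.succ_pos h'
      · rw [h, h', iterate_len, path_len_mul_a]
        exact zero_mem _
    · rw [path_mul_a hk h]
      exact zero_mem _

theorem mul_toAlg_mem_pathSpan (x : FreeAlgebra K Γ.Gen) {z : Γ.Alg K} (hz : z ∈ Γ.pathSpan K) :
    z * Γ.toAlg K x ∈ Γ.pathSpan K := by
  induction x using FreeAlgebra.induction generalizing z with
  | grade0 r =>
    rw [AlgHom.commutes, ← Algebra.commutes, ← Algebra.smul_def]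
    exact Submodule.smul_mem _ _ hz
  | grade1 g =>
    cases g with
    | vertex j => exact mul_e_mem_pathSpan hz j
    | arrow d => exact mul_a_mem_pathSpan hz d
  | mul x y hx hy =>
    rw [map_mul, ← mul_assoc]
    exact hy (hx hz)
  | add x y hx hy =>
    rw [map_add, mul_add]
    exact add_mem (hx hz) (hy hz)

theorem pathSpan_eq_top : Γ.pathSpan K = ⊤ := by
  refine Submodule.eq_top_iff'.2 fun z => ?_
  obtain ⟨x, rfl⟩ := toAlg_surjective z
  have one_mem : (1 : Γ.Alg K) ∈ Γ.pathSpan K := by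
    rw [← sum_e]
    exact sum_mem fun i _ => e_mem_pathSpan i
  simpa only [one_mul] using mul_toAlg_mem_pathSpan x one_mem

theorem e_mul_mul_e_mem {p q : Γ.Edge} (N : Submodule K (Γ.Alg K)) (he : p = q → Γ.e K p ∈ N)
    (hpath : ∀ d k, 0 < k → k ≤ Γ.len d → Γ.edge d = p → Γ.edge (Γ.next^[k] d) = q →
      path K d k ∈ N) (z : Γ.Alg K) : Γ.e K p * z * Γ.e K q ∈ N := by
  suffices h : Γ.pathSpan K ≤
      N.comap (LinearMap.mulRight K (Γ.e K q) ∘ₗ LinearMap.mulLeft K (Γ.e K p)) from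
    h (pathSpan_eq_top.ge Submodule.mem_top : z ∈ _)
  refine Submodule.span_le.2 ?_
  rintro _ (⟨i, rfl⟩ | ⟨d, k, hk, hk', rfl⟩)
  · change Γ.e K p * Γ.e K i * Γ.e K q ∈ N
    by_cases hp : p = i
    · subst hp
      by_cases hq : p = q
      · rw [e_mul_self, ← hq, e_mul_self]
        exact he hq
      · rw [e_mul_self, e_mul_ne hq]
        exact zero_mem _
    · rw [e_mul_ne hp, zero_mul]
      exact zero_mem _
  · change Γ.e K p * path K d k * Γ.e K q ∈ N
    by_cases hp : p = Γ.edge d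
    · subst hp
      by_cases hq : Γ.edge (Γ.next^[k] d) = q
      · rw [e_mul_path hk, ← hq, path_mul_e hk]
        exact hpath d k hk hk' rfl hq
      · rw [e_mul_path hk, ← path_mul_e hk, mul_assoc, e_mul_ne hq, mul_zero]
        exact zero_mem _
    · rw [← e_mul_path hk, ← mul_assoc, e_mul_ne hp, zero_mul, zero_mul]
      exact zero_mem _

theorem exists_e_mul_mul_e_eq_smul_path {d : Γ.Arrow} {k : ℕ} (hk : 0 < k) (hk' : k ≤ Γ.len d)
    (hne : Γ.edge d ≠ Γ.edge (Γ.next^[k] d)) (z : Γ.Alg K) :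
    ∃ r : K, Γ.e K (Γ.edge d) * z * Γ.e K (Γ.edge (Γ.next^[k] d)) = r • path K d k := by
  suffices h : Γ.e K (Γ.edge d) * z * Γ.e K (Γ.edge (Γ.next^[k] d)) ∈
      Submodule.span K {path K d k} from
    (Submodule.mem_span_singleton.1 h).imp fun _ h => h.symm
  refine e_mul_mul_e_mem _ (fun h => absurd h hne) (fun d' k' hl hl' hd hd' => ?_) z
  have hf : d'.fst = d.fst := by
    refine eq_of_inc hne (inc_edge_fst d) ?_ ?_ ?_
    · rw [← iterate_fst d k]
      exact inc_edge_fst _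
    · exact hd ▸ inc_edge_fst d'
    · rw [← hd', ← iterate_fst d' k']
      exact inc_edge_fst _
  obtain ⟨rfl, rfl⟩ := edge_iterate_inj hf hl hl' hk hk' hd hd'
  exact Submodule.mem_span_singleton_self _

theorem exists_e_mul_mul_e_eq_smul_e_add_smul_path (d : Γ.Arrow) (z : Γ.Alg K) :
    ∃ r s : K, Γ.e K (Γ.edge d) * z * Γ.e K (Γ.edge d) =
      r • Γ.e K (Γ.edge d) + s • path K d (Γ.len d) := by
  suffices h : Γ.e K (Γ.edge d) * z * Γ.e K (Γ.edge d) ∈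
      Submodule.span K {Γ.e K (Γ.edge d), path K d (Γ.len d)} from
    (Submodule.mem_span_pair.1 h).imp fun _ ⟨s, h⟩ => ⟨s, h.symm⟩
  refine e_mul_mul_e_mem _ (fun _ => Submodule.subset_span (Set.mem_insert _ _))
    (fun d' k hk hk' hd hd' => Submodule.subset_span (Or.inr ?_)) z
  have hiter : Γ.next^[k] d' = d' :=
    dart_eq_of_fst_eq (iterate_fst d' k) (hd'.trans hd.symm)
  obtain rfl := iterate_inj_of_pos hk hk' (len_pos d') le_rfl (hiter.trans (iterate_len d').symm)
  rcases edge_eq_iff.1 hd with rfl | rfl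
  · rfl
  · exact (path_len d).symm

theorem e_mul_mul_e_eq_zero {p q : Γ.Edge} (h : ∀ c, ¬ (Γ.Inc p c ∧ Γ.Inc q c)) (z : Γ.Alg K) :
    Γ.e K p * z * Γ.e K q = 0 := by
  refine (Submodule.mem_bot K).1 (e_mul_mul_e_mem ⊥ ?_ ?_ z)
  · rintro rfl
    obtain ⟨d, rfl⟩ := exists_dart_edge p
    exact absurd ⟨inc_edge_fst d, inc_edge_fst d⟩ (h d.fst)
  · rintro d k - - rfl rfl
    refine absurd ⟨inc_edge_fst d, ?_⟩ (h d.fst)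
    rw [← iterate_fst d k]
    exact inc_edge_fst _

end Presentation

end BrauerTree

/-! ### Reduction of the Green order modulo `X` -/

namespace BrauerTree

open PowerSeries
open scoped Pointwise

variable {V : Type v} [Finite V] {Γ : BrauerTree V} {K : Type u} [Field K]

section Reduction

variable (Γ K) in
/-- The Green order of the Brauer tree. -/
noncomputable abbrev GreenOrder : NonUnitalSubalgebra K⟦X⟧ (Matrix Γ.Edge Γ.Edge (V → K⟦X⟧)) :=
  Order K (id : Γ.Edge → Γ.Edge)

variable (K) in
/-- A morphism from `p` to `q`, as an element of the Green order. -/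
noncomputable def ofLam (p q : Γ.Edge) : Γ.Lam K p q →ₗ[K⟦X⟧] Γ.GreenOrder K where
  toFun x := ⟨Matrix.single p q x, single_mem_matLam (src := id) (mid := id) x.2⟩
  map_add' x y := Subtype.ext (Matrix.single_add p q (x : V → K⟦X⟧) y)
  map_smul' r x := Subtype.ext (Matrix.smul_single r p q (x : V → K⟦X⟧)).symm

/-- The composition of morphisms of the order. -/
noncomputable def Lam.comp {p q r : Γ.Edge} (x : Γ.Lam K p q) (y : Γ.Lam K q r) : Γ.Lam K p r :=
  ⟨x * y, mul_mem_Lam x.2 y.2⟩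

theorem ofLam_mul_ofLam {p q r : Γ.Edge} (x : Γ.Lam K p q) (y : Γ.Lam K q r) :
    ofLam K p q x * ofLam K q r y = ofLam K p r (Lam.comp x y) :=
  Subtype.ext (Matrix.single_mul_single_same (x : V → K⟦X⟧) p q r y)

theorem ofLam_mul_ofLam_of_ne {p q q' r : Γ.Edge} (h : q ≠ q') (x : Γ.Lam K p q)
    (y : Γ.Lam K q' r) : ofLam K p q x * ofLam K q' r y = 0 :=
  Subtype.ext (Matrix.single_mul_single_of_ne (x : V → K⟦X⟧) p q q' h y)

theorem sum_sum_ofLam (M : Γ.GreenOrder K) : ∑ p, ∑ q, ofLam K p q ⟨_, M.2 p q⟩ = M := by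
  refine Subtype.ext ?_
  simp only [AddSubmonoidClass.coe_finsetSum]
  exact Matrix.sum_sum_single _

theorem sum_ofLam_oneAt : ∑ p, ofLam K p p ⟨_, oneAt_mem p⟩ = (1 : Γ.GreenOrder K) := by
  refine Subtype.ext ?_
  simp only [AddSubmonoidClass.coe_finsetSum]
  exact Matrix.sum_single_eq_diagonal _

instance : ((X : K⟦X⟧) • (⊤ : Ideal (Γ.GreenOrder K))).IsTwoSided where
  mul_mem_of_left y hx := by
    obtain ⟨z, -, rfl⟩ := (Submodule.mem_smul_pointwise_iff_exists ..).1 hx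
    exact (Submodule.mem_smul_pointwise_iff_exists ..).2
      ⟨z * y, Submodule.mem_top, (smul_mul_assoc _ _ _).symm⟩

variable (Γ K) in
/-- The reduction of the Green order modulo `X`. -/
noncomputable abbrev Reduction : Type (max u v) :=
  Γ.GreenOrder K ⧸ ((X : K⟦X⟧) • (⊤ : Ideal (Γ.GreenOrder K)))

variable (K) in
/-- The class of a morphism from `p` to `q` in the reduction of the Green order. -/
noncomputable def red (p q : Γ.Edge) : Γ.Lam K p q →ₗ[K] Γ.Reduction K :=
  (Ideal.Quotient.mkₐ K _).toLinearMap ∘ₗ (ofLam K p q).restrictScalars K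

theorem mk_eq_sum_sum_red (M : Γ.GreenOrder K) :
    Ideal.Quotient.mk _ M = ∑ p, ∑ q, red K p q ⟨_, M.2 p q⟩ := by
  conv_lhs => rw [← sum_sum_ofLam M]
  refine (map_sum (Ideal.Quotient.mkₐ K _) _ _).trans (Finset.sum_congr rfl fun p _ => ?_)
  exact map_sum (Ideal.Quotient.mkₐ K _) _ _

theorem red_mul_red {p q r : Γ.Edge} (x : Γ.Lam K p q) (y : Γ.Lam K q r) :
    red K p q x * red K q r y = red K p r (Lam.comp x y) := by
  rw [red, red, red]
  exact (map_mul (Ideal.Quotient.mkₐ K _) _ _).symm.trans (congrArg _ (ofLam_mul_ofLam x y))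

theorem red_mul_red_of_ne {p q q' r : Γ.Edge} (h : q ≠ q') (x : Γ.Lam K p q)
    (y : Γ.Lam K q' r) : red K p q x * red K q' r y = 0 :=
  (map_mul (Ideal.Quotient.mkₐ K _) _ _).symm.trans
    ((congrArg _ (ofLam_mul_ofLam_of_ne h x y)).trans (map_zero _))

theorem red_eq_zero_iff {p q : Γ.Edge} {x : Γ.Lam K p q} :
    red K p q x = 0 ↔ ∃ y : Γ.Lam K p q, (X : K⟦X⟧) • y = x := by
  have h : red K p q x = 0 ↔ ofLam K p q x ∈ (X : K⟦X⟧) • (⊤ : Ideal (Γ.GreenOrder K)) :=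
    Ideal.Quotient.eq_zero_iff_mem
  rw [h, Submodule.mem_smul_pointwise_iff_exists]
  constructor
  · rintro ⟨M, -, hM⟩
    refine ⟨⟨_, M.2 p q⟩, Subtype.ext ?_⟩
    have := congrFun (congrFun (congrArg Subtype.val hM) p) q
    exact this.trans (Matrix.single_apply_same p q (x : V → K⟦X⟧))
  · rintro ⟨y, rfl⟩
    exact ⟨ofLam K p q y, Submodule.mem_top, (map_smul (ofLam K p q) _ _).symm⟩

theorem red_smul {p q : Γ.Edge} (r : K⟦X⟧) (x : Γ.Lam K p q) :
    red K p q (r • x) = constantCoeff r • red K p q x := by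
  rw [← sub_eq_zero, ← map_smul, ← map_sub, red_eq_zero_iff]
  obtain ⟨s, hs⟩ := X_dvd_iff.2 (show constantCoeff (r - C (constantCoeff r)) = 0 by simp)
  refine ⟨s • x, ?_⟩
  rw [smul_smul, ← hs, sub_smul, ← algebraMap_smul K⟦X⟧ (constantCoeff r) x, algebraMap_eq]

end Reduction

end BrauerTree

namespace BrauerTree

open PowerSeries

variable {V : Type v} [Finite V] {Γ : BrauerTree V} {K : Type u} [Field K]

section ReductionEquiv

variable [DecidableEq V]

open Classical in
variable (K) in
/-- The class of the path from `p` to `q` around the vertex `c` in the reduction of the order. The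
value `0` at edges without the end point `c` lets `c`, `p` and `q` be rewritten freely. -/
noncomputable def redArc (c : V) (p q : Γ.Edge) : Γ.Reduction K :=
  if h : Γ.Inc p c ∧ Γ.Inc q c then red K p q ⟨_, arc_mem h.1 h.2⟩ else 0

theorem redArc_eq {c : V} {p q : Γ.Edge} (hp : Γ.Inc p c) (hq : Γ.Inc q c) :
    redArc K c p q = red K p q ⟨_, arc_mem hp hq⟩ :=
  dif_pos ⟨hp, hq⟩

variable (K) in
/-- The class of the path of length `k` that starts with `d` in the reduction of the order,
for `0 < k ≤ Γ.len d`. -/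
noncomputable def redPath (d : Γ.Arrow) (k : ℕ) : Γ.Reduction K :=
  redArc K d.fst (Γ.edge d) (Γ.edge (Γ.next^[k] d))

theorem redPath_eq (d : Γ.Arrow) (k : ℕ) : redPath K d k =
    red K _ _ ⟨_, arc_mem (inc_edge_fst d) (inc_edge_iterate_fst d k)⟩ :=
  redArc_eq (inc_edge_fst d) (inc_edge_iterate_fst d k)

theorem redPath_mul_redPath_one {d : Γ.Arrow} {k : ℕ} (hk : 0 < k) (hk' : k < Γ.len d) :
    redPath K d k * redPath K (Γ.next^[k] d) 1 = redPath K d (k + 1) := by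
  have hne : Γ.edge d ≠ Γ.edge (Γ.next^[k] d) := fun h =>
    hk.ne (iterate_inj (len_pos d) hk' (dart_eq_of_fst_eq (iterate_fst d k).symm h))
  have hp : Γ.Inc (Γ.edge d) (Γ.next^[k] d).fst := (iterate_fst d k).symm ▸ inc_edge_fst d
  rw [redPath, redPath, redPath, Function.iterate_succ_apply' Γ.next k, ← iterate_fst d k,
    Function.iterate_one, redArc_eq hp (inc_edge_fst _),
    redArc_eq (inc_edge_fst _) (inc_edge_next_fst _),
    redArc_eq hp (inc_edge_next_fst _), red_mul_red]
  exact congrArg _ (Subtype.ext (arc_mul_arc_next hp hne))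

theorem prod_redPath_one {d : Γ.Arrow} {k : ℕ} (hk : 0 < k) (hk' : k ≤ Γ.len d) :
    ((List.range k).map fun l => redPath K (Γ.next^[l] d) 1).prod = redPath K d k := by
  obtain ⟨k, rfl⟩ := Nat.exists_eq_succ_of_ne_zero hk.ne'
  induction k with
  | zero => simp
  | succ k ih =>
    rw [List.range_succ, List.map_append, List.prod_append, ih k.succ_pos (by lia),
      List.map_singleton, List.prod_singleton, redPath_mul_redPath_one k.succ_pos hk']

theorem redPath_one_mul_redPath_one {d d' : Γ.Arrow} (he : Γ.edge d' = Γ.edge (Γ.next d))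
    (h : d' ≠ Γ.next d) : redPath K d 1 * redPath K d' 1 = 0 := by
  have hf : d.fst ≠ d'.fst := fun hf =>
    h (dart_eq_of_fst_eq (hf.symm.trans (Γ.next_fst d).symm) he)
  have hd' : Γ.Inc (Γ.edge (Γ.next d)) d'.fst := he ▸ inc_edge_fst d'
  rw [redPath, redPath, he, Function.iterate_one, redArc_eq (inc_edge_fst d)
    (inc_edge_next_fst d), redArc_eq hd' (inc_edge_next_fst d')]
  refine (red_mul_red _ _).trans ((congrArg _ (Subtype.ext ?_)).trans (map_zero _))
  exact arc_mul_arc_of_ne hf _ _ _ _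

theorem redPath_len (d : Γ.Arrow) : redPath K d (Γ.len d) =
    red K _ _ ⟨_, arc_mem (inc_edge_fst d) (inc_edge_fst d)⟩ := by
  rw [redPath, iterate_len, redArc_eq (inc_edge_fst d) (inc_edge_fst d)]

theorem redPath_len_symm (d : Γ.Arrow) :
    redPath K d (Γ.len d) = redPath K d.symm (Γ.len d.symm) := by
  rw [redPath_len, redPath, iterate_len, edge_symm,
    redArc_eq (c := d.symm.fst) (inc_edge_snd d) (inc_edge_snd d), ← sub_eq_zero, ← map_sub,
    red_eq_zero_iff]
  exact ⟨⟨_, Submodule.smul_mem _ _ (oneAt_mem _)⟩, Subtype.ext (arc_fst_sub_arc_snd d).symm⟩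

variable (Γ K) in
/-- The homomorphism from the free algebra to the reduction of the order that induces the
isomorphism of the latter with the Brauer tree algebra. -/
noncomputable def preReduction : FreeAlgebra K Γ.Gen →ₐ[K] Γ.Reduction K :=
  FreeAlgebra.lift K fun
    | Gen.vertex i => red K i i ⟨_, oneAt_mem i⟩
    | Gen.arrow d => redPath K d 1

theorem preReduction_preVertex (i : Γ.Edge) :
    Γ.preReduction K (Γ.preVertex K i) = red K i i ⟨_, oneAt_mem i⟩ :=
  FreeAlgebra.lift_ι_apply _ _

theorem preReduction_preArrow (d : Γ.Arrow) :
    Γ.preReduction K (Γ.preArrow K d) = redPath K d 1 :=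
  FreeAlgebra.lift_ι_apply _ _

theorem preReduction_preCycle (d : Γ.Arrow) :
    Γ.preReduction K (Γ.preCycle K d) = redPath K d (Γ.len d) := by
  rw [preCycle, map_list_prod, List.map_map, ← prod_redPath_one (len_pos d) le_rfl]
  simp only [Function.comp_def, preReduction_preArrow]
  rfl

theorem preReduction_rel {x y : FreeAlgebra K Γ.Gen} (h : Γ.Rel K x y) :
    Γ.preReduction K x = Γ.preReduction K y := by
  induction h with
  | idem i =>
    rw [map_mul, preReduction_preVertex]
    exact (red_mul_red _ _).trans (congrArg _ (Subtype.ext (oneAt_mul (oneAt_mem i))))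
  | orth i j h =>
    rw [map_mul, preReduction_preVertex, preReduction_preVertex, red_mul_red_of_ne h, map_zero]
  | one =>
    simp only [map_sum, preReduction_preVertex, map_one]
    exact (map_sum (Ideal.Quotient.mkₐ K _) _ _).symm.trans
      ((congrArg _ sum_ofLam_oneAt).trans (map_one _))
  | source d =>
    rw [map_mul, preReduction_preVertex, preReduction_preArrow, redPath_eq]
    exact (red_mul_red _ _).trans (congrArg _ (Subtype.ext
      (oneAt_mul (arc_mem (inc_edge_fst d) (inc_edge_next_fst d)))))
  | target d =>
    rw [map_mul, preReduction_preVertex, preReduction_preArrow, redPath_eq]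
    exact (red_mul_red _ _).trans (congrArg _ (Subtype.ext
      (mul_oneAt (arc_mem (inc_edge_fst d) (inc_edge_next_fst d)))))
  | zero d d' he h =>
    rw [map_mul, preReduction_preArrow, preReduction_preArrow, map_zero,
      redPath_one_mul_redPath_one he h]
  | cycle d => rw [preReduction_preCycle, preReduction_preCycle, redPath_len_symm]

variable (Γ K) in
/-- The homomorphism from the Brauer tree algebra to the reduction of the order. -/
noncomputable def toReduction : Γ.Alg K →ₐ[K] Γ.Reduction K :=
  RingQuot.liftAlgHom K ⟨Γ.preReduction K, fun _ _ => preReduction_rel⟩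

theorem toReduction_toAlg (x : FreeAlgebra K Γ.Gen) :
    Γ.toReduction K (Γ.toAlg K x) = Γ.preReduction K x :=
  RingQuot.liftAlgHom_mkAlgHom_apply ..

theorem toReduction_e (i : Γ.Edge) : Γ.toReduction K (Γ.e K i) = red K i i ⟨_, oneAt_mem i⟩ := by
  rw [e, toReduction_toAlg, preReduction_preVertex]

theorem toReduction_path {d : Γ.Arrow} {k : ℕ} (hk : 0 < k) (hk' : k ≤ Γ.len d) :
    Γ.toReduction K (path K d k) = redPath K d k := by
  rw [path, map_list_prod, List.map_map, ← prod_redPath_one hk hk']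
  simp only [Function.comp_def, a, toReduction_toAlg, preReduction_preArrow]

theorem smul_redPath_eq_zero {d : Γ.Arrow} {k : ℕ} (hne : Γ.edge d ≠ Γ.edge (Γ.next^[k] d))
    {r : K} (h : r • redPath K d k = 0) : r = 0 := by
  rw [redPath_eq, ← map_smul, red_eq_zero_iff] at h
  obtain ⟨y, hy⟩ := h
  obtain ⟨s, hs⟩ :=
    exists_eq_smul_arc hne (inc_edge_fst d) (inc_edge_iterate_fst d k) y.2
  have hrs : (X * s - C r) • Γ.arc K d.fst (Γ.edge d) (Γ.edge (Γ.next^[k] d)) = 0 := by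
    rw [sub_smul, mul_smul, ← hs, sub_eq_zero, ← algebraMap_eq, algebraMap_smul]
    exact congrArg Subtype.val hy
  simpa using congrArg constantCoeff (eq_zero_of_smul_arc_eq_zero hrs)

theorem smul_red_add_smul_redPath_eq_zero {d : Γ.Arrow} {r s : K}
    (h : r • red K _ _ ⟨_, oneAt_mem (Γ.edge d)⟩ + s • redPath K d (Γ.len d) = 0) :
    r = 0 ∧ s = 0 := by
  rw [redPath_len, ← map_smul, ← map_smul, ← map_add, red_eq_zero_iff] at h
  obtain ⟨y, hy⟩ := h
  obtain ⟨t, u, htu⟩ := exists_eq_smul_oneAt_add_smul_arc d y.2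
  have hrs : (X * t - C r) • Γ.oneAt K (Γ.edge d) +
      (X * u - C s) • Γ.arc K d.fst (Γ.edge d) (Γ.edge d) = 0 := by
    rw [sub_smul, sub_smul, ← add_sub_add_comm, mul_smul, mul_smul, ← smul_add, ← htu,
      sub_eq_zero, ← algebraMap_eq, algebraMap_smul, algebraMap_smul]
    exact congrArg Subtype.val hy
  obtain ⟨hr, hs⟩ := eq_zero_of_smul_oneAt_add_smul_arc_eq_zero hrs
  exact ⟨by simpa using congrArg constantCoeff hr, by simpa using congrArg constantCoeff hs⟩

theorem e_mul_mul_e_eq_zero_of_toReduction_eq_zero {z : Γ.Alg K} (hz : Γ.toReduction K z = 0)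
    (p q : Γ.Edge) : Γ.e K p * z * Γ.e K q = 0 := by
  have hcorner : Γ.toReduction K (Γ.e K p * z * Γ.e K q) = 0 := by
    rw [map_mul, map_mul, hz, mul_zero, zero_mul]
  by_cases hpq : p = q
  · obtain ⟨d, rfl⟩ := exists_dart_edge p
    subst hpq
    obtain ⟨r, s, hrs⟩ := exists_e_mul_mul_e_eq_smul_e_add_smul_path d z
    rw [hrs, map_add, map_smul, map_smul, toReduction_e, toReduction_path (len_pos d) le_rfl]
      at hcorner
    obtain ⟨rfl, rfl⟩ := smul_red_add_smul_redPath_eq_zero hcorner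
    rw [hrs, zero_smul, zero_smul, zero_add]
  by_cases h : ∃ c, Γ.Inc p c ∧ Γ.Inc q c
  · obtain ⟨c, hp, hq⟩ := h
    obtain ⟨d, rfl, rfl⟩ := hp.exists_dart
    obtain ⟨d', hf, rfl⟩ := hq.exists_dart
    obtain ⟨k, hk, hk', rfl⟩ := exists_iterate_eq_of_pos hf.symm
    obtain ⟨r, hr⟩ := exists_e_mul_mul_e_eq_smul_path hk hk' hpq z
    rw [hr, map_smul, toReduction_path hk hk'] at hcorner
    rw [hr, smul_redPath_eq_zero hpq hcorner, zero_smul]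
  · exact e_mul_mul_e_eq_zero (not_exists.1 h) z

theorem toReduction_injective : Function.Injective (Γ.toReduction K) := by
  refine (injective_iff_map_eq_zero _).2 fun z hz => ?_
  rw [← sum_sum_e_mul_mul_e z]
  exact Finset.sum_eq_zero fun p _ => Finset.sum_eq_zero fun q _ =>
    e_mul_mul_e_eq_zero_of_toReduction_eq_zero hz p q

theorem red_mem_range_toReduction {p q : Γ.Edge} (x : Γ.Lam K p q) :
    red K p q x ∈ (Γ.toReduction K).range := by
  by_cases hpq : p = q
  · obtain ⟨d, rfl⟩ := exists_dart_edge p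
    subst hpq
    obtain ⟨r, s, hrs⟩ := exists_eq_smul_oneAt_add_smul_arc d x.2
    have hx : x = r • ⟨_, oneAt_mem _⟩ + s • ⟨_, arc_mem (inc_edge_fst d) (inc_edge_fst d)⟩ :=
      Subtype.ext hrs
    rw [hx, map_add, red_smul, red_smul, ← redPath_len, ← toReduction_e,
      ← toReduction_path (len_pos d) le_rfl]
    exact add_mem (Subalgebra.smul_mem _ (AlgHom.mem_range_self _ _) _)
      (Subalgebra.smul_mem _ (AlgHom.mem_range_self _ _) _)
  by_cases h : ∃ c, Γ.Inc p c ∧ Γ.Inc q c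
  · obtain ⟨c, hp, hq⟩ := h
    obtain ⟨d, rfl, rfl⟩ := hp.exists_dart
    obtain ⟨d', hf, rfl⟩ := hq.exists_dart
    obtain ⟨k, hk, hk', rfl⟩ := exists_iterate_eq_of_pos hf.symm
    obtain ⟨r, hr⟩ := exists_eq_smul_arc hpq hp hq x.2
    have hx : x = r • ⟨_, arc_mem hp hq⟩ := Subtype.ext hr
    rw [hx, red_smul, ← redPath_eq, ← toReduction_path hk hk']
    exact Subalgebra.smul_mem _ (AlgHom.mem_range_self _ _) _
  · have hx : x = 0 := Subtype.ext (funext fun c => x.2.1 c (not_exists.1 h c))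
    rw [hx, map_zero]
    exact zero_mem _

theorem toReduction_surjective : Function.Surjective (Γ.toReduction K) := by
  intro y
  obtain ⟨M, rfl⟩ := Ideal.Quotient.mk_surjective y
  change Ideal.Quotient.mk _ M ∈ (Γ.toReduction K).range
  rw [mk_eq_sum_sum_red]
  exact sum_mem fun p _ => sum_mem fun q _ => red_mem_range_toReduction _

variable (Γ K) in
/-- The reduction of the Green order modulo `X` is the Brauer tree algebra. -/
noncomputable def reductionEquiv : Γ.Alg K ≃ₐ[K] Γ.Reduction K :=
  AlgEquiv.ofBijective (Γ.toReduction K) ⟨toReduction_injective, toReduction_surjective⟩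

end ReductionEquiv

section Theta

variable {p q r : Γ.Edge}

open Classical in
variable (Γ K) in
/-- The morphisms from `p` to `q` in the Green order, mapped to `e p * A * e q`. -/
noncomputable def theta (p q : Γ.Edge) : Γ.Lam K p q →ₗ[K] Γ.Alg K :=
  (Γ.reductionEquiv K).symm.toLinearMap ∘ₗ red K p q

theorem theta_comp (x : Γ.Lam K p q) (y : Γ.Lam K q r) :
    Γ.theta K p r (Lam.comp x y) = Γ.theta K p q x * Γ.theta K q r y := by
  classical
  exact (congrArg (Γ.reductionEquiv K).symm (red_mul_red x y).symm).trans (map_mul _ _ _)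

theorem theta_oneAt (p : Γ.Edge) : Γ.theta K p p ⟨_, oneAt_mem p⟩ = Γ.e K p := by
  classical
  exact (Γ.reductionEquiv K).symm_apply_eq.2 (toReduction_e p).symm

theorem theta_eq_zero_iff {x : Γ.Lam K p q} :
    Γ.theta K p q x = 0 ↔ ∃ y : Γ.Lam K p q, (X : K⟦X⟧) • y = x := by
  classical
  exact (map_eq_zero_iff _ (Γ.reductionEquiv K).symm.injective).trans red_eq_zero_iff

theorem e_mul_theta (x : Γ.Lam K p q) : Γ.e K p * Γ.theta K p q x = Γ.theta K p q x := by
  rw [← theta_oneAt, ← theta_comp]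
  exact congrArg _ (Subtype.ext (oneAt_mul x.2))

theorem theta_mul_e (x : Γ.Lam K p q) : Γ.theta K p q x * Γ.e K q = Γ.theta K p q x := by
  rw [← theta_oneAt, ← theta_comp]
  exact congrArg _ (Subtype.ext (mul_oneAt x.2))

theorem exists_theta_eq (p q : Γ.Edge) (z : Γ.Alg K) :
    ∃ x, Γ.theta K p q x = Γ.e K p * z * Γ.e K q := by
  classical
  obtain ⟨M, hM⟩ := Ideal.Quotient.mk_surjective (Γ.reductionEquiv K z)
  refine ⟨⟨_, M.2 p q⟩, (Γ.reductionEquiv K).symm_apply_eq.2 ?_⟩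
  have corner : ofLam K p p ⟨_, oneAt_mem p⟩ * M * ofLam K q q ⟨_, oneAt_mem q⟩ =
      ofLam K p q ⟨_, M.2 p q⟩ := by
    refine Subtype.ext ((Matrix.single_mul_mul_single p p q q _ M.1 _).trans (congrArg _ ?_))
    exact (congrArg (· * Γ.oneAt K q) (oneAt_mul (M.2 p q))).trans (mul_oneAt (M.2 p q))
  rw [map_mul, map_mul, ← hM]
  refine (congrArg (Ideal.Quotient.mk _) corner.symm).trans ?_
  rw [map_mul, map_mul]
  exact congrArg₂ _ (congrArg (· * _) (toReduction_e p).symm) (toReduction_e q).symm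

end Theta

section Cycles

theorem path_ne_zero {d : Γ.Arrow} {k : ℕ} (hk : 0 < k) (hk' : k ≤ Γ.len d) : path K d k ≠ 0 := by
  classical
  intro h
  have redPath_eq_zero : redPath K d k = 0 := by rw [← toReduction_path hk hk', h, map_zero]
  rcases hk'.lt_or_eq with hlt | rfl
  · have hne : Γ.edge d ≠ Γ.edge (Γ.next^[k] d) := fun he =>
      hk.ne (iterate_inj (len_pos d) hlt (dart_eq_of_fst_eq (iterate_fst d k).symm he))
    exact one_ne_zero (smul_redPath_eq_zero hne ((one_smul K _).trans redPath_eq_zero))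
  · refine one_ne_zero (smul_red_add_smul_redPath_eq_zero (K := K) (d := d) (r := 0) ?_).2
    rw [zero_smul, zero_add, one_smul, redPath_eq_zero]

theorem a_mul_a_ne_zero {d : Γ.Arrow} (h : 2 ≤ Γ.len d) : Γ.a K d * Γ.a K (Γ.next d) ≠ 0 := by
  have path_two_ne_zero := path_ne_zero (K := K) (k := 1 + 1) two_pos h
  rwa [path_succ d 1, path_one] at path_two_ne_zero

variable (Γ) in
/-- The arrows of the cycle through `d`, starting with `d`. -/
noncomputable def cycleList (d : Γ.Arrow) : List Γ.Arrow :=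
  (List.range (Γ.len d)).map fun k => Γ.next^[k] d

theorem mem_cycleList {d d' : Γ.Arrow} : d' ∈ Γ.cycleList d ↔ d'.fst = d.fst := by
  simp only [cycleList, List.mem_map, List.mem_range]
  constructor
  · rintro ⟨k, -, rfl⟩
    exact iterate_fst d k
  · intro h
    exact exists_iterate_eq h.symm

theorem memCycle_cycleList {d : Γ.Arrow} {i : Γ.Edge} :
    MemCycle i (Γ.cycleList d) ↔ Γ.Inc i d.fst := by
  constructor
  · rintro ⟨d', h, rfl⟩
    rw [← mem_cycleList.1 h]
    exact inc_edge_fst d'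
  · intro h
    obtain ⟨d', hf, rfl⟩ := h.exists_dart
    exact ⟨d', mem_cycleList.2 hf, rfl⟩

theorem isNonzeroSeq_cycleList (d : Γ.Arrow) : Γ.IsNonzeroSeq K (Γ.cycleList d) := by
  refine ⟨?_, ?_, ?_⟩
  · have := len_pos d
    simp [cycleList, this.ne']
  · refine List.Nodup.map_on ?_ List.nodup_range
    intro k hk l hl h
    exact iterate_inj (List.mem_range.1 hk) (List.mem_range.1 hl) h
  · rw [List.isChain_iff_getElem]
    intro i hi
    simp only [cycleList, List.length_map, List.length_range] at hi
    simp only [cycleList, List.getElem_map, List.getElem_range, Function.iterate_succ_apply']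
    refine a_mul_a_ne_zero ?_
    rw [len_iterate]
    omega

theorem IsNonzeroSeq.exists_eq {C : List Γ.Arrow} (hC : Γ.IsNonzeroSeq K C) :
    ∃ d, C = (List.range C.length).map (fun k => Γ.next^[k] d) ∧ C.length ≤ Γ.len d := by
  obtain ⟨hne, hnd, hch⟩ := hC
  have hpos : 0 < C.length := List.length_pos_iff.2 hne
  rw [List.isChain_iff_getElem] at hch
  have key : ∀ k (hk : k < C.length), C[k] = Γ.next^[k] C[0] := by
    intro k
    induction k with
    | zero => intro _; rfl
    | succ k ih =>
      intro hk
      rw [Function.iterate_succ_apply', ← ih (by omega)]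
      by_contra h
      exact hch k hk (a_mul_a_eq_zero h)
  refine ⟨C[0], ?_, ?_⟩
  · apply List.ext_getElem
    · simp
    · intro n hn hn'
      simp [key n hn]
  · by_contra h
    push Not at h
    have hfirst : C[Γ.len C[0]] = C[0] := by rw [key _ h, iterate_len]
    have := (List.Nodup.getElem_inj_iff hnd).1 hfirst
    exact (len_pos C[0]).ne' this

theorem isACycle_cycleList (d : Γ.Arrow) : Γ.IsACycle K (Γ.cycleList d) := by
  refine ⟨isNonzeroSeq_cycleList d, fun C hC h => ?_⟩
  obtain ⟨d', hrot, hlen⟩ := hC.exists_eq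
  have hd : d ∈ C := h.subset (mem_cycleList.2 rfl)
  rw [hrot] at hd
  obtain ⟨k, -, rfl⟩ := List.mem_map.1 hd
  refine (h.eq_of_length_le ?_).symm
  simpa [cycleList, len_iterate] using hlen

theorem IsACycle.exists_eq {C : List Γ.Arrow} (hC : Γ.IsACycle K C) :
    ∃ d, C = Γ.cycleList d := by
  obtain ⟨d, hrot, hlen⟩ := hC.1.exists_eq
  refine ⟨d, (hC.2 _ (isNonzeroSeq_cycleList d) ?_).symm⟩
  apply List.IsPrefix.isInfix
  rw [hrot]
  apply List.IsPrefix.map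
  rw [List.prefix_iff_eq_take]
  simp [List.take_range, hlen]

end Cycles

end BrauerTree

/-! ### Eigenvalues and representations -/

section LinearAlgebra

open Matrix

variable {K : Type*} [Field K]

theorem exists_common_eigenvector {U : Type*} [AddCommGroup U] [Module K U] [FiniteDimensional K U]
    [Nontrivial U] (Z : Subalgebra K (Module.End K U))
    (hZ : ∀ z ∈ Z, ∃ r : K, IsNilpotent (z - algebraMap K _ r)) :
    ∃ u : U, u ≠ 0 ∧ ∀ z ∈ Z, ∀ r : K, IsNilpotent (z - algebraMap K _ r) → z u = r • u := by
  have : IsArtinian Z U := isArtinian_of_tower K inferInstance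
  obtain ⟨W, hW⟩ := IsAtomic.exists_atom (Submodule Z U)
  obtain ⟨u, huW, hu⟩ := (Submodule.ne_bot_iff W).1 hW.1
  have eq_zero_of_isNilpotent (z : Module.End K U) (hz : z ∈ Z) (hnil : IsNilpotent z) :
      z u = 0 := by
    by_contra hzu
    have hspan : Submodule.span Z {z u} = W := by
      refine (hW.le_iff.1 ?_).resolve_left (by simpa using hzu)
      exact Submodule.span_le.2 (Set.singleton_subset_iff.2 (W.smul_mem ⟨z, hz⟩ huW))
    obtain ⟨z', hz'⟩ := Submodule.mem_span_singleton.1 (hspan ▸ huW)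
    have hfix : (z'.1 * z) u = u := hz'
    obtain ⟨r, hr⟩ := hZ (z'.1 * z) (mul_mem z'.2 hz)
    have hr0 : r = 0 := by
      by_contra h
      have hunit : IsUnit (z'.1 * z) := by
        have := hr.isUnit_add_left_of_commute ((IsUnit.mk0 r h).map (algebraMap K (Module.End K U)))
          (Algebra.commutes r _).symm
        rwa [add_sub_cancel] at this
      obtain ⟨n, hn⟩ := hnil
      have hdet : LinearMap.det z = 0 :=
        eq_zero_of_pow_eq_zero (n := n) (by rw [← map_pow, hn, LinearMap.det_zero''])
      apply (LinearMap.isUnit_det _ hunit).ne_zero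
      rw [map_mul, hdet, mul_zero]
    obtain ⟨n, hn⟩ := hr
    rw [hr0, map_zero, sub_zero] at hn
    apply hu
    have hfixn : ((z'.1 * z) ^ n) u = u := by
      rw [Module.End.pow_apply]
      exact Function.iterate_fixed hfix n
    rw [← hfixn, hn, LinearMap.zero_apply]
  refine ⟨u, hu, fun z hz r hr => ?_⟩
  have := eq_zero_of_isNilpotent _ (sub_mem hz (Subalgebra.algebraMap_mem Z r)) hr
  rwa [LinearMap.sub_apply, Module.algebraMap_end_apply, sub_eq_zero] at this

theorem exists_trace_vecMulVec_mul_eq {n E : Type*} [Fintype n] [DecidableEq n] [Nonempty n]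
    [Ring E] [Algebra K E] (ρ : E →ₐ[K] Matrix n n K) (lam : E → K)
    (hlam : ∀ z, IsNilpotent (ρ z - algebraMap K _ (lam z))) :
    ∃ v w : n → K, w ⬝ᵥ v = 1 ∧ ∀ z, (vecMulVec v w * ρ z).trace = lam z := by
  let φ : E →ₐ[K] Module.End K (n → K) := (toLinAlgEquiv' (R := K)).toAlgHom.comp ρ
  have hφ (z : E) : IsNilpotent (φ z - algebraMap K _ (lam z)) := by
    have := (hlam z).map (toLinAlgEquiv' (R := K) (n := n))
    rwa [map_sub, AlgEquiv.commutes] at this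
  obtain ⟨v, hv, heig⟩ := exists_common_eigenvector φ.range (by
    rintro _ ⟨z, rfl⟩
    exact ⟨lam z, hφ z⟩)
  have heigenvector (z : E) : ρ z *ᵥ v = lam z • v := heig _ ⟨z, rfl⟩ _ (hφ z)
  obtain ⟨i, hi⟩ := Function.ne_iff.1 hv
  have hw : Pi.single i (v i)⁻¹ ⬝ᵥ v = 1 := by
    rw [single_dotProduct, inv_mul_cancel₀ hi]
  refine ⟨v, Pi.single i (v i)⁻¹, hw, fun z => ?_⟩
  rw [trace_mul_comm, mul_vecMulVec, trace_vecMulVec, heigenvector, smul_dotProduct,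
    dotProduct_comm, hw, smul_eq_mul, mul_one]

theorem eq_zero_of_mulVec_eq_smul {n : Type*} [Fintype n] [DecidableEq n] {A : Matrix n n K}
    (hA : IsNilpotent A) {r : K} {v : n → K} (hv : v ≠ 0) (hAv : A *ᵥ v = r • v) : r = 0 := by
  have heig : Module.End.HasEigenvalue (toLinAlgEquiv' A) r :=
    Module.End.hasEigenvalue_of_hasEigenvector ⟨Module.End.mem_eigenspace_iff.2 hAv, hv⟩
  exact (heig.isNilpotent_of_isNilpotent (hA.map (toLinAlgEquiv' (R := K)))).eq_zero

theorem eq_and_card_le_of_isNilpotent_smul_vecMulVec_sub {n : Type*} [Fintype n] [DecidableEq n]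
    {v w : n → K} (hwv : w ⬝ᵥ v = 1) {r s : K} (hr : r ≠ 0)
    (h : IsNilpotent (r • vecMulVec v w - algebraMap K (Matrix n n K) s)) :
    s = r ∧ Fintype.card n ≤ 1 := by
  have hact (u : n → K) : (r • vecMulVec v w - algebraMap K (Matrix n n K) s) *ᵥ u =
      (r * (w ⬝ᵥ u)) • v - s • u := by
    rw [sub_mulVec, smul_mulVec, vecMulVec_mulVec, Algebra.algebraMap_eq_smul_one, smul_mulVec,
      one_mulVec, op_smul_eq_smul, smul_smul]
  have hv : v ≠ 0 := by
    rintro rfl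
    simp at hwv
  have hrs : r - s = 0 := eq_zero_of_mulVec_eq_smul h hv (by rw [hact, hwv, mul_one, sub_smul])
  refine ⟨(sub_eq_zero.1 hrs).symm, not_lt.1 fun hcard => ?_⟩
  obtain ⟨u, hu, hu0⟩ := (Submodule.ne_bot_iff _).1
    ((dotProductEquiv K n w).ker_ne_bot_of_finrank_lt (by simpa using hcard))
  have hwu : w ⬝ᵥ u = 0 := hu
  have hs : -s = 0 := eq_zero_of_mulVec_eq_smul h hu0 (by rw [hact, hwu]; simp)
  exact hr ((sub_eq_zero.1 hrs).trans (neg_eq_zero.1 hs))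

theorem exists_kernel_splitting {R M N : Type*} [CommRing R] [IsDomain R] [IsPrincipalIdealRing R]
    [AddCommGroup M] [Module R M] [Module.Free R M] [Module.Finite R M]
    [AddCommGroup N] [Module R N] [Module.Free R N] [Module.Finite R N] (g : M →ₗ[R] N) :
    ∃ (n : ℕ) (i : (Fin n → R) →ₗ[R] M) (r : M →ₗ[R] Fin n → R),
      Module.finrank R M ≤ n + Module.finrank R N ∧ r ∘ₗ i = LinearMap.id ∧ g ∘ₗ i = 0 ∧
      ∀ u, g u = 0 → i (r u) = u := by
  obtain ⟨σ, hσ⟩ := Module.projective_lifting_property g.rangeRestrict LinearMap.id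
    g.surjective_rangeRestrict
  let b := Module.finBasis R (LinearMap.ker g)
  have hσ' (x) : g (σ x) = x := congrArg Subtype.val (LinearMap.congr_fun hσ x)
  let r : M →ₗ[R] LinearMap.ker g :=
    (LinearMap.id - σ ∘ₗ g.rangeRestrict).codRestrict _ fun u => by simp [hσ']
  have hr (u : LinearMap.ker g) : r u = u := Subtype.ext <| by
    have : g.rangeRestrict u = 0 := Subtype.ext u.2
    simp [r, this]
  refine ⟨_, (LinearMap.ker g).subtype ∘ₗ b.equivFun.symm.toLinearMap, b.equivFun.toLinearMap ∘ₗ r,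
    ?_, ?_, ?_, fun u hu => ?_⟩
  · rw [← (LinearMap.ker g).finrank_quotient_add_finrank, add_comm,
      g.quotKerEquivRange.finrank_eq]
    exact Nat.add_le_add_left (Submodule.finrank_le _) _
  · refine LinearMap.ext fun x => ?_
    change b.equivFun (r (b.equivFun.symm x)) = x
    rw [hr, LinearEquiv.apply_symm_apply]
  · refine LinearMap.ext fun x => ?_
    simp
  · simpa using congrArg Subtype.val (hr ⟨u, hu⟩)

section CoordProj

variable {R ι : Type*} [CommRing R] [DecidableEq ι] {P : ι → Prop} [DecidablePred P]

variable (R P) in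
/-- The diagonal projection onto the coordinates that satisfy `P`. -/
def coordProj : Matrix ι ι R := diagonal fun p => if P p then 1 else 0

theorem coordProj_mulVec_apply [Fintype ι] (u : ι → R) (p : ι) :
    (coordProj R P *ᵥ u) p = if P p then u p else 0 := by
  rw [coordProj, mulVec_diagonal, ite_mul, one_mul, zero_mul]

theorem coordProj_transpose : (coordProj R P)ᵀ = coordProj R P := diagonal_transpose _

end CoordProj

section Splitting

variable {R : Type*} [CommRing R] [IsDomain R] [IsPrincipalIdealRing R] {ι κ : Type*} [Fintype ι]
  [DecidableEq ι] [Fintype κ] [DecidableEq κ] {P : ι → Prop} {Q : κ → Prop} [DecidablePred P]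
  [DecidablePred Q]

theorem exists_kernel_splitting_matrix {F : Matrix κ ι R}
    (hF : coordProj R Q * F = F) :
    ∃ (n : ℕ) (C : Matrix ι (Fin n) R) (C' : Matrix (Fin n) ι R),
      Finset.card {p | P p} ≤ n + Finset.card {q | Q q} ∧ C' * C = 1 ∧ F * C = 0 ∧
      coordProj R P * C = C ∧
      C' * coordProj R P = C' ∧
      ∀ U : Matrix ι (Fin n) R, coordProj R P * U = U → F * U = 0 →
        C * (C' * U) = U := by
  let G : (ι → R) →ₗ[R] ({q // Q q} → R) × ({p // ¬ P p} → R) :=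
    (LinearMap.funLeft R R Subtype.val ∘ₗ F.mulVecLin).prod (LinearMap.funLeft R R Subtype.val)
  have hG (u : ι → R) : G u = 0 ↔ F *ᵥ u = 0 ∧ ∀ p, ¬ P p → u p = 0 := by
    have hsupp (q : κ) (hq : ¬ Q q) : (F *ᵥ u) q = 0 := by
      rw [← hF, ← mulVec_mulVec, coordProj_mulVec_apply, if_neg hq]
    simp only [G, LinearMap.prod_apply, Function.prod, Prod.mk_eq_zero, funext_iff, Subtype.forall,
      LinearMap.funLeft_apply, LinearMap.comp_apply, mulVecLin_apply, Pi.zero_apply]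
    exact and_congr_left' ⟨fun h q => (em (Q q)).elim (h q) (hsupp q), fun h q _ => h q⟩
  obtain ⟨n, i, r, hn, hri, hGi, hker⟩ := exists_kernel_splitting G
  have hi (v : Fin n → R) := (hG (i v)).1 (LinearMap.congr_fun hGi v)
  have hEC : coordProj R P * i.toMatrix' = i.toMatrix' := by
    refine ext_of_mulVec_single fun k => funext fun p => ?_
    rw [← mulVec_mulVec, coordProj_mulVec_apply, LinearMap.toMatrix'_mulVec]
    split_ifs with hp
    · rfl
    · rw [(hi _).2 p hp]
  have hE : coordProj R P * coordProj R P = coordProj R P := by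
    simp [coordProj, diagonal_mul_diagonal]
  refine ⟨n, i.toMatrix', r.toMatrix' * coordProj R P, ?_, ?_, ?_, hEC, ?_, fun U hU hFU => ?_⟩
  · have hcard := Fintype.card_subtype_compl P
    have hle := Fintype.card_subtype_le P
    simp only [Module.finrank_prod, Module.finrank_pi] at hn
    rw [← Fintype.card_subtype, ← Fintype.card_subtype]
    lia
  · rw [Matrix.mul_assoc, hEC, ← LinearMap.toMatrix'_comp, hri, LinearMap.toMatrix'_id]
  · refine ext_of_mulVec_single fun k => ?_
    rw [← mulVec_mulVec, LinearMap.toMatrix'_mulVec, (hi _).1, zero_mulVec]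
  · rw [Matrix.mul_assoc, hE]
  · rw [Matrix.mul_assoc, hU]
    refine ext_of_mulVec_single fun k => ?_
    rw [← mulVec_mulVec, ← mulVec_mulVec, LinearMap.toMatrix'_mulVec, LinearMap.toMatrix'_mulVec]
    refine hker _ ((hG _).2 ⟨by rw [mulVec_mulVec, hFU, zero_mulVec], fun p hp => ?_⟩)
    rw [← hU, ← mulVec_mulVec, coordProj_mulVec_apply, if_neg hp]

theorem exists_cokernel_splitting_matrix {F : Matrix ι κ R}
    (hF : F * coordProj R Q = F) :
    ∃ (n : ℕ) (B : Matrix (Fin n) ι R) (B' : Matrix ι (Fin n) R),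
      Finset.card {p | P p} ≤ n + Finset.card {q | Q q} ∧ B * B' = 1 ∧ B * F = 0 ∧
      B * coordProj R P = B ∧
      coordProj R P * B' = B' ∧
      ∀ U : Matrix (Fin n) ι R, U * coordProj R P = U → U * F = 0 →
        U * B' * B = U := by
  obtain ⟨n, C, C', hn, hC, hFC, hEC, hCE, hker⟩ :=
    exists_kernel_splitting_matrix (P := P) (Q := Q) (F := Fᵀ)
      (by rw [← coordProj_transpose, ← transpose_mul, hF])
  refine ⟨n, Cᵀ, C'ᵀ, hn, ?_, ?_, ?_, ?_, fun U hU hUF => ?_⟩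
  · rw [← transpose_mul, hC, transpose_one]
  · rw [← transpose_transpose F, ← transpose_mul, hFC, transpose_zero]
  · rw [← coordProj_transpose, ← transpose_mul, hEC]
  · rw [← coordProj_transpose, ← transpose_mul, hCE]
  · rw [← transpose_inj, transpose_mul, transpose_mul, transpose_transpose, transpose_transpose]
    refine hker _ ?_ ?_
    · rw [← coordProj_transpose, ← transpose_mul, hU]
    · rw [← transpose_mul, hUF, transpose_zero]

end Splitting

theorem mul_smul_mul_eq_smul {R m n : Type*} [CommRing R] [Fintype m] [Fintype n] [DecidableEq n]
    {B : Matrix n m R} {B' : Matrix m n R} (h : B * B' = 1) (r : R) (M : Matrix n n R) :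
    B * (r • (B' * M * B)) * B' = r • M := by
  rw [Matrix.mul_smul, Matrix.smul_mul, Matrix.mul_assoc, Matrix.mul_assoc, h,
    ← Matrix.mul_assoc, ← Matrix.mul_assoc, h, Matrix.one_mul, Matrix.mul_one]

/-- The representation on a direct summand, cut out by `B` and `B'`, of a representation that
preserves it or its complement. -/
def compression {R A m n : Type*} [CommRing R] [Ring A] [Algebra R A] [Fintype m] [Fintype n]
    [DecidableEq n] (ε : A →ₙₐ[R] Matrix m m R) (B : Matrix n m R) (B' : Matrix m n R)
    (hone : B * ε 1 * B' = 1)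
    (hmul : ∀ z z', B * ε z * B' * (B * ε z' * B') = B * (ε z * ε z') * B') :
    A →ₐ[R] Matrix n n R :=
  AlgHom.ofLinearMap
    { toFun z := B * ε z * B'
      map_add' := by simp [Matrix.mul_add, Matrix.add_mul]
      map_smul' := by simp }
    hone (fun z z' => by simp [hmul])

end LinearAlgebra

/-! ### The symmetrizing form -/

namespace BrauerTree

open PowerSeries Matrix

variable {V : Type v} [Finite V] {Γ : BrauerTree V} {K : Type u} [Field K]

theorem exists_eq_C_add_X_mul (r : K⟦X⟧) : ∃ s, r = C (constantCoeff r) + X * s := by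
  obtain ⟨s, hs⟩ := X_dvd_iff.2 (show constantCoeff (r - C (constantCoeff r)) = 0 by simp)
  exact ⟨s, by rw [← hs]; ring⟩

section Form

variable [Fintype V]

variable (Γ K) in
/-- The functional on the endomorphisms of the order whose pairing `form (x * y)` induces the
symmetrizing form of the Brauer tree algebra. -/
noncomputable def form : (V → K⟦X⟧) →ₗ[K] K :=
  ∑ c, (Γ.sgn c : K) • coeff 1 ∘ₗ LinearMap.proj c

theorem form_apply (x : V → K⟦X⟧) : Γ.form K x = ∑ c, (Γ.sgn c : K) * coeff 1 (x c) := by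
  simp [form]

theorem form_smul_oneAt (r : K⟦X⟧) (p : Γ.Edge) : Γ.form K (r • Γ.oneAt K p) = 0 := by
  classical
  obtain ⟨d, rfl⟩ := exists_dart_edge p
  rw [form_apply, ← Finset.sum_subset (Finset.subset_univ {d.fst, d.snd}),
    Finset.sum_pair d.fst_ne_snd, sgn_fst d, Pi.smul_apply, Pi.smul_apply,
    oneAt_apply (inc_edge_fst d), oneAt_apply (inc_edge_snd d)]
  · push_cast
    ring
  · intro c _ hc
    rw [Pi.smul_apply, oneAt_apply_of_not_inc, smul_zero, map_zero, mul_zero]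
    intro h
    exact hc (by simpa using inc_edge_iff.1 h)

theorem form_smul_arc [DecidableEq V] (r : K⟦X⟧) {c : V} {p q : Γ.Edge} (h : Γ.rk c q ≤ Γ.rk c p) :
    Γ.form K (r • Γ.arc K c p q) = constantCoeff r := by
  rw [form_apply, Finset.sum_eq_single c]
  · rw [Pi.smul_apply, arc, Pi.single_eq_same, if_pos h, smul_eq_mul, mul_left_comm,
      ← map_intCast (C : K →+* K⟦X⟧), coeff_C_mul, coeff_succ_mul_X 0, ← mul_assoc,
      sgn_mul_self_cast, one_mul, coeff_zero_eq_constantCoeff_apply]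
  · intro c' _ hc
    rw [Pi.smul_apply, arc_apply_of_ne hc, smul_zero, map_zero, mul_zero]
  · simp

theorem form_X_smul {p : Γ.Edge} {x : V → K⟦X⟧} (hx : x ∈ Γ.Lam K p p) :
    Γ.form K ((X : K⟦X⟧) • x) = 0 := by
  classical
  obtain ⟨d, rfl⟩ := exists_dart_edge p
  obtain ⟨r, s, rfl⟩ := exists_eq_smul_oneAt_add_smul_arc d hx
  rw [smul_add, smul_smul, smul_smul, map_add, form_smul_oneAt, form_smul_arc _ le_rfl]
  simp

theorem form_smul_arc_mul_arc [DecidableEq V] (r : K⟦X⟧) {c : V} {p q : Γ.Edge} (hpq : p ≠ q)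
    (hp : Γ.Inc p c) (hq : Γ.Inc q c) :
    Γ.form K (r • Γ.arc K c p q * Γ.arc K c q p) = constantCoeff r := by
  rw [smul_mul_assoc, arc_mul_arc_swap hpq hp hq, form_smul_arc _ le_rfl]

theorem exists_X_smul_of_forall_form_eq_zero {p q : Γ.Edge} {x : V → K⟦X⟧} (hx : x ∈ Γ.Lam K p q)
    (h : ∀ y ∈ Γ.Lam K q p, Γ.form K (x * y) = 0) : ∃ y ∈ Γ.Lam K p q, x = (X : K⟦X⟧) • y := by
  classical
  by_cases hpq : p = q
  · subst hpq
    obtain ⟨d, rfl⟩ := exists_dart_edge p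
    have harc : Γ.arc K d.fst (Γ.edge d) (Γ.edge d) ∈ Γ.Lam K (Γ.edge d) (Γ.edge d) :=
      arc_mem (inc_edge_fst d) (inc_edge_fst d)
    obtain ⟨r, s, rfl⟩ := exists_eq_smul_oneAt_add_smul_arc d hx
    have hr := h _ harc
    have hs := h _ (oneAt_mem _)
    rw [add_mul, smul_mul_assoc, smul_mul_assoc, oneAt_mul harc, arc_mul_arc_self, smul_smul,
      map_add, form_smul_arc _ le_rfl, form_smul_arc _ le_rfl, mul_left_comm] at hr
    rw [mul_oneAt hx, map_add, form_smul_oneAt, form_smul_arc _ le_rfl, zero_add] at hs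
    obtain ⟨r, rfl⟩ := X_dvd_iff.2 (show constantCoeff r = 0 by simpa using hr)
    obtain ⟨s, rfl⟩ := X_dvd_iff.2 hs
    exact ⟨r • _ + s • _, add_mem (Submodule.smul_mem _ r (oneAt_mem _))
      (Submodule.smul_mem _ s harc), by rw [smul_add, smul_smul, smul_smul]⟩
  by_cases hc : ∃ c, Γ.Inc p c ∧ Γ.Inc q c
  · obtain ⟨c, hp, hq⟩ := hc
    obtain ⟨r, rfl⟩ := exists_eq_smul_arc hpq hp hq hx
    have hr := h _ (arc_mem hq hp)
    rw [form_smul_arc_mul_arc r hpq hp hq] at hr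
    obtain ⟨r, rfl⟩ := X_dvd_iff.2 hr
    exact ⟨r • _, Submodule.smul_mem _ r (arc_mem hp hq), mul_smul _ _ _⟩
  · rw [Lam.eq_zero_of_forall_not_inc (not_exists.1 hc) hx]
    exact ⟨0, zero_mem _, (smul_zero _).symm⟩

theorem exists_forall_eq_form_mul {p q : Γ.Edge} (hpq : p ≠ q) (φ : (V → K⟦X⟧) →ₗ[K] K)
    (hφ : ∀ x ∈ Γ.Lam K p q, φ ((X : K⟦X⟧) • x) = 0) :
    ∃ s ∈ Γ.Lam K q p, ∀ x ∈ Γ.Lam K p q, φ x = Γ.form K (x * s) := by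
  classical
  by_cases hc : ∃ c, Γ.Inc p c ∧ Γ.Inc q c
  · obtain ⟨c, hp, hq⟩ := hc
    have harc := arc_mem (K := K) hp hq
    refine ⟨φ (Γ.arc K c p q) • Γ.arc K c q p, Submodule.smul_of_tower_mem _ _ (arc_mem hq hp),
      fun x hx => ?_⟩
    obtain ⟨r, rfl⟩ := exists_eq_smul_arc hpq hp hq hx
    rw [mul_smul_comm, map_smul (Γ.form K), form_smul_arc_mul_arc r hpq hp hq]
    obtain ⟨s, hs⟩ := exists_eq_C_add_X_mul r
    calc φ (r • Γ.arc K c p q)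
        = φ (constantCoeff r • Γ.arc K c p q + (X : K⟦X⟧) • s • Γ.arc K c p q) := by
          conv_lhs => rw [hs, add_smul, mul_smul]
          congr 2
          funext c'
          simp [smul_eq_C_mul]
      _ = φ (Γ.arc K c p q) • constantCoeff r := by
          rw [map_add, map_smul, hφ _ (Submodule.smul_mem _ s harc), add_zero, smul_eq_mul,
            smul_eq_mul, mul_comm]
  · refine ⟨0, zero_mem _, fun x hx => ?_⟩
    rw [Lam.eq_zero_of_forall_not_inc (not_exists.1 hc) hx, zero_mul, map_zero, map_zero]

end Form

section Trace

variable {ι κ : Type*} [Fintype ι] [Fintype κ] {src : ι → Γ.Edge} {snk : κ → Γ.Edge}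
variable [Fintype V]

variable (Γ) in
/-- The symmetrizing form of the order, on matrices. -/
noncomputable def tau : Matrix ι ι (V → K⟦X⟧) →ₗ[K] K := Γ.form K ∘ₗ traceLinearMap ι K _

theorem tau_apply (A : Matrix ι ι (V → K⟦X⟧)) : Γ.tau A = Γ.form K A.trace := rfl

theorem tau_mul_comm (A : Matrix ι κ (V → K⟦X⟧)) (B : Matrix κ ι (V → K⟦X⟧)) :
    Γ.tau (A * B) = Γ.tau (B * A) := by
  rw [tau_apply, trace_mul_comm, tau_apply]

theorem tau_X_smul {A : Matrix ι ι (V → K⟦X⟧)} (hA : A ∈ matLam K src src) :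
    Γ.tau ((X : K⟦X⟧) • A) = 0 := by
  classical
  rw [tau_apply, trace_smul, trace, Finset.smul_sum, map_sum]
  exact Finset.sum_eq_zero fun p _ => form_X_smul (hA p p)

theorem tau_mul_single [DecidableEq ι] [DecidableEq κ] (A : Matrix ι κ (V → K⟦X⟧)) (p : ι) (q : κ)
    (x : V → K⟦X⟧) : Γ.tau (A * single q p x) = Γ.form K (A p q * x) := by
  rw [tau_apply, trace_mul_single]
  rfl

theorem exists_X_smul_of_forall_tau_eq_zero {A : Matrix ι κ (V → K⟦X⟧)}
    (hA : A ∈ matLam K src snk) (h : ∀ B ∈ matLam K snk src, Γ.tau (A * B) = 0) :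
    ∃ B ∈ matLam K src snk, A = (X : K⟦X⟧) • B := by
  classical
  have hentry (p : ι) (q : κ) : ∃ y ∈ Γ.Lam K (src p) (snk q), A p q = (X : K⟦X⟧) • y :=
    exists_X_smul_of_forall_form_eq_zero (hA p q) fun y hy => by
      rw [← tau_mul_single]
      exact h _ (single_mem_matLam hy)
  choose B hB hAB using hentry
  exact ⟨of B, hB, Matrix.ext hAB⟩

theorem exists_forall_eq_tau_mul (hne : ∀ p q, src p ≠ snk q)
    (φ : Matrix ι κ (V → K⟦X⟧) →ₗ[K] K)
    (hφ : ∀ A ∈ matLam K src snk, φ ((X : K⟦X⟧) • A) = 0) :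
    ∃ s ∈ matLam K snk src, ∀ A ∈ matLam K src snk, φ A = Γ.tau (A * s) := by
  classical
  have hentry (q : κ) (p : ι) : ∃ s ∈ Γ.Lam K (snk q) (src p), ∀ x ∈ Γ.Lam K (src p) (snk q),
      φ (single p q x) = Γ.form K (x * s) :=
    exists_forall_eq_form_mul (hne p q) (φ ∘ₗ singleLinearMap K p q) fun x hx => by
      rw [LinearMap.comp_apply, singleLinearMap_apply, ← smul_single]
      exact hφ _ (single_mem_matLam hx)
  choose s hs hφs using hentry
  refine ⟨of s, hs, fun A hA => ?_⟩
  conv_lhs => rw [matrix_eq_sum_single A]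
  simp only [map_sum, hφs _ _ _ (hA _ _), tau_apply, trace, diag_apply, mul_apply, of_apply]

end Trace

/-! ### Endomorphisms of two-term complexes over the order -/

section ChainEnd

variable {ι κ : Type*} [Fintype ι] [Fintype κ] {src : ι → Γ.Edge} {snk : κ → Γ.Edge}

/-- The differential of the endomorphism complex of the two-term complex `f`, from degree `0` to
degree `1`. -/
noncomputable def chainDiff (f : matLam K src snk) :
    Order K src × Order K snk →ₗ[K⟦X⟧] matLam K src snk where
  toFun z := ⟨z.1.1 * f.1 - f.1 * z.2.1,
    sub_mem (mul_mem_matLam z.1.2 f.2) (mul_mem_matLam f.2 z.2.2)⟩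
  map_add' z z' := Subtype.ext <| by
    simp only [Prod.fst_add, Prod.snd_add, NonUnitalSubalgebra.coe_add, Submodule.coe_add,
      Matrix.add_mul, Matrix.mul_add]
    abel
  map_smul' r z := Subtype.ext <| by
    simp only [Prod.smul_fst, Prod.smul_snd, NonUnitalSubalgebra.coe_smul, Submodule.coe_smul,
      Matrix.smul_mul, Matrix.mul_smul, RingHom.id_apply, smul_sub]

variable [DecidableEq ι] [DecidableEq κ]

/-- The endomorphism ring of the two-term complex `f`. -/
noncomputable def chainEnd (f : matLam K src snk) :
    Subalgebra K⟦X⟧ (Order K src × Order K snk) where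
  __ := LinearMap.ker (chainDiff f)
  mul_mem' {z z'} hz hz' := by
    have hz : z.1.1 * f.1 - f.1 * z.2.1 = 0 := congrArg Subtype.val hz
    have hz' : z'.1.1 * f.1 - f.1 * z'.2.1 = 0 := congrArg Subtype.val hz'
    refine Subtype.ext (?_ : z.1.1 * z'.1.1 * f.1 - f.1 * (z.2.1 * z'.2.1) = 0)
    rw [Matrix.mul_assoc, sub_eq_zero.1 hz', ← Matrix.mul_assoc, sub_eq_zero.1 hz,
      ← Matrix.mul_assoc, sub_self]
  algebraMap_mem' r := by
    refine Subtype.ext (?_ : (r • (1 : Order K src).1) * f.1 - f.1 * (r • (1 : Order K snk).1) = 0)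
    rw [Matrix.smul_mul, Matrix.mul_smul, one_mul_of_mem_matLam f.2, mul_one_of_mem_matLam f.2,
      sub_self]

variable {f : matLam K src snk}

theorem mem_chainEnd {z : Order K src × Order K snk} :
    z ∈ chainEnd f ↔ z.1.1 * f.1 = f.1 * z.2.1 := by
  rw [← sub_eq_zero]
  exact Subtype.ext_iff

theorem mem_chainEnd_of_X_smul_mem {z : Order K src × Order K snk}
    (hz : (X : K⟦X⟧) • z ∈ chainEnd f) : z ∈ chainEnd f := by
  rw [mem_chainEnd] at hz ⊢
  refine smul_right_injective _ (X_ne_zero (R := K)) ?_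
  change (X : K⟦X⟧) • (z.1.1 * f.1) = (X : K⟦X⟧) • (f.1 * z.2.1)
  rw [← Matrix.smul_mul, ← Matrix.mul_smul]
  exact hz

variable (f) in
/-- The null-homotopic endomorphism of the two-term complex `f` given by the homotopy `s`. -/
noncomputable def nullHomotopic (s : matLam K snk src) : chainEnd f :=
  ⟨(⟨f.1 * s.1, mul_mem_matLam f.2 s.2⟩, ⟨s.1 * f.1, mul_mem_matLam s.2 f.2⟩),
    mem_chainEnd.2 (Matrix.mul_assoc _ _ _)⟩

section Pairing

variable [Fintype V]

/-- The pairing of pairs of endomorphisms induced by the symmetrizing forms. -/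
noncomputable def endPairing (y : Order K src × Order K snk) :
    Order K src × Order K snk →ₗ[K] K where
  toFun z := Γ.tau (y.1.1 * z.1.1) - Γ.tau (y.2.1 * z.2.1)
  map_add' z z' := by
    simp only [Prod.fst_add, Prod.snd_add, NonUnitalSubalgebra.coe_add, Matrix.mul_add, map_add]
    ring
  map_smul' r z := by
    simp only [Prod.smul_fst, Prod.smul_snd, RingHom.id_apply, smul_sub, ← map_smul,
      ← Matrix.mul_smul]
    rfl

theorem endPairing_apply (y z : Order K src × Order K snk) :
    endPairing y z = Γ.tau (y.1.1 * z.1.1) - Γ.tau (y.2.1 * z.2.1) := rfl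

theorem endPairing_sub (y y' z : Order K src × Order K snk) :
    endPairing (y - y') z = endPairing y z - endPairing y' z := by
  simp only [endPairing_apply, Prod.fst_sub, Prod.snd_sub, NonUnitalSubalgebra.coe_sub,
    Matrix.sub_mul, map_sub]
  ring

theorem endPairing_inl (A : Order K src) (z : Order K src × Order K snk) :
    endPairing (A, 0) z = Γ.tau (A.1 * z.1.1) := by
  rw [endPairing_apply, ZeroMemClass.coe_zero, Matrix.zero_mul, map_zero, sub_zero]

theorem endPairing_inr (B : Order K snk) (z : Order K src × Order K snk) :
    endPairing (0, B) z = -Γ.tau (B.1 * z.2.1) := by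
  rw [endPairing_apply, ZeroMemClass.coe_zero, Matrix.zero_mul, map_zero, zero_sub]

theorem endPairing_X_smul (y z : Order K src × Order K snk) :
    endPairing y ((X : K⟦X⟧) • z) = 0 := by
  have htau₁ := tau_X_smul (y.1 * z.1).2
  have htau₂ := tau_X_smul (y.2 * z.2).2
  rw [NonUnitalSubalgebra.coe_mul, ← Matrix.mul_smul] at htau₁ htau₂
  rw [endPairing_apply]
  exact (congrArg₂ _ htau₁ htau₂).trans (sub_zero 0)

theorem exists_sub_nullHomotopic_eq_X_smul (hne : ∀ p q, src p ≠ snk q)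
    (hf : Function.Surjective (chainDiff f)) {y : chainEnd f}
    (hy : ∀ z : chainEnd f, endPairing y.1 z.1 = 0) :
    ∃ (s : matLam K snk src) (x : chainEnd f), y - nullHomotopic f s = (X : K⟦X⟧) • x := by
  obtain ⟨φ₀, hφ₀⟩ :
      endPairing y.1 ∈ LinearMap.range ((chainDiff f).restrictScalars K).dualMap := by
    rw [LinearMap.range_dualMap_eq_dualAnnihilator_ker, Submodule.mem_dualAnnihilator]
    exact fun z hz => hy ⟨z, hz⟩
  obtain ⟨φ, hφ⟩ := LinearMap.exists_extend
    (p := (matLam K src snk).restrictScalars K) φ₀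
  have hφ (z) : φ (chainDiff f z).1 = endPairing y.1 z :=
    (LinearMap.congr_fun hφ (chainDiff f z)).trans (LinearMap.congr_fun hφ₀ z)
  obtain ⟨s, hs, hφs⟩ := exists_forall_eq_tau_mul hne φ fun A hA => by
    obtain ⟨z, hz⟩ := hf ⟨A, hA⟩
    rw [← endPairing_X_smul y.1 z, ← hφ, map_smul (chainDiff f), hz]
    rfl
  have hdual (z : Order K src × Order K snk) :
      Γ.tau (y.1.1.1 * z.1.1) - Γ.tau (y.1.2.1 * z.2.1) =
        Γ.tau ((z.1.1 * f.1 - f.1 * z.2.1) * s) :=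
    (hφ z).symm.trans (hφs _ (chainDiff f z).2)
  obtain ⟨x₁, hx₁, h₁⟩ := exists_X_smul_of_forall_tau_eq_zero
      (sub_mem y.1.1.2 (mul_mem_matLam f.2 hs)) fun a ha => by
    have := hdual (⟨a, ha⟩, 0)
    simp only [ZeroMemClass.coe_zero, Matrix.mul_zero, map_zero, sub_zero] at this
    rw [Matrix.sub_mul, map_sub, this, Matrix.mul_assoc, tau_mul_comm a, sub_self]
  obtain ⟨x₂, hx₂, h₂⟩ := exists_X_smul_of_forall_tau_eq_zero
      (sub_mem y.1.2.2 (mul_mem_matLam hs f.2)) fun b hb => by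
    have := hdual (0, ⟨b, hb⟩)
    simp only [ZeroMemClass.coe_zero, Matrix.mul_zero, Matrix.zero_mul, map_zero, zero_sub,
      Matrix.neg_mul, map_neg, neg_inj] at this
    rw [Matrix.sub_mul, map_sub, this, Matrix.mul_assoc s, tau_mul_comm s, sub_self]
  have hyx : (y - nullHomotopic f ⟨s, hs⟩).1 = (X : K⟦X⟧) • (⟨x₁, hx₁⟩, ⟨x₂, hx₂⟩) :=
    Prod.ext (Subtype.ext h₁) (Subtype.ext h₂)
  exact ⟨⟨s, hs⟩, ⟨_, mem_chainEnd_of_X_smul_mem (hyx ▸ Subtype.prop _)⟩, Subtype.ext hyx⟩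

end Pairing

end ChainEnd

end BrauerTree

namespace BrauerTree

open PowerSeries Matrix

section AtVertex

variable {V : Type v} {K : Type u} [Field K] {ι κ μ : Type*}

/-- The component of a matrix over the product of power series rings at a vertex of the tree. -/
noncomputable def atVertex (c : V) : Matrix ι κ (V → K⟦X⟧) →ₗ[K⟦X⟧] Matrix ι κ K⟦X⟧ :=
  (LinearMap.proj c).mapMatrix

theorem atVertex_apply (c : V) (A : Matrix ι κ (V → K⟦X⟧)) (p : ι) (q : κ) :
    atVertex c A p q = A p q c := rfl

theorem eq_zero_of_forall_atVertex {A : Matrix ι κ (V → K⟦X⟧)} (h : ∀ c, atVertex c A = 0) :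
    A = 0 :=
  Matrix.ext fun p q => funext fun c => congrFun₂ (h c) p q

theorem atVertex_mul [Fintype κ] (c : V) (A : Matrix ι κ (V → K⟦X⟧))
    (B : Matrix κ μ (V → K⟦X⟧)) : atVertex c (A * B) = atVertex c A * atVertex c B := by
  ext1 p q
  simp only [atVertex_apply, Matrix.mul_apply, Finset.sum_apply, Pi.mul_apply]

section Concentrated

variable [DecidableEq V]

/-- The matrix with component `X • N` at the vertex `c` and all other components zero. -/
noncomputable def concentrated (c : V) (N : Matrix ι κ K⟦X⟧) : Matrix ι κ (V → K⟦X⟧) :=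
  N.map fun r => Pi.single c (X * r)

theorem atVertex_concentrated (c : V) (N : Matrix ι κ K⟦X⟧) :
    atVertex c (concentrated c N) = (X : K⟦X⟧) • N := by
  ext1 p q
  rw [atVertex_apply, concentrated, map_apply, Pi.single_eq_same, Matrix.smul_apply, smul_eq_mul]

theorem atVertex_concentrated_of_ne {c c' : V} (hc : c' ≠ c) (N : Matrix ι κ K⟦X⟧) :
    atVertex c' (concentrated c N) = 0 := by
  ext1 p q
  rw [atVertex_apply, concentrated, map_apply, Pi.single_eq_of_ne hc, Matrix.zero_apply]

theorem concentrated_mul_eq_zero [Fintype κ] {c : V} {N : Matrix ι κ K⟦X⟧}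
    {A : Matrix κ μ (V → K⟦X⟧)} (h : N * atVertex c A = 0) : concentrated c N * A = 0 := by
  refine eq_zero_of_forall_atVertex fun c' => ?_
  rw [atVertex_mul]
  rcases eq_or_ne c' c with rfl | hc'
  · rw [atVertex_concentrated, Matrix.smul_mul, h, smul_zero]
  · rw [atVertex_concentrated_of_ne hc', Matrix.zero_mul]

theorem mul_concentrated_eq_zero [Fintype κ] {c : V} {N : Matrix κ μ K⟦X⟧}
    {A : Matrix ι κ (V → K⟦X⟧)} (h : atVertex c A * N = 0) : A * concentrated c N = 0 := by
  refine eq_zero_of_forall_atVertex fun c' => ?_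
  rw [atVertex_mul]
  rcases eq_or_ne c' c with rfl | hc'
  · rw [atVertex_concentrated, Matrix.mul_smul, h, smul_zero]
  · rw [atVertex_concentrated_of_ne hc', Matrix.mul_zero]

end Concentrated

variable [Finite V] {Γ : BrauerTree V} {src : ι → Γ.Edge} {snk : κ → Γ.Edge} [Fintype ι] {c : V}

section Order

variable [DecidableEq ι] [DecidablePred fun p => Γ.Inc (src p) c]

theorem atVertex_one :
    atVertex c (1 : Order K src).1 = coordProj K⟦X⟧ fun p => Γ.Inc (src p) c := by
  ext1 p q
  rw [atVertex_apply, Order.coe_one, coordProj, diagonal_apply, diagonal_apply]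
  by_cases hpq : p = q
  · by_cases hc : Γ.Inc (src p) c
    · rw [if_pos hpq, if_pos hpq, if_pos hc, oneAt_apply hc]
    · rw [if_pos hpq, if_pos hpq, if_neg hc, oneAt_apply_of_not_inc hc]
  · rw [if_neg hpq, if_neg hpq, Pi.zero_apply]

theorem coordProj_mul_atVertex {A : Matrix ι κ (V → K⟦X⟧)} (hA : A ∈ matLam K src snk) :
    coordProj K⟦X⟧ (fun p => Γ.Inc (src p) c) * atVertex c A = atVertex c A := by
  rw [← atVertex_one, ← atVertex_mul, one_mul_of_mem_matLam hA]

theorem atVertex_mul_coordProj {A : Matrix κ ι (V → K⟦X⟧)} (hA : A ∈ matLam K snk src) :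
    atVertex c A * coordProj K⟦X⟧ (fun p => Γ.Inc (src p) c) = atVertex c A := by
  rw [← atVertex_one, ← atVertex_mul, mul_one_of_mem_matLam hA]

variable (K src c) in
/-- The component at the vertex `c` of the endomorphism ring of `⨁ src`. -/
noncomputable def Order.atVertexHom : Order K src →ₙₐ[K⟦X⟧] Matrix ι ι K⟦X⟧ where
  toFun A := atVertex c A.1
  map_smul' r A := map_smul (atVertex c) r A.1
  map_zero' := map_zero (atVertex c)
  map_add' A B := map_add (atVertex c) A.1 B.1
  map_mul' A B := atVertex_mul c A.1 B.1

variable [DecidableEq V]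

theorem concentrated_mem_order {N : Matrix ι ι K⟦X⟧}
    (hN : coordProj K⟦X⟧ (fun p => Γ.Inc (src p) c) * N = N)
    (hN' : N * coordProj K⟦X⟧ (fun p => Γ.Inc (src p) c) = N) :
    concentrated c N ∈ Order K src := by
  intro p q
  have hX (c' : V) : X ∣ concentrated c N p q c' := by
    rw [concentrated, map_apply]
    rcases eq_or_ne c' c with rfl | hc
    · rw [Pi.single_eq_same]
      exact dvd_mul_right _ _
    · rw [Pi.single_eq_of_ne hc]
      exact dvd_zero _
  refine ⟨fun c' hc' => ?_, fun c' _ => hX c', fun _ c' c'' _ _ => dvd_sub (hX c') (hX c'')⟩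
  rw [concentrated, map_apply]
  rcases eq_or_ne c' c with rfl | hc
  · have hpq : N p q = 0 := by
      by_cases hp : Γ.Inc (src p) c'
      · rw [← hN', coordProj, mul_diagonal, if_neg fun hq => hc' ⟨hp, hq⟩, mul_zero]
      · rw [← hN, coordProj, diagonal_mul, if_neg hp, zero_mul]
    rw [Pi.single_eq_same, hpq, mul_zero]
  · exact Pi.single_eq_of_ne hc _

end Order

theorem tau_concentrated_mul [DecidableEq V] [Fintype V] (N : Matrix ι ι K⟦X⟧)
    (A : Matrix ι ι (V → K⟦X⟧)) :
    Γ.tau (concentrated c N * A) = Γ.sgn c * constantCoeff (N * atVertex c A).trace := by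
  have htrace (c' : V) :
      (concentrated c N * A).trace c' = (atVertex c' (concentrated c N) * atVertex c' A).trace := by
    rw [← atVertex_mul, trace, trace, Finset.sum_apply]
    rfl
  rw [tau_apply, form_apply, Finset.sum_eq_single c]
  · rw [htrace, atVertex_concentrated, Matrix.smul_mul, trace_smul, smul_eq_mul,
      coeff_succ_X_mul 0, coeff_zero_eq_constantCoeff_apply]
  · intro c' _ hc
    rw [htrace, atVertex_concentrated_of_ne hc, Matrix.zero_mul, trace_zero, map_zero, mul_zero]
  · simp

end AtVertex

end BrauerTree

/-! ### Homology at the vertices of the tree -/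

namespace BrauerTree

open PowerSeries Matrix

variable {V : Type v} [Finite V] {Γ : BrauerTree V} {K : Type u} [Field K]
  {ι κ : Type*} [Fintype ι] [Fintype κ] {src : ι → Γ.Edge} {snk : κ → Γ.Edge}

section Excess

open Classical in
variable (src snk) in
/-- The number of summands of degree `0` with end point `c` minus that of degree `1`. -/
noncomputable def excess (c : V) : ℤ :=
  Finset.card {p | Γ.Inc (src p) c} - Finset.card {q | Γ.Inc (snk q) c}

end Excess

section LocalComponent

variable [DecidableEq ι] [DecidableEq κ]

variable {f : matLam K src snk}

theorem atVertex_comm (z : chainEnd f) (c : V) :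
    atVertex c z.1.1.1 * atVertex c f.1 = atVertex c f.1 * atVertex c z.1.2.1 := by
  rw [← atVertex_mul, ← atVertex_mul, mem_chainEnd.1 z.2]

variable [Fintype V]

variable (f) in
/-- A representation of the endomorphism ring of the two-term complex `f` on the homology of the
component of `f` at the vertex `c`, together with the endomorphisms of `f` concentrated at `c` that
are dual to it. -/
structure LocalComponent (c : V) where
  dim : ℕ
  natAbs_excess_le : (excess src snk c).natAbs ≤ dim
  rep : chainEnd f →ₐ[K⟦X⟧] Matrix (Fin dim) (Fin dim) K⟦X⟧
  rep_eq_zero : ∀ (z : chainEnd f) (S : Matrix κ ι K⟦X⟧), atVertex c z.1.1.1 = atVertex c f.1 * S →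
    atVertex c z.1.2.1 = S * atVertex c f.1 → rep z = 0
  lift : Matrix (Fin dim) (Fin dim) K⟦X⟧ → chainEnd f
  atVertex_lift : ∀ M, ∀ c' ≠ c, atVertex c' (lift M).1.1.1 = 0 ∧ atVertex c' (lift M).1.2.1 = 0
  rep_lift : ∀ M, rep (lift M) = (X : K⟦X⟧) • M
  sign : K
  sign_ne_zero : sign ≠ 0
  endPairing_lift : ∀ M z,
    endPairing (lift M).1 z.1 = sign * constantCoeff (M * rep z).trace

theorem LocalComponent.nonempty_of_nonneg {c : V} (hc : 0 ≤ excess src snk c) :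
    Nonempty (LocalComponent f c) := by
  classical
  obtain ⟨n, B, B', hn, hBB, hBf, hBE, hEB, hsplit⟩ :=
    exists_cokernel_splitting_matrix (P := fun p => Γ.Inc (src p) c)
      (atVertex_mul_coordProj (c := c) f.2)
  let ε : chainEnd f →ₙₐ[K⟦X⟧] Matrix ι ι K⟦X⟧ := (Order.atVertexHom K src c).comp
    ((AlgHom.fst K⟦X⟧ (Order K src) (Order K snk)).comp (chainEnd f).val : _ →ₙₐ[K⟦X⟧] _)
  let ρ := compression ε B B'
    (by
      change B * atVertex c (1 : Order K src).1 * B' = 1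
      rw [atVertex_one, hBE, hBB])
    (fun z z' => by
      have hU : B * ε z * B' * B = B * ε z := hsplit _
        (by rw [Matrix.mul_assoc]; exact congrArg _ (atVertex_mul_coordProj z.1.1.2))
        (by
          change B * atVertex c z.1.1.1 * _ = 0
          rw [Matrix.mul_assoc, atVertex_comm, ← Matrix.mul_assoc, hBf, Matrix.zero_mul])
      rw [← Matrix.mul_assoc, ← Matrix.mul_assoc, hU, Matrix.mul_assoc B])
  have hρ (z : chainEnd f) : ρ z = B * atVertex c z.1.1.1 * B' := rfl
  have hmem (M : Matrix (Fin n) (Fin n) K⟦X⟧) : concentrated c (B' * M * B) ∈ Order K src :=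
    concentrated_mem_order (by rw [← Matrix.mul_assoc, ← Matrix.mul_assoc, hEB])
      (by rw [Matrix.mul_assoc, hBE])
  exact ⟨{
    dim := n
    natAbs_excess_le := by unfold excess at hc ⊢; lia
    rep := ρ
    rep_eq_zero z S h _ := by
      rw [hρ, h, ← Matrix.mul_assoc, hBf, Matrix.zero_mul, Matrix.zero_mul]
    lift M := ⟨(⟨_, hmem M⟩, 0), mem_chainEnd.2 (
      (concentrated_mul_eq_zero (by rw [Matrix.mul_assoc, hBf, Matrix.mul_zero])).trans
        (Matrix.mul_zero _).symm)⟩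
    atVertex_lift M c' hc' := ⟨atVertex_concentrated_of_ne hc' _, map_zero _⟩
    rep_lift M := by
      rw [hρ, atVertex_concentrated, mul_smul_mul_eq_smul hBB]
    sign := Γ.sgn c
    sign_ne_zero := left_ne_zero_of_mul_eq_one (sgn_mul_self_cast K c)
    endPairing_lift M z := by
      rw [endPairing_inl, tau_concentrated_mul, hρ, Matrix.mul_assoc, Matrix.mul_assoc,
        trace_mul_comm, Matrix.mul_assoc] }⟩

theorem LocalComponent.nonempty_of_nonpos {c : V} (hc : excess src snk c ≤ 0) :
    Nonempty (LocalComponent f c) := by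
  classical
  obtain ⟨n, C, C', hn, hCC, hfC, hEC, hCE, hsplit⟩ :=
    exists_kernel_splitting_matrix (P := fun q => Γ.Inc (snk q) c)
      (coordProj_mul_atVertex (c := c) f.2)
  let ε : chainEnd f →ₙₐ[K⟦X⟧] Matrix κ κ K⟦X⟧ := (Order.atVertexHom K snk c).comp
    ((AlgHom.snd K⟦X⟧ (Order K src) (Order K snk)).comp (chainEnd f).val : _ →ₙₐ[K⟦X⟧] _)
  let ρ := compression ε C' C
    (by
      change C' * atVertex c (1 : Order K snk).1 * C = 1
      rw [atVertex_one, hCE, hCC])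
    (fun z z' => by
      have hU : C * (C' * (ε z' * C)) = ε z' * C := hsplit _
        (by
          rw [← Matrix.mul_assoc]
          exact congrArg (· * C) (coordProj_mul_atVertex z'.1.2.2))
        (by
          change _ * (atVertex c z'.1.2.1 * C) = 0
          rw [← Matrix.mul_assoc, ← atVertex_comm, Matrix.mul_assoc, hfC, Matrix.mul_zero])
      simp only [Matrix.mul_assoc, hU])
  have hρ (z : chainEnd f) : ρ z = C' * atVertex c z.1.2.1 * C := rfl
  have hmem (M : Matrix (Fin n) (Fin n) K⟦X⟧) : concentrated c (C * M * C') ∈ Order K snk :=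
    concentrated_mem_order (by rw [← Matrix.mul_assoc, ← Matrix.mul_assoc, hEC])
      (by rw [Matrix.mul_assoc, hCE])
  exact ⟨{
    dim := n
    natAbs_excess_le := by unfold excess at hc ⊢; lia
    rep := ρ
    rep_eq_zero z S _ h := by
      rw [hρ, h, Matrix.mul_assoc, Matrix.mul_assoc, hfC, Matrix.mul_zero, Matrix.mul_zero]
    lift M := ⟨(0, ⟨_, hmem M⟩), mem_chainEnd.2 ((Matrix.zero_mul _).trans
      (mul_concentrated_eq_zero (by
        rw [← Matrix.mul_assoc, ← Matrix.mul_assoc, hfC, Matrix.zero_mul, Matrix.zero_mul])).symm)⟩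
    atVertex_lift M c' hc' := ⟨map_zero _, atVertex_concentrated_of_ne hc' _⟩
    rep_lift M := by
      rw [hρ, atVertex_concentrated, mul_smul_mul_eq_smul hCC]
    sign := -Γ.sgn c
    sign_ne_zero := neg_ne_zero.2 (left_ne_zero_of_mul_eq_one (sgn_mul_self_cast K c))
    endPairing_lift M z := by
      rw [endPairing_inr, tau_concentrated_mul, hρ, Matrix.mul_assoc, Matrix.mul_assoc,
        trace_mul_comm, Matrix.mul_assoc, neg_mul] }⟩

end LocalComponent

end BrauerTree

namespace BrauerTree

open PowerSeries Matrix

variable {V : Type v} [Finite V] {Γ : BrauerTree V} {K : Type u} [Field K]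
  {ι κ : Type*} [Fintype ι] [Fintype κ] [DecidableEq ι] [DecidableEq κ]
  {src : ι → Γ.Edge} {snk : κ → Γ.Edge} {f : matLam K src snk}

/-- `lam` assigns to each endomorphism of the two-term complex `f` its eigenvalue modulo `X`. -/
def IsEigenvalueFunction (lam : chainEnd f → K) : Prop :=
  ∀ z, ∃ (k : ℕ) (x : chainEnd f), (z - algebraMap K _ (lam z)) ^ k = (X : K⟦X⟧) • x

section LocalComponent

variable [Fintype V] {c : V}

namespace LocalComponent

variable (L : LocalComponent f c)

theorem rep_eq_zero_of_atVertex_eq_zero {z : chainEnd f}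
    (hz : atVertex c z.1.1.1 = 0 ∧ atVertex c z.1.2.1 = 0) : L.rep z = 0 :=
  L.rep_eq_zero z 0 (hz.1.trans (Matrix.mul_zero _).symm) (hz.2.trans (Matrix.zero_mul _).symm)

theorem rep_nullHomotopic (s : matLam K snk src) : L.rep (nullHomotopic f s) = 0 :=
  L.rep_eq_zero _ (atVertex c s.1) (atVertex_mul _ _ _) (atVertex_mul _ _ _)

/-- The reduction modulo `X` of the representation of a local component. -/
noncomputable def residue : chainEnd f →ₐ[K] Matrix (Fin L.dim) (Fin L.dim) K :=
  (AlgHom.mapMatrix { constantCoeff (R := K) with commutes' := constantCoeff_C }).comp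
    (L.rep.restrictScalars K)

theorem residue_eq (z : chainEnd f) : L.residue z = (L.rep z).map constantCoeff := rfl

theorem residue_X_smul (x : chainEnd f) : L.residue ((X : K⟦X⟧) • x) = 0 := by
  rw [residue_eq, map_smul]
  ext1 i j
  simp

variable {lam : chainEnd f → K} (hlam : IsEigenvalueFunction lam)
include hlam

theorem isNilpotent_residue_sub (z : chainEnd f) :
    IsNilpotent (L.residue z - algebraMap K _ (lam z)) := by
  obtain ⟨k, x, hx⟩ := hlam z
  exact ⟨k, by rw [← AlgHom.commutes L.residue, ← map_sub, ← map_pow, hx, residue_X_smul]⟩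

theorem eigenvalue_eq_zero (hc : excess src snk c ≠ 0) {x : chainEnd f} (hx : L.rep x = 0) :
    lam x = 0 := by
  have hdim : Nonempty (Fin L.dim) :=
    Fin.pos_iff_nonempty.1 ((Int.natAbs_pos.2 hc).trans_le L.natAbs_excess_le)
  have hnil := L.isNilpotent_residue_sub hlam x
  rw [residue_eq, hx, Matrix.map_zero _ (map_zero _), zero_sub, isNilpotent_neg_iff] at hnil
  exact (IsNilpotent.map_iff (algebraMap K (Matrix (Fin L.dim) (Fin L.dim) K)).injective).1 hnil
    |>.eq_zero

theorem exists_endPairing_eq (hc : excess src snk c ≠ 0) :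
    ∃ y : chainEnd f, (∀ z : chainEnd f, endPairing y.1 z.1 = lam z) ∧
      (∀ c' ≠ c, atVertex c' y.1.1.1 = 0 ∧ atVertex c' y.1.2.1 = 0) ∧
      ∀ x : chainEnd f, L.rep y = (X : K⟦X⟧) • L.rep x →
        lam x ≠ 0 ∧ (excess src snk c).natAbs ≤ 1 := by
  have hdim : Nonempty (Fin L.dim) :=
    Fin.pos_iff_nonempty.1 ((Int.natAbs_pos.2 hc).trans_le L.natAbs_excess_le)
  obtain ⟨v, w, hwv, htrace⟩ :=
    exists_trace_vecMulVec_mul_eq L.residue lam (L.isNilpotent_residue_sub hlam)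
  let M : Matrix (Fin L.dim) (Fin L.dim) K := L.sign⁻¹ • vecMulVec v w
  have hM : (M.map C).map constantCoeff = M := by
    ext1 i j
    simp
  refine ⟨L.lift (M.map C), fun z => ?_, L.atVertex_lift _, fun x hx => ?_⟩
  · have hcoeff : constantCoeff (M.map C * L.rep z).trace = (M * L.residue z).trace := by
      refine (AddMonoidHom.map_trace (constantCoeff (R := K)).toAddMonoidHom _).trans ?_
      change ((M.map C * L.rep z).map constantCoeff).trace = _
      rw [Matrix.map_mul, hM, residue_eq]
    rw [L.endPairing_lift, hcoeff, Matrix.smul_mul, trace_smul, htrace, smul_eq_mul,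
      mul_inv_cancel_left₀ L.sign_ne_zero]
  · have hres : L.residue x = M := by
      rw [residue_eq, ← hM, smul_right_injective _ (X_ne_zero (R := K))
        ((L.rep_lift _).symm.trans hx)]
    have hsign := inv_ne_zero L.sign_ne_zero
    obtain ⟨heq, hcard⟩ := eq_and_card_le_of_isNilpotent_smul_vecMulVec_sub hwv hsign
      (hres ▸ L.isNilpotent_residue_sub hlam x)
    exact ⟨heq ▸ hsign, L.natAbs_excess_le.trans (by rwa [Fintype.card_fin] at hcard)⟩

end LocalComponent

theorem LocalComponent.nonempty (f : matLam K src snk) (c : V) : Nonempty (LocalComponent f c) :=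
  (le_total 0 (excess src snk c)).elim nonempty_of_nonneg nonempty_of_nonpos

end LocalComponent

theorem natAbs_excess_le_one_and_excess_eq_zero (hne : ∀ p q, src p ≠ snk q)
    (hf : Function.Surjective (chainDiff f)) {lam : chainEnd f → K}
    (hlam : IsEigenvalueFunction lam) {c₀ c₁ : V} (hcc : c₀ ≠ c₁) (hc₀ : excess src snk c₀ ≠ 0)
    (hc₁ : excess src snk c₁ ≠ 0) :
    (excess src snk c₀).natAbs ≤ 1 ∧ ∀ c, c ≠ c₀ → c ≠ c₁ → excess src snk c = 0 := by
  cases nonempty_fintype V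
  obtain ⟨L₀⟩ := LocalComponent.nonempty f c₀
  obtain ⟨L₁⟩ := LocalComponent.nonempty f c₁
  obtain ⟨y₀, hlam₀, hy₀, hx₀⟩ := L₀.exists_endPairing_eq hlam hc₀
  obtain ⟨y₁, hlam₁, hy₁, -⟩ := L₁.exists_endPairing_eq hlam hc₁
  obtain ⟨s, x, hsx⟩ := exists_sub_nullHomotopic_eq_X_smul hne hf (y := y₀ - y₁) fun z => by
    rw [AddSubgroupClass.coe_sub, endPairing_sub, hlam₀, hlam₁, sub_self]
  have hrep {c : V} (L : LocalComponent f c) (hc : c ≠ c₁) :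
      L.rep y₀ = (X : K⟦X⟧) • L.rep x := by
    rw [← map_smul, ← hsx, map_sub, map_sub, L.rep_nullHomotopic,
      L.rep_eq_zero_of_atVertex_eq_zero (hy₁ c hc), sub_zero, sub_zero]
  obtain ⟨hlamx, hle⟩ := hx₀ x (hrep L₀ hcc)
  refine ⟨hle, fun c hc₀ hc₁ => by_contra fun hc => hlamx ?_⟩
  obtain ⟨L⟩ := LocalComponent.nonempty f c
  refine L.eigenvalue_eq_zero hlam hc (smul_right_injective _ (X_ne_zero (R := K)) ?_)
  change (X : K⟦X⟧) • L.rep x = (X : K⟦X⟧) • 0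
  rw [← hrep L hc₁, L.rep_eq_zero_of_atVertex_eq_zero (hy₀ c hc₀), smul_zero]

end BrauerTree

/-! ### Lifting homomorphisms of projective modules -/

theorem IsSuperfluous.subsingleton_of_comp_comp_eq_id {R M M' L : Type*} [Ring R] [AddCommGroup M]
    [AddCommGroup M'] [AddCommGroup L] [Module R M] [Module R M'] [Module R L] {N : Submodule R M'}
    (hN : IsSuperfluous N) {φ : M →ₗ[R] M'} (hφ : LinearMap.range φ ≤ N) {ψ : M' →ₗ[R] L}
    {χ : L →ₗ[R] M} (h : ψ ∘ₗ φ ∘ₗ χ = LinearMap.id) : Subsingleton L := by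
  have sup_ker : N ⊔ LinearMap.ker ψ = ⊤ := by
    refine eq_top_iff.2 fun y _ => Submodule.mem_sup.2
      ⟨φ (χ (ψ y)), hφ ⟨_, rfl⟩, y - φ (χ (ψ y)), ?_, add_sub_cancel _ _⟩
    rw [LinearMap.mem_ker, map_sub, sub_eq_zero]
    exact (LinearMap.congr_fun h (ψ y)).symm
  rw [LinearMap.ker_eq_top.1 (hN _ sup_ker), LinearMap.zero_comp] at h
  exact ⟨fun x y => (LinearMap.congr_fun h x).symm.trans (LinearMap.congr_fun h y)⟩

namespace BrauerTree

open PowerSeries Matrix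

variable {V : Type v} [Finite V] {Γ : BrauerTree V} {K : Type u} [Field K]

section Projective

variable {p q r : Γ.Edge}

theorem mem_Ae {z : Γ.Alg K} : z ∈ Γ.Ae K p ↔ z * Γ.e K p = z := by
  rw [Ae, Submodule.mem_span_singleton]
  constructor
  · rintro ⟨r, rfl⟩
    rw [smul_eq_mul, mul_assoc, e_mul_self]
  · exact fun h => ⟨z, h⟩

variable (K p) in
/-- The generator `e p` of the projective module `A e p`. -/
noncomputable def gen : Γ.Ae K p := ⟨Γ.e K p, Submodule.mem_span_singleton_self _⟩

theorem smul_gen (x : Γ.Ae K p) : (x : Γ.Alg K) • gen K p = x := Subtype.ext (mem_Ae.1 x.2)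

theorem gen_ne_zero : gen K p ≠ 0 := by
  intro h
  obtain ⟨y, hy⟩ := theta_eq_zero_iff.1 ((theta_oneAt p).trans (congrArg Subtype.val h))
  obtain ⟨d, rfl⟩ := exists_dart_edge p
  have hX : X * y.1 d.fst = 1 :=
    (congrFun (congrArg Subtype.val hy) d.fst).trans (oneAt_apply (inc_edge_fst d))
  exact X_prime.not_isUnit (IsUnit.of_mul_eq_one _ hX)

variable (K p q) in
/-- The homomorphism `A e p → A e q` given by right multiplication with a morphism of the order. -/
noncomputable def mulTheta : Γ.Lam K p q →ₗ[K] Γ.Ae K p →ₗ[Γ.Alg K] Γ.Ae K q where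
  toFun x := ((LinearMap.toSpanSingleton _ _ (Γ.theta K p q x)).comp (Γ.Ae K p).subtype).codRestrict
    _ fun z => mem_Ae.2 ((mul_assoc _ _ _).trans (congrArg _ (theta_mul_e x)))
  map_add' x y := by
    ext z
    exact (congrArg _ (map_add (Γ.theta K p q) x y)).trans (mul_add _ _ _)
  map_smul' r x := by
    ext z
    exact (congrArg _ (map_smul (Γ.theta K p q) r x)).trans (mul_smul_comm r _ _)

theorem coe_mulTheta (x : Γ.Lam K p q) (z : Γ.Ae K p) :
    (mulTheta K p q x z : Γ.Alg K) = z * Γ.theta K p q x := rfl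

theorem mulTheta_comp (x : Γ.Lam K p q) (y : Γ.Lam K q r) :
    mulTheta K p r (Lam.comp x y) = mulTheta K q r y ∘ₗ mulTheta K p q x := by
  ext z
  exact (congrArg _ (theta_comp x y)).trans (mul_assoc _ _ _).symm

theorem mulTheta_oneAt : mulTheta K p p ⟨_, oneAt_mem p⟩ = LinearMap.id := by
  ext z
  exact (congrArg _ (theta_oneAt p)).trans (mem_Ae.1 z.2)

theorem mulTheta_eq_zero_iff {x : Γ.Lam K p q} :
    mulTheta K p q x = 0 ↔ ∃ y : Γ.Lam K p q, (X : K⟦X⟧) • y = x := by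
  rw [← theta_eq_zero_iff]
  constructor
  · intro h
    have := congrArg Subtype.val (LinearMap.congr_fun h (gen K p))
    rwa [coe_mulTheta, gen, e_mul_theta] at this
  · intro h
    ext z
    exact (congrArg _ h).trans (mul_zero _)

theorem mulTheta_surjective : Function.Surjective (mulTheta K p q) := by
  intro φ
  obtain ⟨x, hx⟩ := exists_theta_eq p q (φ (gen K p) : Γ.Alg K)
  refine ⟨x, LinearMap.ext fun z => Subtype.ext ?_⟩
  have hgen : Γ.e K p • φ (gen K p) = φ (gen K p) := by
    rw [← map_smul]
    exact congrArg φ (smul_gen (gen K p))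
  have hx : Γ.theta K p q x = φ (gen K p) := by
    rw [hx, mul_assoc, mem_Ae.1 (φ (gen K p)).2]
    exact congrArg Subtype.val hgen
  rw [coe_mulTheta, hx]
  exact congrArg Subtype.val ((map_smul φ (z : Γ.Alg K) _).symm.trans (congrArg φ (smul_gen z)))

theorem Lam.exists_comp_eq_oneAt (hpq : p = q) (x : Γ.Lam K p q) {c : V} (hc : ¬ X ∣ x.1 c) :
    ∃ u : Γ.Lam K q p, Lam.comp u x = ⟨Γ.oneAt K q, oneAt_mem q⟩ := by
  classical
  subst hpq
  have hpc : Γ.Inc p c := by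
    by_contra h
    exact hc (x.2.1 c (fun h' => h h'.1) ▸ dvd_zero _)
  have constantCoeff_eq {c'} (hc' : Γ.Inc p c') :
      constantCoeff (x.1 c') = constantCoeff (x.1 c) := by
    have := X_dvd_iff.1 (x.2.2.2 rfl c' c hc' hpc)
    rwa [map_sub, sub_eq_zero] at this
  refine ⟨⟨fun c' => if Γ.Inc p c' then (x.1 c')⁻¹ else 0, fun c' h => if_neg fun h' => h ⟨h', h'⟩,
    fun c' h => absurd h (lt_irrefl _), fun _ c₁ c₂ h₁ h₂ => ?_⟩, Subtype.ext (funext fun c' => ?_)⟩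
  · dsimp only
    rw [if_pos h₁, if_pos h₂, X_dvd_iff, map_sub, constantCoeff_inv, constantCoeff_inv,
      constantCoeff_eq h₁, constantCoeff_eq h₂, sub_self]
  · by_cases h : Γ.Inc p c'
    · refine (congrArg (· * x.1 c') (if_pos h)).trans ((PowerSeries.inv_mul_cancel _ ?_).trans
        (oneAt_apply h).symm)
      rw [constantCoeff_eq h]
      exact fun hzero => hc (X_dvd_iff.2 hzero)
    · exact (congrArg (· * x.1 c') (if_neg h)).trans
        ((zero_mul _).trans (oneAt_apply_of_not_inc h).symm)

end Projective

section Lin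

variable {ι κ μ : Type*} [Fintype ι] {src : ι → Γ.Edge} {snk : κ → Γ.Edge}
  {tgt : μ → Γ.Edge}

/-- The entry of a matrix over the order as a morphism. -/
def entry (A : matLam K src snk) (p : ι) (q : κ) : Γ.Lam K (src p) (snk q) := ⟨A.1 p q, A.2 p q⟩

/-- The homomorphism `⨁ A e (src p) → ⨁ A e (snk q)` given by a matrix over the order. -/
noncomputable def lin : matLam K src snk →ₗ[K]
    (∀ p, Γ.Ae K (src p)) →ₗ[Γ.Alg K] (∀ q, Γ.Ae K (snk q)) where
  toFun A := LinearMap.pi fun q => ∑ p, mulTheta K _ _ (entry A p q) ∘ₗ LinearMap.proj p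
  map_add' A B := by
    refine LinearMap.ext fun x => funext fun q => ?_
    simp only [LinearMap.pi_apply, LinearMap.add_apply, LinearMap.sum_apply, Pi.add_apply,
      ← Finset.sum_add_distrib]
    exact Finset.sum_congr rfl fun p _ =>
      LinearMap.congr_fun (map_add (mulTheta K _ _) (entry A p q) (entry B p q)) (x p)
  map_smul' r A := by
    refine LinearMap.ext fun x => funext fun q => ?_
    simp only [LinearMap.pi_apply, LinearMap.smul_apply, LinearMap.sum_apply, Pi.smul_apply,
      Finset.smul_sum, RingHom.id_apply]
    exact Finset.sum_congr rfl fun p _ =>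
      LinearMap.congr_fun (map_smul (mulTheta K _ _) r (entry A p q)) (x p)

theorem lin_apply (A : matLam K src snk) (x : ∀ p, Γ.Ae K (src p)) (q : κ) :
    lin A x q = ∑ p, mulTheta K _ _ (entry A p q) (x p) := by
  simp [lin]

theorem proj_comp_lin_comp_single [DecidableEq ι] (A : matLam K src snk) (p : ι) (q : κ) :
    LinearMap.proj q ∘ₗ lin A ∘ₗ LinearMap.single (Γ.Alg K) (fun p => Γ.Ae K (src p)) p =
      mulTheta K _ _ (entry A p q) := by
  refine LinearMap.ext fun x => (lin_apply A _ q).trans ?_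
  rw [Finset.sum_eq_single p (fun p' _ h => ?_) (by simp)]
  · exact congrArg _ (Pi.single_eq_same _ _)
  · exact (congrArg _ (Pi.single_eq_of_ne h _)).trans (map_zero _)

theorem lin_surjective :
    Function.Surjective (lin : matLam K src snk → _) := by
  classical
  intro φ
  choose A hA using fun p q => mulTheta_surjective (LinearMap.proj q ∘ₗ φ ∘ₗ
    LinearMap.single (Γ.Alg K) (fun p => Γ.Ae K (src p)) p)
  refine ⟨⟨Matrix.of fun p q => (A p q).1, fun p q => (A p q).2⟩,
    LinearMap.pi_ext fun p x => funext fun q => ?_⟩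
  refine (LinearMap.congr_fun (proj_comp_lin_comp_single _ p q) x).trans ?_
  exact LinearMap.congr_fun (hA p q) x

theorem lin_eq_zero_iff {A : matLam K src snk} :
    lin A = 0 ↔ ∃ B : matLam K src snk, (X : K⟦X⟧) • B = A := by
  classical
  constructor
  · intro h
    have hA (p q) : mulTheta K _ _ (entry A p q) = 0 := by
      rw [← proj_comp_lin_comp_single, h, LinearMap.zero_comp, LinearMap.comp_zero]
    choose B hB using fun p q => mulTheta_eq_zero_iff.1 (hA p q)
    exact ⟨⟨Matrix.of fun p q => (B p q).1, fun p q => (B p q).2⟩,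
      Subtype.ext (Matrix.ext fun p q => congrArg Subtype.val (hB p q))⟩
  · rintro ⟨B, rfl⟩
    refine LinearMap.ext fun x => funext fun q => (lin_apply _ x q).trans ?_
    refine Finset.sum_eq_zero fun p _ => ?_
    exact LinearMap.congr_fun (mulTheta_eq_zero_iff.2 ⟨entry B p q, rfl⟩) (x p)

theorem lin_mul [Fintype κ] (A : matLam K src snk) (B : matLam K snk tgt) :
    lin ⟨A.1 * B.1, mul_mem_matLam A.2 B.2⟩ = lin B ∘ₗ lin A := by
  refine LinearMap.ext fun x => funext fun r => ?_
  rw [LinearMap.comp_apply, lin_apply, lin_apply]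
  simp only [lin_apply, map_sum]
  rw [Finset.sum_comm]
  refine Finset.sum_congr rfl fun p _ => ?_
  have hentry : entry ⟨A.1 * B.1, mul_mem_matLam A.2 B.2⟩ p r =
      ∑ q, Lam.comp (entry A p q) (entry B q r) :=
    Subtype.ext (Matrix.mul_apply.trans
      (map_sum (Submodule.subtype _) (fun q => Lam.comp (entry A p q) (entry B q r)) _).symm)
  simp only [hentry, map_sum, LinearMap.sum_apply, mulTheta_comp, LinearMap.comp_apply]

theorem X_dvd_of_isSuperfluous {A : matLam K src snk}
    {N : Submodule (Γ.Alg K) (∀ q, Γ.Ae K (snk q))} (hN : IsSuperfluous N)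
    (hA : LinearMap.range (lin A) ≤ N) {p : ι} {q : κ} (hpq : src p = snk q) (c : V) :
    X ∣ A.1 p q c := by
  classical
  by_contra hc
  obtain ⟨u, hu⟩ := Lam.exists_comp_eq_oneAt hpq (entry A p q) hc
  have := hN.subsingleton_of_comp_comp_eq_id hA (ψ := LinearMap.proj q)
    (χ := LinearMap.single (Γ.Alg K) (fun p => Γ.Ae K (src p)) p ∘ₗ mulTheta K _ _ u) <| by
      rw [← mulTheta_oneAt, ← hu, mulTheta_comp, ← proj_comp_lin_comp_single A p q]
      rfl
  exact gen_ne_zero (Subsingleton.elim (gen K (snk q)) 0)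

variable [DecidableEq ι]

variable (K src) in
/-- The action of the endomorphism ring of `⨁ src` in the order on `⨁ A e (src p)`; it reverses
products, since morphisms of the order act by right multiplication. -/
noncomputable def linEnd : Order K src →ₗ[K] Module.End (Γ.Alg K) (∀ p, Γ.Ae K (src p)) where
  toFun A := lin (src := src) (snk := src) ⟨A.1, A.2⟩
  map_add' A B := map_add lin (⟨A.1, A.2⟩ : matLam K src src) ⟨B.1, B.2⟩
  map_smul' r A := map_smul lin r (⟨A.1, A.2⟩ : matLam K src src)

theorem linEnd_one : linEnd K src 1 = 1 := by
  refine LinearMap.ext fun x => funext fun q => (lin_apply _ x q).trans ?_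
  rw [Finset.sum_eq_single q (fun p _ hpq => ?_) (by simp)]
  · refine (LinearMap.congr_fun (congrArg _ (Subtype.ext ?_)) _).trans
      (LinearMap.congr_fun mulTheta_oneAt (x q))
    exact Matrix.diagonal_apply_eq _ q
  · refine (LinearMap.congr_fun (congrArg _ (Subtype.ext ?_)) _).trans
      (LinearMap.congr_fun (map_zero (mulTheta K (src p) (src q))) (x p))
    exact Matrix.diagonal_apply_ne _ hpq

theorem linEnd_mul (A B : Order K src) : linEnd K src (A * B) = linEnd K src B * linEnd K src A :=
  lin_mul (⟨A.1, A.2⟩ : matLam K src src) ⟨B.1, B.2⟩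

theorem linEnd_pow (A : Order K src) (n : ℕ) : linEnd K src (A ^ n) = linEnd K src A ^ n := by
  induction n with
  | zero => rw [pow_zero, pow_zero, linEnd_one]
  | succ n ih => rw [pow_succ, linEnd_mul, ih, pow_succ']

theorem linEnd_sub_algebraMap (A : Order K src) (r : K) :
    linEnd K src (A - algebraMap K _ r) = linEnd K src A - algebraMap K _ r := by
  rw [Algebra.algebraMap_eq_smul_one, map_sub, map_smul, linEnd_one, Algebra.algebraMap_eq_smul_one]

end Lin

end BrauerTree

/-! ### Two-term complexes -/

section TwoTerm

open CochainComplex CochainComplex.HomComplex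

variable {R : Type u} [Ring R]

theorem IsPerfect.isKProjective {T : CochainComplex (ModuleCat.{u} R) ℤ} (hT : IsPerfect T) :
    T.IsKProjective := by
  obtain ⟨⟨m, n, h⟩, hp⟩ := hT
  have : T.IsStrictlyLE n := (isStrictlyLE_iff T n).2 fun i hi => h i (Or.inr hi)
  have : ∀ k, Projective (T.X k) := fun k => (IsProjective.iff_projective _).1 (hp k).2
  exact isKProjective_of_projective T n

theorem IsPartialTilting.mem_coboundaries [HasDerivedCategory.{w} (ModuleCat.{u} R)]
    {W S T : CochainComplex (ModuleCat.{u} R) ℤ} (hW : IsPartialTilting W) (hS : IsPerfect S)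
    (ρ : Retract S W) (σ : Retract T W) {n : ℤ} (hn : n ≠ 0) (x : Cocycle S T n) :
    x ∈ coboundaries S T n := by
  have := hS.isKProjective
  rw [← CohomologyClass.toHom_mk_eq_zero_iff, CohomologyClass.toHom_mk]
  set F := Cocycle.equivHomShift.symm x
  have map_eq_zero : DerivedCategory.Q.map (ρ.r ≫ F ≫ σ.i⟦n⟧') = 0 := by
    rw [← cancel_mono ((DerivedCategory.Q.commShiftIso n).hom.app W), zero_comp]
    exact hW.2 n hn _
  have F_eq : F = ρ.i ≫ (ρ.r ≫ F ≫ σ.i⟦n⟧') ≫ σ.r⟦n⟧' := by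
    rw [Category.assoc, Category.assoc, ← Functor.map_comp, σ.retract,
      CategoryTheory.Functor.map_id, Category.comp_id, ρ.retract_assoc]
  apply (IsKProjective.Qh_map_bijective S _).injective
  rw [Functor.map_zero, ← cancel_mono ((DerivedCategory.quotientCompQhIso _).hom.app _),
    DerivedCategory.quotientCompQhIso_hom_naturality, F_eq, Functor.map_comp, Functor.map_comp,
    map_eq_zero, zero_comp, comp_zero, comp_zero, zero_comp]

variable {W T : CochainComplex (ModuleCat.{u} R) ℤ}

theorem IsPartialTilting.exists_eq_comp_add_comp [HasDerivedCategory.{w} (ModuleCat.{u} R)]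
    (hW : IsPartialTilting W) (hT : IsPerfect T) (hT' : ∀ k : ℤ, k ≠ 0 → k ≠ 1 → IsZero (T.X k))
    (ρ : Retract T W) (h : T.X 0 ⟶ T.X 1) :
    ∃ (α : T.X 0 ⟶ T.X 0) (β : T.X 1 ⟶ T.X 1), h = α ≫ T.d 0 1 + T.d 0 1 ≫ β := by
  let x : Cocycle T T 1 := Cocycle.mk (Cochain.single h 1) 2 rfl (by
    rw [Cochain.δ_single h 1 2 rfl (-1) 2 rfl rfl,
      (hT' 2 (by decide) (by decide)).eq_of_tgt (h ≫ T.d 1 2) 0,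
      (hT' (-1) (by decide) (by decide)).eq_of_src (T.d (-1) 0 ≫ h) 0,
      Cochain.single_zero, Cochain.single_zero, smul_zero, add_zero])
  obtain ⟨β, hβ⟩ :=
    (mem_coboundaries_iff x 0 rfl).1 (hW.mem_coboundaries hT ρ ρ one_ne_zero x)
  refine ⟨β.v 0 0 rfl, -β.v 1 1 rfl, (Cochain.single_v h 1 rfl).symm.trans ?_⟩
  refine (Cochain.congr_v hβ 0 1 rfl).symm.trans ?_
  rw [δ_v 0 1 rfl β 0 1 rfl 0 1 rfl rfl]
  simp

variable {N : ModuleCat.{u} R}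

theorem IsPartialTilting.eq_zero_of_comp_eq_zero [HasDerivedCategory.{w} (ModuleCat.{u} R)]
    (hW : IsPartialTilting W) (hT : IsPerfect T) (hT' : ∀ k : ℤ, k ≠ 0 → k ≠ 1 → IsZero (T.X k))
    (ρ : Retract T W) (σ : Retract ((singleFunctor _ 0).obj N) W) {s : T.X 1 ⟶ N}
    (hs : T.d 0 1 ≫ s = 0) : s = 0 := by
  have hx := hW.mem_coboundaries hT ρ σ (n := -1) (by decide)
    (Cocycle.toSingleMk s (by decide) 0 rfl hs)
  obtain ⟨g, rfl⟩ := (Cocycle.toSingleMk_mem_coboundaries_iff s _ 0 rfl hs 2 rfl).1 hx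
  rw [(hT' 2 (by decide) (by decide)).eq_of_tgt (T.d 1 2) 0, zero_comp]

theorem homotopyHomNonzero_iff {P : CochainComplex (ModuleCat.{u} R) ℤ}
    (hT' : IsZero (T.X (-1))) (e : P ≅ (singleFunctor _ 0).obj N) :
    HomotopyHomNonzero T P ↔ ¬ ∀ g : T.X 0 ⟶ N, ∃ s : T.X 1 ⟶ N, T.d 0 1 ≫ s = g := by
  have hd (g : T.X 0 ⟶ N) : T.d (-1) 0 ≫ g = 0 := hT'.eq_of_src _ _
  let e' : P ≅ ((singleFunctor (ModuleCat.{u} R) 0).obj N)⟦(0 : ℤ)⟧ :=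
    e ≪≫ ((shiftFunctorZero (CochainComplex (ModuleCat.{u} R) ℤ) ℤ).app _).symm
  have e'' := (HomotopyCategory.quotient (ModuleCat.{u} R) (ComplexShape.up ℤ)).mapIso e'
  have toHom_eq_zero_iff (g : T.X 0 ⟶ N) :
      CohomologyClass.toHom (CohomologyClass.mk
        (Cocycle.toSingleMk g (n := 0) rfl (-1) rfl (hd g))) = 0 ↔
      ∃ s : T.X 1 ⟶ N, T.d 0 1 ≫ s = g := by
    rw [CohomologyClass.toHom_mk_eq_zero_iff]
    exact Cocycle.toSingleMk_mem_coboundaries_iff g _ (-1) rfl (hd g) 1 rfl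
  rw [HomotopyHomNonzero, not_forall]
  simp only [← toHom_eq_zero_iff]
  constructor
  · rintro ⟨F, hF⟩
    obtain ⟨y, hy⟩ := (CohomologyClass.toHom_bijective T ((singleFunctor _ 0).obj N) 0).2
      (F ≫ e''.hom)
    obtain ⟨x, rfl⟩ := y.mk_surjective
    obtain ⟨g, hg, rfl⟩ := Cocycle.toSingleMk_surjective x 0 rfl (-1) rfl
    refine ⟨g, fun h => hF ?_⟩
    rw [← cancel_mono e''.hom, ← hy, zero_comp]
    exact h
  · rintro ⟨g, hg⟩
    refine ⟨CohomologyClass.toHom (CohomologyClass.mk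
      (Cocycle.toSingleMk g (n := 0) rfl (-1) rfl (hd g))) ≫ e''.inv, fun h => hg ?_⟩
    rw [← cancel_mono e''.inv, h, zero_comp]

end TwoTerm

section Fitting

variable {K : Type*} [Field K]

theorem eq_bot_or_eq_bot_of_isCompl {R : Type u} [Ring R] {M : ModuleCat.{u} R}
    (hM : Indecomposable M) {N N' : Submodule R M} (h : IsCompl N N') : N = ⊥ ∨ N' = ⊥ := by
  have e : M ≅ ModuleCat.of R N ⊞ ModuleCat.of R N' :=
    (Submodule.prodEquivOfIsCompl N N' h).symm.toModuleIso ≪≫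
      (ModuleCat.biprodIsoProd (ModuleCat.of R N) (ModuleCat.of R N')).symm
  rw [← Submodule.subsingleton_iff_eq_bot, ← Submodule.subsingleton_iff_eq_bot]
  exact (hM.2 _ _ e).imp ModuleCat.subsingleton_of_isZero ModuleCat.subsingleton_of_isZero

theorem exists_isNilpotent_sub_algebraMap [IsAlgClosed K] {R : Type u} [Ring R] [Algebra K R]
    {M : ModuleCat.{u} R} (hM : Indecomposable M) [Module K M] [IsScalarTower K R M]
    [FiniteDimensional K M] (φ : Module.End R M) :
    ∃ r : K, IsNilpotent (φ - algebraMap K (Module.End R M) r) := by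
  have : Nontrivial M := not_subsingleton_iff_nontrivial.1 fun _ =>
    hM.1 (ModuleCat.isZero_of_subsingleton M)
  have : IsArtinian R M := isArtinian_of_tower K inferInstance
  have : IsNoetherian R M := isNoetherian_of_tower K inferInstance
  obtain ⟨r, hr⟩ := Module.End.exists_eigenvalue (φ.restrictScalars K)
  obtain ⟨x, hx, hx0⟩ := hr.exists_hasEigenvector
  have hφx : φ x - r • x = 0 := sub_eq_zero.2 (Module.End.mem_eigenspace_iff.1 hx)
  obtain ⟨n, hn⟩ := Filter.eventually_atTop.1
    (LinearMap.eventually_isCompl_ker_pow_range_pow (φ - algebraMap K (Module.End R M) r))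
  refine ⟨r, n + 1, LinearMap.range_eq_bot.1 ?_⟩
  refine (eq_bot_or_eq_bot_of_isCompl hM (hn (n + 1) n.le_succ)).resolve_left fun h => hx0 ?_
  rw [← Submodule.mem_bot R, ← h, LinearMap.mem_ker, pow_succ, Module.End.mul_apply,
    LinearMap.sub_apply, Module.algebraMap_end_apply, hφx, map_zero]

theorem IsSuperfluous.isNilpotent_of_range_pow_le {R P : Type*} [Ring R] [AddCommGroup P]
    [Module R P] [IsArtinian R P] {N : Submodule R P} (hN : IsSuperfluous N) {φ : Module.End R P}
    {n : ℕ} (hφ : LinearMap.range (φ ^ n) ≤ N) : IsNilpotent φ := by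
  obtain ⟨m, hm⟩ := Filter.eventually_atTop.1 φ.eventually_codisjoint_ker_pow_range_pow
  refine ⟨n + m, LinearMap.ker_eq_top.1 (hN _ (eq_top_mono ?_ (hm (n + m) (by omega)).eq_top))⟩
  rw [sup_comm]
  refine sup_le_sup_right (le_trans ?_ hφ) _
  rw [pow_add, Module.End.mul_eq_comp]
  exact LinearMap.range_comp_le_range _ _

theorem exists_comp_eq_comp_of_surjective {R P M : Type*} [Ring R] [AddCommGroup P]
    [AddCommGroup M] [Module R P] [Module R M] {π : P →ₗ[R] M} (hπ : Function.Surjective π)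
    {β : Module.End R P} (hβ : LinearMap.ker π ≤ (LinearMap.ker π).comap β) :
    ∃ φ : Module.End R M, φ ∘ₗ π = π ∘ₗ β := by
  let e := π.quotKerEquivOfSurjective hπ
  refine ⟨e.toLinearMap ∘ₗ (LinearMap.ker π).mapQ _ β hβ ∘ₗ e.symm.toLinearMap, ?_⟩
  refine LinearMap.ext fun x => ?_
  have he : e.symm (π x) = (LinearMap.ker π).mkQ x := e.symm_apply_eq.2 rfl
  exact congrArg (fun y => e ((LinearMap.ker π).mapQ _ β hβ y)) he

theorem exists_isNilpotent_sub_algebraMap_of_comp_eq_comp [IsAlgClosed K] {R : Type u} [Ring R]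
    [Algebra K R] {M : ModuleCat.{u} R} (hM : Indecomposable M) {P₀ P₁ : Type*} [AddCommGroup P₀]
    [AddCommGroup P₁] [Module R P₀] [Module R P₁] [Module K P₀] [Module K P₁] [IsScalarTower K R P₀]
    [IsScalarTower K R P₁] [FiniteDimensional K P₀] [FiniteDimensional K P₁] {f : P₀ →ₗ[R] P₁}
    {π : P₁ →ₗ[R] M} (hπ : Function.Surjective π) (hfπ : LinearMap.range f = LinearMap.ker π)
    (hπ' : IsSuperfluous (LinearMap.ker π)) (hf : IsSuperfluous (LinearMap.ker f))
    {α : Module.End R P₀} {β : Module.End R P₁} (hαβ : β ∘ₗ f = f ∘ₗ α) :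
    ∃ r : K, IsNilpotent (α - algebraMap K (Module.End R P₀) r) ∧
      IsNilpotent (β - algebraMap K (Module.End R P₁) r) := by
  let _ : Module K M := Module.compHom M (algebraMap K R)
  have : IsScalarTower K R M := IsScalarTower.of_algebraMap_smul fun _ _ => rfl
  have : FiniteDimensional K M :=
    Module.Finite.of_surjective (π.restrictScalars K) hπ
  have : IsArtinian R P₀ := isArtinian_of_tower K inferInstance
  have : IsArtinian R P₁ := isArtinian_of_tower K inferInstance
  have hker : LinearMap.ker π ≤ (LinearMap.ker π).comap β := by
    rw [← hfπ]
    rintro _ ⟨x, rfl⟩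
    exact ⟨α x, (LinearMap.congr_fun hαβ x).symm⟩
  obtain ⟨φ, hφ⟩ := exists_comp_eq_comp_of_surjective hπ hker
  obtain ⟨r, n, hn⟩ := exists_isNilpotent_sub_algebraMap (K := K) hM φ
  have hφr : (φ - algebraMap K _ r) ∘ₗ π = π ∘ₗ (β - algebraMap K _ r) := by
    rw [LinearMap.sub_comp, LinearMap.comp_sub, hφ]
    exact congrArg _ (LinearMap.ext fun x => ((π.restrictScalars K).map_smul r x).symm)
  have hαβr : (β - algebraMap K _ r) ∘ₗ f = f ∘ₗ (α - algebraMap K _ r) := by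
    rw [LinearMap.sub_comp, LinearMap.comp_sub, hαβ]
    exact congrArg _ (LinearMap.ext fun x => ((f.restrictScalars K).map_smul r x).symm)
  have hβ : IsNilpotent (β - algebraMap K (Module.End R P₁) r) := by
    refine hπ'.isNilpotent_of_range_pow_le (n := n) (LinearMap.range_le_ker_iff.2 ?_)
    rw [← Module.End.commute_pow_left_of_commute hφr, hn, LinearMap.zero_comp]
  obtain ⟨m, hm⟩ := hβ
  refine ⟨r, hf.isNilpotent_of_range_pow_le (n := m) (LinearMap.range_le_ker_iff.2 ?_), m, hm⟩
  rw [← Module.End.commute_pow_left_of_commute hαβr, hm, LinearMap.zero_comp]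

end Fitting

namespace BrauerTree

open PowerSeries

variable {V : Type v} [Finite V] {Γ : BrauerTree V} {K : Type u} [Field K]

instance : Module.Finite K (Γ.Alg K) := by
  refine ⟨pathSpan_eq_top (Γ := Γ) (K := K) ▸ Submodule.fg_span ((Set.finite_range _).union ?_)⟩
  refine (Set.finite_iUnion fun d => (Set.finite_Iic (Γ.len d)).image (path K d)).subset ?_
  rintro _ ⟨d, k, -, hk, rfl⟩
  exact Set.mem_iUnion.2 ⟨d, k, hk, rfl⟩

theorem exists_X_smul_eq_pow {ι : Type*} [Fintype ι] [DecidableEq ι] {src : ι → Γ.Edge}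
    {A : Order K src} {r : K} {n m : ℕ} (hA : (linEnd K src A - algebraMap K _ r) ^ n = 0)
    (h : n ≤ m) : ∃ B : Order K src, (X : K⟦X⟧) • B = (A - algebraMap K _ r) ^ m := by
  have hA' : linEnd K src ((A - algebraMap K _ r) ^ m) = 0 := by
    rw [linEnd_pow, linEnd_sub_algebraMap, pow_eq_zero_of_le h hA]
  obtain ⟨B, hB⟩ := (lin_eq_zero_iff (A := _)).1 hA'
  exact ⟨B, hB⟩

variable {ι κ : Type*} [Fintype ι] [Fintype κ] [DecidableEq ι] [DecidableEq κ]
  {src : ι → Γ.Edge} {snk : κ → Γ.Edge} {f : matLam K src snk}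

theorem exists_isEigenvalueFunction [IsAlgClosed K] {M : Γ.Mod K} (hM : Indecomposable M)
    {π : (∀ q, Γ.Ae K (snk q)) →ₗ[Γ.Alg K] M} (hπ : Function.Surjective π)
    (hfπ : LinearMap.range (lin f) = LinearMap.ker π) (hπ' : IsSuperfluous (LinearMap.ker π))
    (hf : IsSuperfluous (LinearMap.ker (lin f))) :
    ∃ lam : chainEnd f → K, IsEigenvalueFunction lam := by
  suffices ∀ z : chainEnd f, ∃ (r : K) (k : ℕ) (x : chainEnd f),
      (z - algebraMap K _ r) ^ k = (X : K⟦X⟧) • x by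
    choose lam hlam using this
    exact ⟨lam, hlam⟩
  intro z
  have comp_eq_comp : linEnd K snk z.1.2 ∘ₗ lin f = lin f ∘ₗ linEnd K src z.1.1 := by
    refine (lin_mul f ⟨z.1.2.1, z.1.2.2⟩).symm.trans (.trans ?_ (lin_mul ⟨z.1.1.1, z.1.1.2⟩ f))
    exact congrArg lin (Subtype.ext (mem_chainEnd.1 z.2).symm)
  obtain ⟨r, ⟨n₀, hn₀⟩, n₁, hn₁⟩ := exists_isNilpotent_sub_algebraMap_of_comp_eq_comp (K := K) hM
    hπ hfπ hπ' hf comp_eq_comp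
  obtain ⟨x₀, hx₀⟩ := exists_X_smul_eq_pow hn₀ (le_max_left n₀ n₁)
  obtain ⟨x₁, hx₁⟩ := exists_X_smul_eq_pow hn₁ (le_max_right n₀ n₁)
  have hx : (X : K⟦X⟧) • (x₀, x₁) = ((z - algebraMap K _ r) ^ max n₀ n₁).1 :=
    Prod.ext hx₀ hx₁
  refine ⟨r, max n₀ n₁, ⟨(x₀, x₁), mem_chainEnd_of_X_smul_mem (hx ▸ Subtype.property _)⟩, ?_⟩
  exact Subtype.ext hx.symm

end BrauerTree

theorem surjective_of_forall_exists_add_smul {R M N : Type*} [CommRing R] [AddCommGroup M]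
    [AddCommGroup N] [Module R M] [Module R N] [Module.Finite R N] {a : R}
    (ha : a ∈ Ideal.jacobson (⊥ : Ideal R)) {F : M →ₗ[R] N} (h : ∀ y, ∃ x z, y = F x + a • z) :
    Function.Surjective F := by
  rw [← LinearMap.range_eq_top, eq_top_iff]
  refine Submodule.le_of_le_smul_of_le_jacobson_bot Module.Finite.fg_top
    ((Ideal.span_singleton_le_iff_mem _).2 ha) fun y _ => ?_
  obtain ⟨x, z, rfl⟩ := h y
  exact Submodule.add_mem_sup ⟨x, rfl⟩
    (Submodule.smul_mem_smul (Ideal.mem_span_singleton_self a) Submodule.mem_top)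

theorem IsSuperfluous.exists_comp_comp_single_ne_zero {R ι κ : Type*} [Ring R] [DecidableEq ι]
    {M : ι → Type*} {N : κ → Type*} [∀ i, AddCommGroup (M i)] [∀ i, Module R (M i)]
    [∀ k, AddCommGroup (N k)] [∀ k, Module R (N k)] {f : (∀ i, M i) →ₗ[R] (∀ k, N k)}
    (hf : IsSuperfluous (LinearMap.ker f)) (i : ι) [Nontrivial (M i)] :
    ∃ k, LinearMap.proj k ∘ₗ f ∘ₗ LinearMap.single R M i ≠ 0 := by
  by_contra! h
  have hi : LinearMap.range (LinearMap.single R M i) ≤ LinearMap.ker f :=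
    LinearMap.range_le_ker_iff.2 <|
      LinearMap.ext fun x => funext fun k => LinearMap.congr_fun (h k) x
  exact not_subsingleton (M i) <| hf.subsingleton_of_comp_comp_eq_id hi (χ := LinearMap.id) <|
    LinearMap.proj_comp_single_same R M i

namespace BrauerTree

open PowerSeries Matrix

variable {V : Type v} [Finite V] {Γ : BrauerTree V} {K : Type u} [Field K]

section Rigidity

variable {ι κ : Type*} {src : ι → Γ.Edge} {snk : κ → Γ.Edge}

instance [Finite ι] [Finite κ] : Module.Finite K⟦X⟧ (matLam K src snk) :=
  have : IsNoetherian K⟦X⟧ (Matrix ι κ (V → K⟦X⟧)) :=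
    inferInstanceAs (IsNoetherian K⟦X⟧ (ι → κ → V → K⟦X⟧))
  inferInstance

variable [Fintype ι] [Fintype κ] {f : matLam K src snk}

theorem chainDiff_surjective
    (hf : ∀ h : (∀ p, Γ.Ae K (src p)) →ₗ[Γ.Alg K] (∀ q, Γ.Ae K (snk q)),
      ∃ α β, h = lin f ∘ₗ α + β ∘ₗ lin f) :
    Function.Surjective (chainDiff f) := by
  have hX : X ∈ Ideal.jacobson (⊥ : Ideal K⟦X⟧) := by
    rw [IsLocalRing.jacobson_eq_maximalIdeal _ bot_ne_top]
    exact X_prime.not_isUnit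
  refine surjective_of_forall_exists_add_smul hX fun h => ?_
  obtain ⟨α, β, hαβ⟩ := hf (lin h)
  obtain ⟨A, rfl⟩ := lin_surjective α
  obtain ⟨B, rfl⟩ := lin_surjective β
  let z : Order K src × Order K snk := (⟨A.1, A.2⟩, -⟨B.1, B.2⟩)
  have chainDiff_eq : chainDiff f z =
      ⟨A.1 * f.1, mul_mem_matLam A.2 f.2⟩ + ⟨f.1 * B.1, mul_mem_matLam f.2 B.2⟩ :=
    Subtype.ext ((congrArg (A.1 * f.1 - ·) (Matrix.mul_neg f.1 B.1)).trans (sub_neg_eq_add _ _))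
  have lin_sub_eq_zero : lin (h - chainDiff f z) = 0 := by
    rw [map_sub, chainDiff_eq, map_add, lin_mul, lin_mul, hαβ, sub_self]
  obtain ⟨C, hC⟩ := lin_eq_zero_iff.1 lin_sub_eq_zero
  exact ⟨z, C, (add_eq_of_eq_sub' hC).symm⟩

theorem src_ne_snk (hf : Function.Surjective (chainDiff f))
    (hrad : ∀ p q, src p = snk q → ∀ c, X ∣ f.1 p q c) (p : ι) (q : κ) : src p ≠ snk q := by
  classical
  intro hpq
  have hone : Γ.oneAt K (src p) ∈ Γ.Lam K (src p) (snk q) := hpq ▸ oneAt_mem _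
  obtain ⟨⟨A, B⟩, hAB⟩ := hf ⟨_, single_mem_matLam (p := p) (q := q) hone⟩
  obtain ⟨d, hd⟩ := exists_dart_edge (src p)
  have hd' : A.1 * f.1 - f.1 * B.1 = Matrix.single p q (Γ.oneAt K (src p)) :=
    congrArg Subtype.val hAB
  have h_one : (A.1 * f.1) p q d.fst - (f.1 * B.1) p q d.fst = 1 := by
    refine (congrFun (congrFun (congrFun hd' p) q) d.fst).trans ?_
    rw [Matrix.single_apply_same, ← hd, oneAt_apply (inc_edge_fst d)]
  refine (X_prime (R := K)).not_dvd_one ?_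
  rw [← h_one, Matrix.mul_apply, Matrix.mul_apply, Finset.sum_apply, Finset.sum_apply]
  refine dvd_sub (Finset.dvd_sum fun r _ => ?_) (Finset.dvd_sum fun r _ => ?_)
  · by_cases hr : src r = snk q
    · exact (hrad r q hr _).mul_left _
    · exact X_dvd_mul_of_ne (fun e => hr (e.symm.trans hpq)) (A.2 p r) (hpq ▸ f.2 r q) _
  · by_cases hr : src p = snk r
    · exact (hrad p r hr _).mul_right _
    · exact X_dvd_mul_of_ne hr (f.2 p r) (hpq ▸ B.2 r q) _

end Rigidity

section Dimension

variable {p q : Γ.Edge} {c : V}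

theorem mulTheta_smul (r : K⟦X⟧) (x : Γ.Lam K p q) :
    mulTheta K p q (r • x) = constantCoeff r • mulTheta K p q x := by
  obtain ⟨s, hs⟩ : X ∣ r - C (constantCoeff r) := by simp [X_dvd_iff]
  rw [← sub_eq_zero, ← map_smul, ← map_sub, mulTheta_eq_zero_iff]
  refine ⟨s • x, Subtype.ext (funext fun c => ?_)⟩
  change X * (s * x.1 c) = r * x.1 c - constantCoeff r • x.1 c
  rw [smul_eq_C_mul]
  linear_combination -x.1 c * hs

section Basis

variable [DecidableEq V]

variable (K) in
/-- The homomorphism `A e p → A e q` given by the path from `p` to `q` around `c`. -/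
noncomputable def arcHom (hp : Γ.Inc p c) (hq : Γ.Inc q c) : Γ.Ae K p →ₗ[Γ.Alg K] Γ.Ae K q :=
  mulTheta K p q ⟨_, arc_mem hp hq⟩

theorem arcHom_ne_zero (hp : Γ.Inc p c) (hq : Γ.Inc q c) (hpq : p ≠ q) :
    arcHom K hp hq ≠ 0 := by
  intro h
  obtain ⟨y, hy⟩ := mulTheta_eq_zero_iff.1 h
  obtain ⟨r, hr⟩ := exists_eq_smul_arc hpq hp hq y.2
  have hX : (X * r - 1) • Γ.arc K c p q = 0 := by
    rw [sub_smul, mul_smul, ← hr, one_smul, sub_eq_zero]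
    exact congrArg Subtype.val hy
  exact X_prime.not_isUnit
    (IsUnit.of_mul_eq_one _ (sub_eq_zero.1 (eq_zero_of_smul_arc_eq_zero hX)))

theorem exists_eq_smul_arcHom (hp : Γ.Inc p c) (hq : Γ.Inc q c) (hpq : p ≠ q)
    (φ : Γ.Ae K p →ₗ[Γ.Alg K] Γ.Ae K q) : ∃ a : K, a • arcHom K hp hq = φ := by
  obtain ⟨x, rfl⟩ := mulTheta_surjective φ
  obtain ⟨r, hr⟩ := exists_eq_smul_arc hpq hp hq x.2
  exact ⟨constantCoeff r, (mulTheta_smul r _).symm.trans (congrArg _ (Subtype.ext hr.symm))⟩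

theorem linearIndependent_id_arcHom (d : Γ.Arrow) :
    LinearIndependent K ![(LinearMap.id : _ →ₗ[Γ.Alg K] Γ.Ae K (Γ.edge d)),
      arcHom K (inc_edge_fst d) (inc_edge_fst d)] := by
  refine LinearIndependent.pair_iff.2 fun a b hab => ?_
  rw [← mulTheta_oneAt, arcHom, ← map_smul, ← map_smul, ← map_add] at hab
  obtain ⟨y, hy⟩ := mulTheta_eq_zero_iff.1 hab
  obtain ⟨r, s, hrs⟩ := exists_eq_smul_oneAt_add_smul_arc d y.2
  have hX : (X * r - C a) • Γ.oneAt K (Γ.edge d) +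
      (X * s - C b) • Γ.arc K d.fst (Γ.edge d) (Γ.edge d) = 0 := by
    rw [sub_smul, sub_smul, sub_add_sub_comm, mul_smul, mul_smul, ← smul_add, ← hrs, sub_eq_zero]
    exact (congrArg Subtype.val hy).trans
      (congrArg₂ (· + ·) (algebraMap_smul K⟦X⟧ a _).symm (algebraMap_smul K⟦X⟧ b _).symm)
  obtain ⟨hr, hs⟩ := eq_zero_of_smul_oneAt_add_smul_arc_eq_zero hX
  exact ⟨by simpa using congrArg constantCoeff hr, by simpa using congrArg constantCoeff hs⟩

theorem span_id_arcHom (d : Γ.Arrow) :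
    Submodule.span K (Set.range ![(LinearMap.id : _ →ₗ[Γ.Alg K] Γ.Ae K (Γ.edge d)),
      arcHom K (inc_edge_fst d) (inc_edge_fst d)]) = ⊤ := by
  rw [Matrix.range_cons, Matrix.range_cons, Matrix.range_empty, Set.union_empty,
    Set.singleton_union]
  refine eq_top_iff.2 fun φ _ => Submodule.mem_span_pair.2 ?_
  obtain ⟨x, rfl⟩ := mulTheta_surjective φ
  obtain ⟨r, s, hrs⟩ := exists_eq_smul_oneAt_add_smul_arc d x.2
  refine ⟨constantCoeff r, constantCoeff s, ?_⟩
  rw [← mulTheta_oneAt, arcHom, ← mulTheta_smul, ← mulTheta_smul, ← map_add]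
  exact congrArg _ (Subtype.ext hrs.symm)

end Basis

theorem finrank_hom_of_ne (hp : Γ.Inc p c) (hq : Γ.Inc q c) (hpq : p ≠ q) :
    Module.finrank K (Γ.Ae K p →ₗ[Γ.Alg K] Γ.Ae K q) = 1 := by
  classical
  exact finrank_eq_one _ (arcHom_ne_zero hp hq hpq) (exists_eq_smul_arcHom hp hq hpq)

theorem finrank_hom_self (d : Γ.Arrow) :
    Module.finrank K (Γ.Ae K (Γ.edge d) →ₗ[Γ.Alg K] Γ.Ae K (Γ.edge d)) = 2 := by
  classical
  exact Module.finrank_eq_card_basis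
    (Module.Basis.mk (linearIndependent_id_arcHom d) (span_id_arcHom d).ge)

theorem hom_eq_zero (h : ∀ c, ¬ (Γ.Inc p c ∧ Γ.Inc q c)) (φ : Γ.Ae K p →ₗ[Γ.Alg K] Γ.Ae K q) :
    φ = 0 := by
  obtain ⟨x, rfl⟩ := mulTheta_surjective φ
  exact (congrArg _ (Subtype.ext (Lam.eq_zero_of_forall_not_inc h x.2))).trans (map_zero _)

open Classical in
theorem finrank_hom (p : Γ.Edge) (d : Γ.Arrow) :
    Module.finrank K (Γ.Ae K p →ₗ[Γ.Alg K] Γ.Ae K (Γ.edge d)) =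
      (if Γ.Inc p d.fst then 1 else 0) + if Γ.Inc p d.snd then 1 else 0 := by
  by_cases hp : p = Γ.edge d
  · rw [hp, if_pos (inc_edge_fst d), if_pos (inc_edge_snd d), finrank_hom_self]
  by_cases h₁ : Γ.Inc p d.fst
  · have h₂ : ¬ Γ.Inc p d.snd := fun h₂ =>
      d.snd_ne_fst (eq_of_inc hp h₁ (inc_edge_fst d) h₂ (inc_edge_snd d))
    rw [if_pos h₁, if_neg h₂, finrank_hom_of_ne h₁ (inc_edge_fst d) hp]
  by_cases h₂ : Γ.Inc p d.snd
  · rw [if_neg h₁, if_pos h₂, finrank_hom_of_ne h₂ (inc_edge_snd d) hp]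
  · have : Subsingleton (Γ.Ae K p →ₗ[Γ.Alg K] Γ.Ae K (Γ.edge d)) :=
      subsingleton_of_forall_eq 0 <| hom_eq_zero fun c hc =>
        (inc_edge_iff.1 hc.2).elim (fun e => h₁ (e ▸ hc.1)) fun e => h₂ (e ▸ hc.1)
    rw [if_neg h₁, if_neg h₂, Module.finrank_zero_of_subsingleton]

variable {ι κ : Type*} {src : ι → Γ.Edge} {snk : κ → Γ.Edge}

instance [Finite ι] : Module.Finite K ((∀ p, Γ.Ae K (src p)) →ₗ[Γ.Alg K] Γ.Ae K q) :=
  Module.Finite.of_injective (LinearMap.restrictScalarsₗ K (Γ.Alg K) _ _ K)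
    (LinearMap.restrictScalars_injective K)

variable [Fintype ι] [Fintype κ]

open Classical in
theorem finrank_pi_hom (src : ι → Γ.Edge) (d : Γ.Arrow) :
    Module.finrank K ((∀ p, Γ.Ae K (src p)) →ₗ[Γ.Alg K] Γ.Ae K (Γ.edge d)) =
      (Finset.univ.filter fun p => Γ.Inc (src p) d.fst).card +
        (Finset.univ.filter fun p => Γ.Inc (src p) d.snd).card := by
  rw [← (LinearMap.lsum (Γ.Alg K) (fun p => Γ.Ae K (src p)) K).finrank_eq,
    Module.finrank_pi_fintype, Finset.card_filter, Finset.card_filter, ← Finset.sum_add_distrib]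
  exact Finset.sum_congr rfl fun p _ => finrank_hom _ d

theorem forall_exists_comp_eq_iff {f : (∀ p, Γ.Ae K (src p)) →ₗ[Γ.Alg K] (∀ q, Γ.Ae K (snk q))}
    {d : Γ.Arrow}
    (hf : ∀ s : (∀ q, Γ.Ae K (snk q)) →ₗ[Γ.Alg K] Γ.Ae K (Γ.edge d), s ∘ₗ f = 0 → s = 0) :
    (∀ g : (∀ p, Γ.Ae K (src p)) →ₗ[Γ.Alg K] Γ.Ae K (Γ.edge d), ∃ s, s ∘ₗ f = g) ↔
      excess src snk d.fst + excess src snk d.snd ≤ 0 := by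
  let F := LinearMap.lcomp K (Γ.Ae K (Γ.edge d)) f
  have hF : Function.Injective F := (injective_iff_map_eq_zero F).2 hf
  have finrank_sub : (Module.finrank K ((∀ p, Γ.Ae K (src p)) →ₗ[Γ.Alg K] Γ.Ae K (Γ.edge d)) : ℤ) -
      Module.finrank K ((∀ q, Γ.Ae K (snk q)) →ₗ[Γ.Alg K] Γ.Ae K (Γ.edge d)) =
        excess src snk d.fst + excess src snk d.snd := by
    rw [finrank_pi_hom, finrank_pi_hom, excess, excess]
    push_cast
    ring
  rw [← finrank_sub]
  have hle := LinearMap.finrank_le_finrank_of_injective hF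
  refine ⟨fun h => ?_, fun h => ?_⟩
  · rw [(LinearEquiv.ofBijective F ⟨hF, h⟩).finrank_eq, sub_self]
  · exact (LinearMap.injective_iff_surjective_of_finrank_eq_finrank (by lia)).1 hF

end Dimension

end BrauerTree

/-! ### Signed counting in the tree -/

namespace BrauerTree

variable {V : Type v} [Finite V] {Γ : BrauerTree V}

section Combinatorics

theorem sgn_eq_one_or (c : V) : Γ.sgn c = 1 ∨ Γ.sgn c = -1 := mul_self_eq_one_iff.1 (sgn_mul_self c)

open Classical in
theorem sum_ite_inc_edge (S : Finset V) (d : Γ.Arrow) :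
    ∑ x ∈ S, (if Γ.Inc (Γ.edge d) x then Γ.sgn x else 0) =
      (if d.fst ∈ S then Γ.sgn d.fst else 0) + if d.snd ∈ S then Γ.sgn d.snd else 0 := by
  have h (x : V) : (if Γ.Inc (Γ.edge d) x then Γ.sgn x else 0) =
      (if x = d.fst then Γ.sgn x else 0) + if x = d.snd then Γ.sgn x else 0 := by
    have := d.fst_ne_snd
    simp only [inc_edge_iff]
    grind
  simp only [h, Finset.sum_add_distrib, Finset.sum_ite_eq']

variable {ι κ : Type*} [Fintype ι] [Fintype κ] {src : ι → Γ.Edge} {snk : κ → Γ.Edge}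

open Classical in
theorem sum_sgn_mul_excess (S : Finset V) :
    ∑ x ∈ S, Γ.sgn x * excess src snk x =
      ∑ p, ∑ x ∈ S, (if Γ.Inc (src p) x then Γ.sgn x else 0) -
        ∑ q, ∑ x ∈ S, if Γ.Inc (snk q) x then Γ.sgn x else 0 := by
  rw [Finset.sum_comm, Finset.sum_comm (s := Finset.univ (α := κ)), ← Finset.sum_sub_distrib]
  refine Finset.sum_congr rfl fun x _ => ?_
  rw [excess, mul_sub, ← Finset.sum_filter, ← Finset.sum_filter, Finset.sum_const,
    Finset.sum_const, nsmul_eq_mul, nsmul_eq_mul, mul_comm, mul_comm (Γ.sgn x)]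

variable [Fintype V]

theorem sum_univ_sgn_mul_excess : ∑ x, Γ.sgn x * excess src snk x = 0 := by
  classical
  have h (p : Γ.Edge) : ∑ x, (if Γ.Inc p x then Γ.sgn x else 0) = 0 := by
    obtain ⟨d, rfl⟩ := exists_dart_edge p
    rw [sum_ite_inc_edge, if_pos (Finset.mem_univ _), if_pos (Finset.mem_univ _), sgn_fst,
      neg_add_cancel]
  simp only [sum_sgn_mul_excess, h, Finset.sum_const_zero, sub_self]

open Classical in
variable (Γ) in
/-- The vertices of the tree that lie on the same side of the edge of `d` as `d.fst`. -/
noncomputable def side (d : Γ.Arrow) : Finset V :=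
  {x | (Γ.graph.deleteEdges {d.edge}).Reachable d.fst x}

theorem mem_side {d : Γ.Arrow} {x : V} :
    x ∈ Γ.side d ↔ (Γ.graph.deleteEdges {d.edge}).Reachable d.fst x := by
  simp [side]

theorem fst_mem_side (d : Γ.Arrow) : d.fst ∈ Γ.side d := mem_side.2 (SimpleGraph.Reachable.refl _)

theorem snd_notMem_side (d : Γ.Arrow) : d.snd ∉ Γ.side d := fun h =>
  SimpleGraph.isAcyclic_iff_forall_isBridge.1 Γ.isTree.isAcyclic d.edge_mem (mem_side.1 h)

theorem snd_mem_side {d d' : Γ.Arrow} (hne : Γ.edge d' ≠ Γ.edge d) (h : d'.fst ∈ Γ.side d) :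
    d'.snd ∈ Γ.side d := by
  refine mem_side.2 ((mem_side.1 h).trans (SimpleGraph.Adj.reachable ?_))
  rw [SimpleGraph.deleteEdges_adj]
  exact ⟨d'.adj, fun h' => hne (Subtype.ext h')⟩

theorem fst_mem_side_iff {d d' : Γ.Arrow} (h : Γ.edge d' ≠ Γ.edge d) :
    d'.fst ∈ Γ.side d ↔ d'.snd ∈ Γ.side d :=
  ⟨snd_mem_side h, snd_mem_side (d' := d'.symm) (by rwa [edge_symm])⟩

open Classical in
theorem sum_side_ite_inc (d : Γ.Arrow) (p : Γ.Edge) :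
    ∑ x ∈ Γ.side d, (if Γ.Inc p x then Γ.sgn x else 0) =
      if p = Γ.edge d then Γ.sgn d.fst else 0 := by
  obtain ⟨d', rfl⟩ := exists_dart_edge p
  by_cases hd : Γ.edge d' = Γ.edge d
  · rw [hd, sum_ite_inc_edge, if_pos (fst_mem_side d), if_neg (snd_notMem_side d), if_pos rfl,
      add_zero]
  · rw [sum_ite_inc_edge, if_neg hd, sgn_fst d']
    simp only [fst_mem_side_iff hd]
    split_ifs <;> ring

open Classical in
theorem sum_side_sgn_mul_excess (d : Γ.Arrow) :
    ∑ x ∈ Γ.side d, Γ.sgn x * excess src snk x =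
      (Finset.card {p | src p = Γ.edge d} - Finset.card {q | snk q = Γ.edge d}) *
        Γ.sgn d.fst := by
  simp only [sum_sgn_mul_excess, sum_side_ite_inc]
  simp only [← Finset.sum_filter, Finset.sum_const, nsmul_eq_mul, sub_mul]

end Combinatorics

/-- The excess is `1` at `c₀` and vanishes away from `c₀` and `c₁`. -/
structure IsDipole {ι κ : Type*} [Fintype ι] [Fintype κ] (src : ι → Γ.Edge) (snk : κ → Γ.Edge)
    (c₀ c₁ : V) : Prop where
  ne : c₀ ≠ c₁
  excess_eq_one : excess src snk c₀ = 1
  excess_eq_zero : ∀ c, c ≠ c₀ → c ≠ c₁ → excess src snk c = 0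

namespace IsDipole

variable {ι κ : Type*} [Fintype ι] [Fintype κ] {src : ι → Γ.Edge} {snk : κ → Γ.Edge} {c₀ c₁ c : V}

theorem exists_of_excess_pos
    (hN : ∀ c₀ c₁, c₀ ≠ c₁ → excess src snk c₀ ≠ 0 → excess src snk c₁ ≠ 0 →
      (excess src snk c₀).natAbs ≤ 1 ∧ ∀ c, c ≠ c₀ → c ≠ c₁ → excess src snk c = 0)
    (hc : 0 < excess src snk c₀) : ∃ c₁, IsDipole src snk c₀ c₁ := by
  cases nonempty_fintype V
  obtain ⟨c₁, hne, hc₁⟩ : ∃ c₁, c₀ ≠ c₁ ∧ excess src snk c₁ ≠ 0 := by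
    by_contra! h
    have hsum := sum_univ_sgn_mul_excess (src := src) (snk := snk)
    rw [Finset.sum_eq_single c₀ (fun c _ hc' => by rw [h c hc'.symm, mul_zero]) (by simp)] at hsum
    rcases sgn_eq_one_or (Γ := Γ) c₀ with h₀ | h₀ <;> rw [h₀] at hsum <;> lia
  obtain ⟨hle, hzero⟩ := hN c₀ c₁ hne hc.ne' hc₁
  exact ⟨c₁, hne, by lia, hzero⟩

variable (h : IsDipole src snk c₀ c₁)
include h

theorem sgn_mul_excess : Γ.sgn c₁ * excess src snk c₁ = -Γ.sgn c₀ := by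
  classical
  cases nonempty_fintype V
  have hsum := sum_univ_sgn_mul_excess (src := src) (snk := snk)
  rw [← Finset.sum_subset (Finset.subset_univ {c₀, c₁}), Finset.sum_pair h.ne, h.excess_eq_one,
    mul_one] at hsum
  · exact (neg_eq_of_add_eq_zero_right hsum).symm
  · intro c _ hc
    rw [Finset.mem_insert, Finset.mem_singleton, not_or] at hc
    rw [h.excess_eq_zero c hc.1 hc.2, mul_zero]

theorem excess_nonneg {p : Γ.Edge} (hp₀ : Γ.Inc p c₀) (hp : Γ.Inc p c) :
    0 ≤ excess src snk c := by
  by_cases hc₀ : c = c₀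
  · rw [hc₀, h.excess_eq_one]
    exact zero_le_one
  by_cases hc₁ : c = c₁
  · subst hc₁
    have hsum := h.sgn_mul_excess
    rw [sgn_eq_neg hc₀ hp hp₀] at hsum
    rcases sgn_eq_one_or (Γ := Γ) c₀ with h₀ | h₀ <;> rw [h₀] at hsum <;> lia
  · exact (h.excess_eq_zero c hc₀ hc₁).ge

section Side

variable [Fintype V] {d : Γ.Arrow}

open Classical in
theorem exists_card_sub_card_mul_sgn (hd : c₀ ∈ Γ.side d) :
    ∃ n : ℤ, 0 ≤ n ∧
      (Finset.card {p | src p = Γ.edge d} - Finset.card {q | snk q = Γ.edge d}) * Γ.sgn d.fst =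
        n * Γ.sgn c₀ := by
  rw [← sum_side_sgn_mul_excess]
  by_cases hc₁ : c₁ ∈ Γ.side d
  · refine ⟨0, le_rfl, ?_⟩
    rw [← Finset.sum_subset (s₁ := {c₀, c₁}) (by grind), Finset.sum_pair h.ne, h.excess_eq_one,
      h.sgn_mul_excess]
    · ring
    · intro c _ hc
      rw [Finset.mem_insert, Finset.mem_singleton, not_or] at hc
      rw [h.excess_eq_zero c hc.1 hc.2, mul_zero]
  · refine ⟨1, zero_le_one, ?_⟩
    rw [Finset.sum_eq_single_of_mem c₀ hd, h.excess_eq_one, mul_comm]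
    intro c hc hc'
    rw [h.excess_eq_zero c hc' (ne_of_mem_of_not_mem hc hc₁), mul_zero]

variable (hne : ∀ p q, src p ≠ snk q)
include hne

theorem sgn_fst_eq_of_src {p : ι} (hd : c₀ ∈ Γ.side d) (hp : src p = Γ.edge d) :
    Γ.sgn d.fst = Γ.sgn c₀ := by
  classical
  obtain ⟨n, hn₀, hn⟩ := h.exists_card_sub_card_mul_sgn hd
  have hsnk : Finset.card {q | snk q = Γ.edge d} = 0 := by simp [← hp, (hne p _).symm]
  have hsrc : 0 < Finset.card {p | src p = Γ.edge d} := Finset.card_pos.2 ⟨p, by simp [hp]⟩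
  rcases sgn_eq_one_or (Γ := Γ) d.fst with h₁ | h₁ <;>
    rcases sgn_eq_one_or (Γ := Γ) c₀ with h₀ | h₀ <;> rw [h₁, h₀] at hn <;> lia

theorem sgn_fst_eq_neg_of_snk {q : κ} (hd : c₀ ∈ Γ.side d) (hq : snk q = Γ.edge d) :
    Γ.sgn d.fst = -Γ.sgn c₀ := by
  classical
  obtain ⟨n, hn₀, hn⟩ := h.exists_card_sub_card_mul_sgn hd
  have hsrc : Finset.card {p | src p = Γ.edge d} = 0 := by simp [← hq, hne _ q]
  have hsnk : 0 < Finset.card {q | snk q = Γ.edge d} := Finset.card_pos.2 ⟨q, by simp [hq]⟩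
  rcases sgn_eq_one_or (Γ := Γ) d.fst with h₁ | h₁ <;>
    rcases sgn_eq_one_or (Γ := Γ) c₀ with h₀ | h₀ <;> rw [h₁, h₀] at hn <;> lia

end Side

variable (hne : ∀ p q, src p ≠ snk q)
include hne

theorem not_inc_snk (q : κ) : ¬ Γ.Inc (snk q) c₀ := by
  intro hq
  cases nonempty_fintype V
  obtain ⟨d, rfl, hd⟩ := hq.exists_dart
  have := h.sgn_fst_eq_neg_of_snk hne (fst_mem_side d) hd.symm
  rcases sgn_eq_one_or (Γ := Γ) d.fst with h₀ | h₀ <;> lia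

theorem existsUnique_src : ∃! p, Γ.Inc (src p) c₀ := by
  classical
  have hsnk : Finset.card {q | Γ.Inc (snk q) c₀} = 0 := by simp [h.not_inc_snk hne]
  have hsrc : Finset.card {p | Γ.Inc (src p) c₀} = 1 := by
    have := h.excess_eq_one
    unfold excess at this
    lia
  obtain ⟨p, hp⟩ := Finset.card_eq_one.1 hsrc
  simp only [Finset.ext_iff, Finset.mem_filter_univ, Finset.mem_singleton] at hp
  exact ⟨p, (hp p).2 rfl, fun p' => (hp p').1⟩

theorem src_eq {p : Γ.Edge} (hc : c ≠ c₀) (hp₀ : Γ.Inc p c₀) (hp : Γ.Inc p c) {i : ι}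
    (hi : Γ.Inc (src i) c) : src i = p := by
  by_contra hip
  cases nonempty_fintype V
  obtain ⟨d, rfl, hd⟩ := hi.exists_dart
  obtain ⟨d', hd', rfl⟩ := hp.exists_dart
  have hsnd : d'.snd = c₀ :=
    ((inc_edge_iff.1 hp₀).resolve_left fun e => hc (hd'.symm.trans e.symm)).symm
  have hside : c₀ ∈ Γ.side d :=
    hsnd ▸ snd_mem_side (fun e => hip (hd.symm.trans e.symm)) (hd' ▸ fst_mem_side d)
  have := h.sgn_fst_eq_of_src hne hside hd.symm
  have := sgn_eq_neg hc hp hp₀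
  rcases sgn_eq_one_or (Γ := Γ) c₀ with h₀ | h₀ <;> lia

theorem snk_unique {i : ι} (hc : c ≠ c₀) (hi₀ : Γ.Inc (src i) c₀) (hi : Γ.Inc (src i) c)
    {q q' : κ} (hq : Γ.Inc (snk q) c) (hq' : Γ.Inc (snk q') c) : q = q' := by
  classical
  have card_src_le : Finset.card {p | Γ.Inc (src p) c} ≤ 1 := by
    refine Finset.card_le_one.2 fun a ha b hb => (h.existsUnique_src hne).unique ?_ ?_
    · rwa [h.src_eq hne hc hi₀ hi ((Finset.mem_filter_univ a).1 ha)]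
    · rwa [h.src_eq hne hc hi₀ hi ((Finset.mem_filter_univ b).1 hb)]
  have card_snk_le : Finset.card {q | Γ.Inc (snk q) c} ≤ 1 := by
    have := h.excess_nonneg hi₀ hi
    unfold excess at this
    lia
  exact Finset.card_le_one.1 card_snk_le q (by simpa using hq) q' (by simpa using hq')

end IsDipole

end BrauerTree

/-! ### The diagram of a two-term complex -/

theorem IsSuperfluous.map_equiv {R M N : Type*} [Ring R] [AddCommGroup M] [AddCommGroup N]
    [Module R M] [Module R N] {S : Submodule R M} (hS : IsSuperfluous S) (e : M ≃ₗ[R] N) :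
    IsSuperfluous (S.map e.toLinearMap) := by
  intro L hL
  have h : S ⊔ L.comap e.toLinearMap = ⊤ := by
    apply Submodule.map_injective_of_injective e.injective
    rw [Submodule.map_sup, Submodule.map_comap_eq_of_surjective e.surjective, hL, Submodule.map_top,
      LinearEquiv.range]
  rw [← Submodule.map_comap_eq_of_surjective e.surjective L, hS _ h, Submodule.map_top,
    LinearEquiv.range]

namespace BrauerTree

variable {V : Type v} [Finite V] {Γ : BrauerTree V} {K : Type u} [Field K]

theorem OnPath.exists_inc {i j x : Γ.Edge} (h : Γ.OnPath i j x) :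
    ∃ c, Γ.Inc i c ∧ Γ.Inc j c ∧ Γ.Inc x c := by
  obtain ⟨d, k, rfl, rfl, -, l, -, rfl⟩ := h
  refine ⟨d.fst, inc_edge_fst d, ?_, ?_⟩
  · exact iterate_fst d k ▸ inc_edge_fst _
  · exact iterate_fst d l ▸ inc_edge_fst _

namespace Decomposition

variable {T : CochainComplex (Γ.Mod K) ℤ} (D : Γ.Decomposition K T)

section Differential

/-- The differential `T⁰ → T¹`, as a homomorphism between the direct sums of the decomposition. -/
noncomputable def diff : (∀ p, Γ.Ae K (D.src p)) →ₗ[Γ.Alg K] (∀ q, Γ.Ae K (D.snk q)) :=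
  D.iso₁.toLinearMap ∘ₗ (T.d 0 1).hom ∘ₗ D.iso₀.symm.toLinearMap

theorem diff_iso₀ (x : T.X 0) : D.diff (D.iso₀ x) = D.iso₁ (T.d 0 1 x) :=
  congrArg (D.iso₁ <| T.d 0 1 ·) (D.iso₀.symm_apply_apply x)

theorem ker_diff :
    LinearMap.ker D.diff = (LinearMap.ker (T.d 0 1).hom).map D.iso₀.toLinearMap := by
  rw [diff, LinearEquiv.ker_comp, LinearMap.ker_comp, Submodule.comap_equiv_eq_map_symm,
    LinearEquiv.symm_symm]

theorem range_diff :
    LinearMap.range D.diff = (LinearMap.range (T.d 0 1).hom).map D.iso₁.toLinearMap := by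
  rw [diff, LinearMap.range_comp, LinearMap.range_comp_of_range_eq_top _ (LinearEquiv.range _)]

theorem exists_presentation {M : Γ.Mod K} (hT : IsMinimalPresentation T M) :
    ∃ π : (∀ q, Γ.Ae K (D.snk q)) →ₗ[Γ.Alg K] M, Function.Surjective π ∧
      LinearMap.range D.diff = LinearMap.ker π ∧ IsSuperfluous (LinearMap.ker π) ∧
      IsSuperfluous (LinearMap.ker D.diff) := by
  obtain ⟨-, -, π, hπ, hrange, hker₁, hker₀⟩ := hT
  have ker_comp : LinearMap.ker (π.hom ∘ₗ D.iso₁.symm.toLinearMap) =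
      (LinearMap.ker π.hom).map D.iso₁.toLinearMap := by
    rw [LinearMap.ker_comp, Submodule.comap_equiv_eq_map_symm, LinearEquiv.symm_symm]
  refine ⟨π.hom ∘ₗ D.iso₁.symm.toLinearMap, hπ.comp D.iso₁.symm.surjective, ?_, ?_, ?_⟩
  · rw [range_diff, hrange, ker_comp]
  · exact ker_comp ▸ hker₁.map_equiv D.iso₁
  · exact D.ker_diff ▸ hker₀.map_equiv D.iso₀

variable (hT : ∀ k : ℤ, k ≠ 0 → k ≠ 1 → IsZero (T.X k))
include hT

theorem homotopyHomNonzero_iff {P : CochainComplex (Γ.Mod K) ℤ} {N : Γ.Mod K}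
    (e : P ≅ (CochainComplex.singleFunctor _ 0).obj N) :
    HomotopyHomNonzero T P ↔
      ¬ ∀ g : (∀ p, Γ.Ae K (D.src p)) →ₗ[Γ.Alg K] N, ∃ s, s ∘ₗ D.diff = g := by
  rw [_root_.homotopyHomNonzero_iff (hT (-1) (by decide) (by decide)) e]
  refine not_congr ⟨fun h g => ?_, fun h g => ?_⟩
  · obtain ⟨s, hs⟩ := h (ModuleCat.ofHom (g ∘ₗ D.iso₀.toLinearMap))
    refine ⟨s.hom ∘ₗ D.iso₁.symm.toLinearMap, LinearMap.ext fun x => ?_⟩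
    obtain ⟨x, rfl⟩ := D.iso₀.surjective x
    simpa [diff_iso₀] using ConcreteCategory.congr_hom hs x
  · obtain ⟨s, hs⟩ := h (g.hom ∘ₗ D.iso₀.symm.toLinearMap)
    refine ⟨ModuleCat.ofHom (s ∘ₗ D.iso₁.toLinearMap),
      ModuleCat.hom_ext (LinearMap.ext fun x => ?_)⟩
    simpa [diff_iso₀] using LinearMap.congr_fun hs (D.iso₀ x)

variable [HasDerivedCategory.{w} (Γ.Mod K)] {W : CochainComplex (Γ.Mod K) ℤ}
  (hW : IsPartialTilting W) (hT' : IsPerfect T) (ρ : Retract T W)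
include hW hT' ρ

theorem exists_eq_comp_add_comp
    (h : (∀ p, Γ.Ae K (D.src p)) →ₗ[Γ.Alg K] (∀ q, Γ.Ae K (D.snk q))) :
    ∃ α β, h = D.diff ∘ₗ α + β ∘ₗ D.diff := by
  obtain ⟨α, β, hαβ⟩ := hW.exists_eq_comp_add_comp hT' hT ρ
    (ModuleCat.ofHom (D.iso₁.symm.toLinearMap ∘ₗ h ∘ₗ D.iso₀.toLinearMap))
  refine ⟨D.iso₀.toLinearMap ∘ₗ α.hom ∘ₗ D.iso₀.symm.toLinearMap,
    D.iso₁.toLinearMap ∘ₗ β.hom ∘ₗ D.iso₁.symm.toLinearMap, LinearMap.ext fun x => ?_⟩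
  obtain ⟨x, rfl⟩ := D.iso₀.surjective x
  simpa [diff_iso₀] using congrArg D.iso₁ (ConcreteCategory.congr_hom hαβ x)

theorem eq_zero_of_comp_diff_eq_zero {N : Γ.Mod K}
    (σ : Retract ((CochainComplex.singleFunctor _ 0).obj N) W)
    (s : (∀ q, Γ.Ae K (D.snk q)) →ₗ[Γ.Alg K] N) (hs : s ∘ₗ D.diff = 0) : s = 0 := by
  have h := hW.eq_zero_of_comp_eq_zero hT' hT ρ σ (s := ModuleCat.ofHom (s ∘ₗ D.iso₁.toLinearMap))
    (ModuleCat.hom_ext (LinearMap.ext fun x => by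
      simpa [diff_iso₀] using LinearMap.congr_fun hs (D.iso₀ x)))
  refine LinearMap.ext fun x => ?_
  obtain ⟨x, rfl⟩ := D.iso₁.surjective x
  exact ConcreteCategory.congr_hom h x

end Differential

section Diagram

variable {D}

theorem exists_inc_of_component_ne_zero {p : Fin D.m₀} {q : Fin D.m₁} (h : D.component p q ≠ 0) :
    ∃ c, Γ.Inc (D.src p) c ∧ Γ.Inc (D.snk q) c := by
  contrapose! h
  exact hom_eq_zero (fun c hc => h c hc.1 hc.2) _

variable {c₀ c₁ : V} (h : IsDipole D.src D.snk c₀ c₁) (hne : ∀ p q, D.src p ≠ D.snk q)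
include h hne

theorem isDegreeOneSource_of_isDipole {p : Fin D.m₀} (hp : Γ.Inc (D.src p) c₀)
    (hq : ∃ q, D.component p q ≠ 0) : D.IsDegreeOneSource (D.src p) := by
  obtain ⟨d, hd, hpd⟩ := hp.exists_dart
  have inc_snd {q} (hq : D.component p q ≠ 0) : Γ.Inc (D.snk q) d.snd := by
    obtain ⟨c, hpc, hqc⟩ := exists_inc_of_component_ne_zero hq
    obtain rfl | rfl := inc_edge_iff.1 (hpd ▸ hpc)
    · exact absurd (hd ▸ hqc) (h.not_inc_snk hne q)
    · exact hqc
  obtain ⟨q, hq⟩ := hq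
  exact ⟨p, rfl, q, hq, fun q' hq' => h.snk_unique hne (hd ▸ d.fst_ne_snd.symm) hp
    (hpd ▸ inc_edge_snd d) (inc_snd hq') (inc_snd hq)⟩

theorem eq_src_of_onDiagram {p : Fin D.m₀} {x : Γ.Edge} (hp : Γ.Inc (D.src p) c₀)
    (hx : D.OnDiagram x) (hxc : Γ.Inc x c₀) : x = D.src p := by
  have src_eq {p'} (hp' : Γ.Inc (D.src p') c₀) : D.src p' = D.src p :=
    congrArg D.src ((h.existsUnique_src hne).unique hp' hp)
  obtain ⟨p', rfl⟩ | ⟨q, rfl⟩ | ⟨p', q, -, hpath⟩ := hx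
  · exact src_eq hxc
  · exact absurd hxc (h.not_inc_snk hne q)
  · obtain ⟨c, hp'c, hqc, hxc'⟩ := hpath.exists_inc
    have hc : c ≠ c₀ := fun e => h.not_inc_snk hne q (e ▸ hqc)
    obtain rfl := h.src_eq hne hc hxc hxc' hp'c
    exact src_eq hxc

end Diagram

theorem excess_pos_of_forall_onDiagram (hne : ∀ p q, D.src p ≠ D.snk q) {p : Fin D.m₀} {c : V}
    (hp : Γ.Inc (D.src p) c) (h : ∀ x, D.OnDiagram x → Γ.Inc x c → x = D.src p) :
    0 < excess D.src D.snk c := by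
  classical
  have hsnk : Finset.card {q | Γ.Inc (D.snk q) c} = 0 := by
    rw [Finset.card_eq_zero, Finset.filter_eq_empty_iff]
    exact fun q _ hq => hne p q (h _ (Or.inr (Or.inl ⟨q, rfl⟩)) hq).symm
  have hsrc : 0 < Finset.card {p | Γ.Inc (D.src p) c} := Finset.card_pos.2 ⟨p, by simpa using hp⟩
  rw [excess]
  lia

theorem excess_add_excess_pos_iff (hne : ∀ p q, D.src p ≠ D.snk q)
    (hrow : ∀ p, ∃ q, D.component p q ≠ 0)
    (hN : ∀ c₀ c₁, c₀ ≠ c₁ → excess D.src D.snk c₀ ≠ 0 → excess D.src D.snk c₁ ≠ 0 →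
      (excess D.src D.snk c₀).natAbs ≤ 1 ∧ ∀ c, c ≠ c₀ → c ≠ c₁ → excess D.src D.snk c = 0)
    (d : Γ.Arrow) :
    0 < excess D.src D.snk d.fst + excess D.src D.snk d.snd ↔
      ∃ (C : List Γ.Arrow) (i : Γ.Edge), Γ.IsACycle K C ∧ D.IsDegreeOneSource i ∧
        MemCycle i C ∧ MemCycle (Γ.edge d) C ∧ ∀ x, D.OnDiagram x → MemCycle x C → x = i := by
  constructor
  · intro hpos
    obtain ⟨d₀, hd₀, hpos₀⟩ : ∃ d₀, Γ.edge d₀ = Γ.edge d ∧ 0 < excess D.src D.snk d₀.fst := by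
      rcases lt_or_ge 0 (excess D.src D.snk d.fst) with h | h
      · exact ⟨d, rfl, h⟩
      · exact ⟨d.symm, edge_symm d, by change 0 < excess D.src D.snk d.snd; lia⟩
    obtain ⟨c₁, h⟩ := IsDipole.exists_of_excess_pos hN hpos₀
    obtain ⟨p, hp, -⟩ := h.existsUnique_src hne
    exact ⟨Γ.cycleList d₀, D.src p, isACycle_cycleList d₀,
      isDegreeOneSource_of_isDipole h hne hp (hrow p), memCycle_cycleList.2 hp,
      memCycle_cycleList.2 (hd₀ ▸ inc_edge_fst d₀),
      fun x hx hxC => eq_src_of_onDiagram h hne hp hx (memCycle_cycleList.1 hxC)⟩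
  · rintro ⟨C, _, hC, ⟨p, rfl, -⟩, hp, hd, huniq⟩
    obtain ⟨d₀, rfl⟩ := hC.exists_eq
    simp only [memCycle_cycleList] at hp hd huniq
    have hpos := D.excess_pos_of_forall_onDiagram hne hp huniq
    obtain ⟨c₁, h⟩ := IsDipole.exists_of_excess_pos hN hpos
    obtain hfst | hsnd := inc_edge_iff.1 hd
    · exact add_pos_of_pos_of_nonneg (hfst ▸ hpos) (h.excess_nonneg hd (inc_edge_snd d))
    · exact add_pos_of_nonneg_of_pos (h.excess_nonneg hd (inc_edge_fst d)) (hsnd ▸ hpos)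

end Decomposition

end BrauerTree

open BrauerTree in
theorem hom_to_stalk0_nonzero_iff {K : Type u} [Field K] [IsAlgClosed K] {V : Type v} [Finite V]
    (Γ : BrauerTree V) [HasDerivedCategory.{w} (Γ.Mod K)]
    (M : Γ.Mod K) (hM : Indecomposable M) (hMproj : ¬ Module.Projective (Γ.Alg K) M)
    (T : CochainComplex (Γ.Mod K) ℤ) (hT : IsMinimalPresentation T M)
    (D : Γ.Decomposition K T)
    (P : CochainComplex (Γ.Mod K) ℤ) (j : Γ.Edge) (hP : Γ.IsStalkZero K P j)
    (hTP : IsPartialTilting (T ⊞ P)) :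
    HomotopyHomNonzero T P ↔
      ∃ (C : List Γ.Arrow) (i : Γ.Edge), Γ.IsACycle K C ∧ D.IsDegreeOneSource i ∧
        BrauerTree.MemCycle i C ∧ BrauerTree.MemCycle j C ∧
        ∀ x, D.OnDiagram x → BrauerTree.MemCycle x C → x = i := by
  obtain ⟨e⟩ := hP
  obtain ⟨d, rfl⟩ := exists_dart_edge j
  let ρ : Retract T (T ⊞ P) := ⟨biprod.inl, biprod.fst, biprod.inl_fst⟩
  let σ : Retract P (T ⊞ P) := ⟨biprod.inr, biprod.snd, biprod.inr_snd⟩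
  obtain ⟨f, hf⟩ := lin_surjective D.diff
  obtain ⟨π, hπ, hrange, hπ', hker⟩ := D.exists_presentation hT
  have chainDiff_surj : Function.Surjective (chainDiff f) :=
    chainDiff_surjective (hf ▸ D.exists_eq_comp_add_comp hT.2.1 hTP hT.1 ρ)
  have src_ne_snk : ∀ p q, D.src p ≠ D.snk q :=
    src_ne_snk chainDiff_surj fun _ _ => X_dvd_of_isSuperfluous hπ' (hf ▸ hrange.le)
  obtain ⟨lam, hlam⟩ := exists_isEigenvalueFunction hM hπ (hf ▸ hrange) hπ' (hf ▸ hker)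
  have (i : Γ.Edge) : Nontrivial (Γ.Ae K i) := nontrivial_of_ne _ _ gen_ne_zero
  rw [D.homotopyHomNonzero_iff hT.2.1 e, forall_exists_comp_eq_iff
    (D.eq_zero_of_comp_diff_eq_zero hT.2.1 hTP hT.1 ρ ((Retract.ofIso e.symm).trans σ)), not_le]
  exact D.excess_add_excess_pos_iff src_ne_snk (fun _ => hker.exists_comp_comp_single_ne_zero _)
    (fun _ _ => natAbs_excess_le_one_and_excess_eq_zero src_ne_snk chainDiff_surj hlam) d
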